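/- arXiv:2302.03252 — 4 statements merged into one kernel-verified Lean document; each statement's English description precedes it below -/
import Mathlib

section
/- Let θ be a nonzero real algebraic number. Then cos θ is transcendental (not an algebraic number). -/
/-!
If `cos z` is algebraic, then so is `exp (z * I)`; the powers of the latter are exponentials of
distinct algebraic numbers, so everything rests on such exponentials being linearly independent
over `ℤ`. A relation between them is an element of a group algebra `ℤ[K]`, with `K / ℚ` finite
Galois, killed by the evaluation `γ ↦ exp γ`. A suitable multiple of it is Galois invariant with
nonzero constant coefficient, that is, a relation `k + ∑ h γ * exp γ = 0` with `k ≠ 0` and `h`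
invariant. Hermite's approximations `n * exp γ ≈ p * g γ`, for a large prime `p ∤ n`, turn it into
`L ^ N * n * k + p * ∑ h γ * L ^ N * g γ ≈ 0`, where `L` clears denominators. By invariance the
left-hand side is a rational integer; it is not divisible by `p`, yet smaller than `1`.
-/

open Polynomial Filter Complex
open scoped AddMonoidAlgebra

section Algebra

theorem isIntegral_pow_smul_aeval {R A : Type*} [CommRing R] [CommRing A] [Algebra R A] {r : R}
    {x : A} (hx : IsIntegral R (r • x)) {g : R[X]} {N : ℕ} (hN : g.natDegree ≤ N) :
    IsIntegral R (r ^ N • aeval x g) := by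
  rw [aeval_eq_sum_range' (Nat.lt_succ_of_le hN), Finset.smul_sum]
  refine IsIntegral.sum _ fun i hi ↦ ?_
  obtain ⟨k, rfl⟩ := Nat.exists_eq_add_of_le (Finset.mem_range_succ_iff.mp hi)
  have : r ^ (i + k) • g.coeff i • x ^ i = (r ^ k * g.coeff i) • (r • x) ^ i := by
    rw [_root_.smul_pow, smul_smul, smul_smul]
    ring_nf
  exact this ▸ (hx.pow i).smul _

theorem exists_coeff_zero_ne_zero_forall_aeval_eq_zero (R : Type*) {A : Type*} [CommRing R]
    [IsDomain R] [CommRing A] [IsDomain A] [Algebra R A] [Algebra.IsAlgebraic R A]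
    {s : Finset A} (hs : 0 ∉ s) : ∃ f : R[X], f.coeff 0 ≠ 0 ∧ ∀ a ∈ s, aeval a f = 0 := by
  classical
  induction s using Finset.induction with
  | empty => exact ⟨1, by simp⟩
  | insert b s _ ih =>
    rw [Finset.mem_insert, not_or] at hs
    obtain ⟨f, hf0, hf⟩ := ih hs.2
    obtain ⟨q, hq0, hq⟩ := (Algebra.IsAlgebraic.isAlgebraic (R := R) b)
      |>.exists_nonzero_coeff_and_aeval_eq_zero (mem_nonZeroDivisors_of_ne_zero (Ne.symm hs.1))
    refine ⟨q * f, by simpa [mul_coeff_zero] using ⟨hq0, hf0⟩, fun a ha ↦ ?_⟩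
    rcases Finset.mem_insert.mp ha with rfl | ha
    · rw [map_mul, hq, zero_mul]
    · rw [map_mul, hf a ha, mul_zero]

variable {R F K : Type*} [CommRing R] [IsIntegrallyClosed R] [Field F] [Algebra R F]
  [IsFractionRing R F] [Field K] [Algebra F K] [IsGalois F K] [Algebra R K]
  [IsScalarTower R F K]

theorem exists_algebraMap_eq_of_isIntegral_of_fixed {x : K} (hint : IsIntegral R x)
    (hfix : ∀ σ : Gal(K/F), σ x = x) : ∃ m : R, algebraMap R K m = x := by
  obtain ⟨q, rfl⟩ := (InfiniteGalois.mem_range_algebraMap_iff_fixed x).mpr hfix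
  obtain ⟨m, rfl⟩ := IsIntegrallyClosed.isIntegral_iff.mp
    ((isIntegral_algebraMap_iff (algebraMap F K).injective).mp hint)
  exact ⟨m, IsScalarTower.algebraMap_apply R F K m⟩

theorem exists_algebraMap_eq_sum_smul_pow_smul_aeval {h : K →₀ R}
    (hinv : ∀ (σ : Gal(K/F)) γ, h (σ γ) = h γ) {r : R}
    (hr : ∀ γ ∈ h.support, IsIntegral R (r • γ)) {g : R[X]} {N : ℕ} (hN : g.natDegree ≤ N) :
    ∃ m : R, algebraMap R K m = h.sum fun γ c ↦ c • r ^ N • aeval γ g := by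
  refine exists_algebraMap_eq_of_isIntegral_of_fixed (F := F)
    (IsIntegral.sum _ fun γ hγ ↦ (isIntegral_pow_smul_aeval (hr γ hγ) hN).smul _) fun σ ↦ ?_
  have hσ : Finsupp.equivMapDomain σ.toEquiv h = h := by
    ext γ
    rw [Finsupp.equivMapDomain_apply, ← hinv σ]
    exact congrArg h (σ.apply_symm_apply γ)
  let σR : K →ₐ[R] K := (σ : K →ₐ[F] K).restrictScalars R
  calc σ (h.sum fun γ c ↦ c • r ^ N • aeval γ g)
      = h.sum fun γ c ↦ c • r ^ N • aeval (σR γ) g := by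
        simp only [aeval_algHom_apply]
        simp only [← map_smul, ← map_finsuppSum]
        rfl
    _ = (Finsupp.equivMapDomain σ.toEquiv h).sum fun γ c ↦ c • r ^ N • aeval γ g :=
        (Finsupp.sum_equivMapDomain σ.toEquiv h fun γ c ↦ c • r ^ N • aeval γ g).symm
    _ = h.sum fun γ c ↦ c • r ^ N • aeval γ g := by rw [hσ]

end Algebra

section Approximation

theorem eventually_not_natCast_dvd {a : ℤ} (ha : a ≠ 0) : ∀ᶠ p : ℕ in atTop, ¬ (p : ℤ) ∣ a := by
  filter_upwards [eventually_gt_atTop a.natAbs] with p hp hdvd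
  exact hp.not_ge (Nat.le_of_dvd (Int.natAbs_pos.mpr ha) (Int.natCast_dvd.mp hdvd))

theorem eventually_prime_exists_norm_sum_exp_sub_aeval_lt {α : Type*} (s : Finset α) (v w : α → ℂ)
    (C : ℂ) {f : ℤ[X]} (hf : f.coeff 0 ≠ 0) (hv : ∀ a ∈ s, aeval (v a) f = 0) {ε : ℝ}
    (hε : 0 < ε) :
    ∀ᶠ p : ℕ in atTop, p.Prime → ∃ n : ℤ, ¬ (p : ℤ) ∣ n ∧
      ∃ g : ℤ[X], g.natDegree ≤ p * f.natDegree ∧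
        ‖C ^ p * ∑ a ∈ s, w a * (n * exp (v a) - p * aeval (v a) g)‖ < ε := by
  rw [coeff_zero_eq_eval_zero] at hf
  have hf_ne : f ≠ 0 := by rintro rfl; simp at hf
  obtain ⟨c, hc⟩ := LindemannWeierstrass.exp_polynomial_approx f hf
  have hlim := FloorSemiring.tendsto_mul_pow_div_factorial_sub_atTop (∑ a ∈ s, ‖w a‖)
    (‖C‖ * |c|) 1
  filter_upwards [hlim.eventually (gt_mem_nhds hε), eventually_gt_atTop (f.eval 0).natAbs]
    with p hsmall hlarge hp
  obtain ⟨n, hn, g, hdeg, hg⟩ := hc p hlarge hp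
  refine ⟨n, hn, g, hdeg.trans (Nat.sub_le _ _), lt_of_le_of_lt ?_ hsmall⟩
  have hterm : ∀ a ∈ s, ‖n * exp (v a) - p * aeval (v a) g‖ ≤ |c| ^ p / (p - 1).factorial := by
    intro a ha
    have hroot : v a ∈ f.aroots ℂ := mem_aroots.mpr ⟨hf_ne, hv a ha⟩
    have h := hg hroot
    rw [zsmul_eq_mul, nsmul_eq_mul] at h
    refine h.trans ?_
    gcongr ?_ / _
    exact (le_abs_self _).trans_eq (abs_pow c p)
  calc ‖C ^ p * ∑ a ∈ s, w a * (n * exp (v a) - p * aeval (v a) g)‖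
      ≤ ‖C‖ ^ p * ∑ a ∈ s, ‖w a‖ * (|c| ^ p / (p - 1).factorial) := by
        rw [norm_mul, norm_pow]
        gcongr
        refine norm_sum_le_of_le s fun a ha ↦ ?_
        rw [norm_mul]
        gcongr
        exact hterm a ha
    _ = (∑ a ∈ s, ‖w a‖) * (‖C‖ * |c|) ^ p / (p - 1).factorial := by
        rw [← Finset.sum_mul, mul_pow]
        ring

end Approximation

section GroupAlgebra

variable {R G A : Type*} [CommRing R] [Group G] [AddCommGroup A] [DistribMulAction G A]

variable (R G A) in
/-- The action of `G` on the group algebra `R[A]` induced by its action on `A`: coefficients are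
fixed and the basis element at `a` is sent to the one at `g • a`. -/
noncomputable def groupAlgebraAction : G →* (R[A] ≃ₐ[R] R[A]) where
  toFun g := AddMonoidAlgebra.domCongr R R (DistribMulAction.toAddEquiv A g)
  map_one' := by ext; simp
  map_mul' g h := by ext; simp [mul_smul]

theorem groupAlgebraAction_single (g : G) (a : A) (r : R) :
    groupAlgebraAction R G A g (.single a r) = .single (g • a) r :=
  AddMonoidAlgebra.domCongr_single _ _ _

theorem coeff_groupAlgebraAction_smul (g : G) (x : R[A]) (a : A) :
    (groupAlgebraAction R G A g x).coeff (g • a) = x.coeff a := by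
  simp [groupAlgebraAction]

theorem coeff_mul_sum_single_neg_smul [Fintype G] {x : R[A]}
    (hx : ∀ g, groupAlgebraAction R G A g x = x) (a : A) :
    (x * ∑ g : G, AddMonoidAlgebra.single (-(g • a)) 1).coeff 0 = Fintype.card G * x.coeff a := by
  have hterm (g : G) : (x * AddMonoidAlgebra.single (-(g • a)) 1).coeff 0 = x.coeff a := by
    rw [AddMonoidAlgebra.coeff_mul_single_apply, mul_one, neg_neg, zero_add,
      ← coeff_groupAlgebraAction_smul g x a, hx]
  simp only [Finset.mul_sum, AddMonoidAlgebra.coeff_sum, Finsupp.finsetSum_apply, hterm,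
    Finset.sum_const, Finset.card_univ, nsmul_eq_mul]

theorem exists_mul_groupAlgebraAction_eq_coeff_zero_ne_zero (G : Type*) [Group G] [Finite G]
    [DistribMulAction G A] [IsDomain R] [CharZero R] [UniqueSums A] {x : R[A]} (hx : x ≠ 0) :
    ∃ y : R[A], (∀ g, groupAlgebraAction R G A g (x * y) = x * y) ∧ (x * y).coeff 0 ≠ 0 := by
  classical
  have := Fintype.ofFinite G
  set ρ := groupAlgebraAction R G A
  set N : R[A] := ∏ g, ρ g x
  have hN (g : G) : ρ g N = N := by
    rw [map_prod]
    exact Fintype.prod_equiv (Equiv.mulLeft g) _ _ fun h ↦ (congrArg (· x) (map_mul ρ g h)).symm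
  have hN_ne : N ≠ 0 :=
    Finset.prod_ne_zero_iff.mpr fun g _ ↦ (map_ne_zero_iff _ (ρ g).injective).mpr hx
  obtain ⟨a, ha⟩ : ∃ a, N.coeff a ≠ 0 := by
    by_contra! h
    exact hN_ne (AddMonoidAlgebra.ext (Finsupp.ext h))
  set T : R[A] := ∑ g : G, .single (-(g • a)) 1
  have hT (g : G) : ρ g T = T := by
    rw [map_sum]
    refine Fintype.sum_equiv (Equiv.mulLeft g) _ _ fun h ↦ ?_
    rw [groupAlgebraAction_single, smul_neg, smul_smul, Equiv.coe_mulLeft]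
  obtain ⟨y, hy⟩ : x ∣ N * T := by
    have : ρ 1 x ∣ N := Finset.dvd_prod_of_mem _ (Finset.mem_univ 1)
    rw [map_one] at this
    exact this.mul_right T
  refine ⟨y, fun g ↦ ?_, ?_⟩
  · rw [← hy, map_mul, hN, hT]
  · rw [← hy, coeff_mul_sum_single_neg_smul hN]
    exact mul_ne_zero (Nat.cast_ne_zero.mpr Fintype.card_ne_zero) ha

end GroupAlgebra

section LindemannWeierstrass

variable {K : Type*} [Field K] [Algebra ℚ K] [IsGalois ℚ K]

theorem exists_intCast_eq_pow_mul_sum_mul_aeval (ι : K →ₐ[ℚ] ℂ) {h : K →₀ ℤ}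
    (hinv : ∀ (σ : Gal(K/ℚ)) γ, h (σ γ) = h γ) {L : ℤ}
    (hL : ∀ γ ∈ h.support, IsIntegral ℤ (L • γ)) {g : ℤ[X]} {N : ℕ} (hN : g.natDegree ≤ N) :
    ∃ m : ℤ, (m : ℂ) = L ^ N * ∑ γ ∈ h.support, h γ * aeval (ι γ) g := by
  obtain ⟨m, hm⟩ := exists_algebraMap_eq_sum_smul_pow_smul_aeval hinv hL hN
  refine ⟨m, ?_⟩
  have haeval (γ : K) : aeval (ι γ) g = ι (aeval γ g) :=
    aeval_algHom_apply (ι.restrictScalars ℤ) γ g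
  calc (m : ℂ) = ι (algebraMap ℤ K m) := by rw [eq_intCast, map_intCast]
    _ = ∑ γ ∈ h.support, h γ • L ^ N • ι (aeval γ g) := by
        rw [hm, Finsupp.sum, map_sum]
        simp only [map_zsmul]
    _ = L ^ N * ∑ γ ∈ h.support, h γ * aeval (ι γ) g := by
        simp only [haeval, zsmul_eq_mul, Int.cast_pow, Finset.mul_sum, mul_left_comm]

theorem intCast_add_sum_mul_exp_ne_zero (ι : K →ₐ[ℚ] ℂ) {k : ℤ} (hk : k ≠ 0) {h : K →₀ ℤ}
    (h0 : h 0 = 0) (hinv : ∀ (σ : Gal(K/ℚ)) γ, h (σ γ) = h γ) :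
    k + ∑ γ ∈ h.support, h γ * exp (ι γ) ≠ 0 := by
  intro hzero
  have : Algebra.IsAlgebraic ℤ K :=
    (IsFractionRing.comap_isAlgebraic_iff (K := ℚ)).mpr inferInstance
  obtain ⟨f, hf0, hf⟩ := exists_coeff_zero_ne_zero_forall_aeval_eq_zero ℤ
    (Finsupp.notMem_support_iff.mpr h0)
  have hroot : ∀ γ ∈ h.support, aeval (ι γ) f = 0 := fun γ hγ ↦
    (aeval_algHom_apply (ι.restrictScalars ℤ) γ f).trans (by rw [hf γ hγ, map_zero])
  obtain ⟨L, hL, hLint⟩ := Algebra.IsAlgebraic.exists_integral_multiples ℤ h.support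
  have hprimes : ∃ᶠ p : ℕ in atTop, p.Prime :=
    Nat.frequently_atTop_iff_infinite.mpr Nat.infinite_setOfPred_prime
  obtain ⟨p, hp, hpk, hpL, happrox⟩ := (hprimes.and_eventually <|
    (eventually_not_natCast_dvd hk).and <| (eventually_not_natCast_dvd hL).and <|
      eventually_prime_exists_norm_sum_exp_sub_aeval_lt h.support ι (fun γ ↦ h γ)
        (L ^ f.natDegree) hf0 hroot one_pos).exists
  obtain ⟨n, hpn, g, hg, hlt⟩ := happrox hp
  set N := p * f.natDegree with hN
  obtain ⟨m, hm⟩ := exists_intCast_eq_pow_mul_sum_mul_aeval ι hinv hLint hg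
  have herror : (L ^ f.natDegree : ℂ) ^ p *
      ∑ γ ∈ h.support, h γ * (n * exp (ι γ) - p * aeval (ι γ) g) =
      ((-(L ^ N * (n * k) + p * m) : ℤ) : ℂ) := by
    simp only [mul_sub, Finset.sum_sub_distrib, mul_left_comm (h _ : ℂ), ← Finset.mul_sum,
      eq_neg_of_add_eq_zero_right hzero]
    push_cast
    rw [hm, ← pow_mul, mul_comm f.natDegree, ← hN]
    ring
  have hint : L ^ N * (n * k) + p * m = 0 := by
    rw [herror, norm_intCast] at hlt
    exact neg_eq_zero.mp (Int.abs_lt_one_iff.mp (mod_cast hlt))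
  have hpZ : Prime (p : ℤ) := Nat.prime_iff_prime_int.mp hp
  have hdvd : (p : ℤ) ∣ L ^ N * (n * k) :=
    (dvd_add_left (dvd_mul_right _ m)).mp (hint ▸ dvd_zero _)
  rcases hpZ.dvd_or_dvd hdvd with hdvdL | hdvd_nk
  · exact hpL (hpZ.dvd_of_dvd_pow hdvdL)
  · exact (hpZ.dvd_or_dvd hdvd_nk).elim hpn hpk

/-- The ring homomorphism from the group algebra `ℤ[A]` to `ℂ` that sends the basis element at `a`
to `exp (φ a)`; its kernel consists of the integer linear relations between these exponentials. -/
noncomputable def expSum {A : Type*} [AddMonoid A] (φ : A →+ ℂ) : ℤ[A] →ₐ[ℤ] ℂ :=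
  AddMonoidAlgebra.lift ℤ ℂ A (expMonoidHom.comp φ.toMultiplicative)

theorem expSum_apply {A : Type*} [AddMonoid A] (φ : A →+ ℂ) (x : ℤ[A]) :
    expSum φ x = x.coeff.sum fun a c ↦ c • exp (φ a) :=
  AddMonoidAlgebra.lift_apply _ _

theorem expSum_injective [FiniteDimensional ℚ K] (ι : K →ₐ[ℚ] ℂ) :
    Function.Injective (expSum (ι : K →+ ℂ)) := by
  have : CharZero K := algebraRat.charZero K
  refine (injective_iff_map_eq_zero _).mpr fun x hx ↦ ?_
  by_contra hx_ne
  obtain ⟨y, hinv, h0⟩ := exists_mul_groupAlgebraAction_eq_coeff_zero_ne_zero Gal(K/ℚ) hx_ne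
  set z := x * y
  have hcoeff (σ : Gal(K/ℚ)) (γ : K) : z.coeff (σ γ) = z.coeff γ := by
    conv_lhs => rw [← hinv σ]
    exact coeff_groupAlgebraAction_smul σ z γ
  have hcoeff_erase (σ : Gal(K/ℚ)) (γ : K) : z.coeff.erase 0 (σ γ) = z.coeff.erase 0 γ := by
    classical simp only [Finsupp.erase_apply, map_eq_zero, hcoeff]
  have hrel : z.coeff 0 + ∑ γ ∈ (z.coeff.erase 0).support, z.coeff.erase 0 γ * exp (ι γ) = 0 :=
    calc _ = z.coeff.sum fun γ c ↦ c • exp (ι γ) := by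
          rw [← Finsupp.add_sum_erase' z.coeff 0 (fun γ c ↦ c • exp (ι γ)) fun _ ↦ zero_smul ℤ _]
          simp [Finsupp.sum]
      _ = expSum (ι : K →+ ℂ) z := (expSum_apply (ι : K →+ ℂ) z).symm
      _ = 0 := by rw [map_mul, hx, zero_mul]
  exact intCast_add_sum_mul_exp_ne_zero ι h0 Finsupp.erase_same hcoeff_erase hrel

theorem linearIndependent_exp_algHom_of_finiteDimensional [FiniteDimensional ℚ K]
    (ι : K →ₐ[ℚ] ℂ) : LinearIndependent ℚ fun γ ↦ exp (ι γ) := by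
  refine (LinearIndependent.iff_fractionRing ℤ ℚ).mp (linearIndependent_iff.mpr fun l hl ↦ ?_)
  have hzero : expSum (ι : K →+ ℂ) (.ofCoeff l) = 0 := (expSum_apply _ _).trans hl
  exact congrArg AddMonoidAlgebra.coeff ((map_eq_zero_iff _ (expSum_injective ι)).mp hzero)

theorem linearIndependent_exp_algHom (ι : K →ₐ[ℚ] ℂ) :
    LinearIndependent ℚ fun γ ↦ exp (ι γ) := by
  refine linearIndependent_iff_finset_linearIndependent.mpr fun s ↦ ?_
  let E := FiniteGaloisIntermediateField.adjoin ℚ (s : Set K)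
  -- The general instance `DivisionRing.toRatAlgebra` is not definitionally the subfield structure.
  let _ : Algebra ℚ E := E.toIntermediateField.algebra'
  let w (γ : s) : E := ⟨γ, FiniteGaloisIntermediateField.subset_adjoin ℚ _ γ.2⟩
  have hw : Function.Injective w := fun _ _ h ↦ Subtype.ext (congrArg (fun x : E ↦ (x : K)) h)
  exact (linearIndependent_exp_algHom_of_finiteDimensional
    (ι.comp E.toIntermediateField.val)).comp w hw

theorem linearIndependent_exp_of_isAlgebraic {η : Type*} {v : η → ℂ} (hv : Function.Injective v)
    (halg : ∀ i, IsAlgebraic ℚ (v i)) : LinearIndependent ℚ fun i ↦ exp (v i) := by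
  have : IsAlgClosure ℚ (algebraicClosure ℚ ℂ) := algebraicClosure.isAlgClosure ℚ ℂ
  have : IsGalois ℚ (algebraicClosure ℚ ℂ) := IsAlgClosure.isGalois ℚ _
  exact (linearIndependent_exp_algHom (algebraicClosure ℚ ℂ).val).comp
    (fun i ↦ ⟨v i, mem_algebraicClosure_iff.mpr (halg i)⟩)
    fun _ _ h ↦ hv (congrArg Subtype.val h)

theorem transcendental_of_linearIndependent_pow {R A : Type*} [CommRing R] [Ring A] [Algebra R A]
    {x : A} (hx : LinearIndependent R fun n : ℕ ↦ x ^ n) : Transcendental R x := by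
  refine transcendental_iff.mpr fun p hp ↦ ?_
  rw [aeval_eq_sum_range] at hp
  exact leadingCoeff_eq_zero.mp
    (linearIndependent_iff'.mp hx _ _ hp p.natDegree (Finset.self_mem_range_succ _))

theorem transcendental_exp_of_isAlgebraic {β : ℂ} (hβ : β ≠ 0) (halg : IsAlgebraic ℚ β) :
    Transcendental ℚ (exp β) := by
  refine transcendental_of_linearIndependent_pow ?_
  simp only [← exp_nat_mul]
  exact linearIndependent_exp_of_isAlgebraic
    (fun _ _ h ↦ Nat.cast_injective (mul_right_cancel₀ hβ h))
    fun n ↦ (isAlgebraic_natCast n).mul halg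

end LindemannWeierstrass

theorem cos_transcendental_of_algebraic_general {z : ℂ} (hz : z ≠ 0) (halg : IsAlgebraic ℚ z) :
    Transcendental ℚ (cos z) := by
  intro hcos
  have hI : IsAlgebraic ℚ I := isIntegral_rat_I.isAlgebraic
  have hsin : IsAlgebraic ℚ (sin z) := by
    refine IsAlgebraic.of_pow two_pos ?_
    rw [sin_sq]
    exact isAlgebraic_one.sub (hcos.pow 2)
  refine transcendental_exp_of_isAlgebraic (mul_ne_zero hz I_ne_zero) (halg.mul hI) ?_
  rw [exp_mul_I]
  exact hcos.add (hsin.mul hI)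

theorem cos_transcendental_of_algebraic (θ : ℝ) (hθ : θ ≠ 0) (halg : IsAlgebraic ℚ θ) :
    Transcendental ℚ (Real.cos θ) := by
  intro hcos
  exact cos_transcendental_of_algebraic_general (ofReal_ne_zero.mpr hθ) halg.algebraMap
    (ofReal_cos θ ▸ hcos.algebraMap)
end

section
/- Let α be a real irrational algebraic number. Then cos(απ) is transcendental. -/
/-!
If `cos (α π)` were algebraic, so would be `exp (α π I)`, a value of `(-1) ^ α`; this contradicts
the Gelfond–Schneider theorem, which is proved by Schneider's method.

Suppose that `exp ℓ`, `β` and `exp (β ℓ)` lie in a number field. Siegel's lemma yields a nonzero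
polynomial `P` with small integral coefficients such that `f z = P (z, exp (ℓ z))` vanishes at all
`m + n β` with `m, n < t ^ 2`. If `f` vanishes for `m, n < s ^ 2`, the Schwarz lemma makes its
values for `m, n < (2 s) ^ 2` so small that, being algebraic numbers of controlled denominator and
conjugates, they vanish by the Liouville inequality. Hence `f` vanishes at all the points
`m + n β`, which are distinct because `β` is irrational, and the Schwarz lemma gives `f = 0`. This
is absurd, since `z` and `exp (ℓ z)` are algebraically independent.
-/

open Filter Finset Metric NumberField Topology

section Schwarz

variable {E : Type*} [NormedAddCommGroup E] [NormedSpace ℂ E] [CompleteSpace E]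

theorem exists_eq_prod_sub_smul_of_forall_eq_zero {f : ℂ → E} {U : Set ℂ}
    (hf : DifferentiableOn ℂ f U) {S : Finset ℂ} (hU : ∀ s ∈ S, U ∈ 𝓝 s)
    (hS : ∀ s ∈ S, f s = 0) :
    ∃ g : ℂ → E, DifferentiableOn ℂ g U ∧ ∀ z, f z = (∏ s ∈ S, (z - s)) • g z := by
  classical
  induction S using Finset.induction_on with
  | empty => exact ⟨f, hf, by simp⟩
  | insert c S hc ih =>
    obtain ⟨g, hg, hfg⟩ := ih (fun s hs => hU s (mem_insert_of_mem hs))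
      (fun s hs => hS s (mem_insert_of_mem hs))
    have hgc : g c = 0 := by
      have hprod : ∏ s ∈ S, (c - s) ≠ 0 :=
        prod_ne_zero_iff.2 fun s hs => sub_ne_zero.2 fun h => hc (h ▸ hs)
      exact (smul_eq_zero.1 ((hfg c).symm.trans (hS c (mem_insert_self c S)))).resolve_left hprod
    refine ⟨dslope g c, (Complex.differentiableOn_dslope (hU c (mem_insert_self c S))).2 hg,
      fun z => ?_⟩
    rw [hfg, prod_insert hc, mul_comm, mul_smul, sub_smul_dslope, hgc, sub_zero]

theorem norm_le_mul_pow_card_of_forall_eq_zero {f : ℂ → E} {c : ℂ} {r ρ R B : ℝ}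
    (hf : DifferentiableOn ℂ f (closedBall c R)) {S : Finset ℂ} (hSr : ∀ s ∈ S, dist s c ≤ r)
    (hS : ∀ s ∈ S, f s = 0) (hrR : r < R) (hρR : ρ < R) (hB : ∀ z ∈ sphere c R, ‖f z‖ ≤ B)
    {x : ℂ} (hx : dist x c ≤ ρ) : ‖f x‖ ≤ B * ((ρ + r) / (R - r)) ^ #S := by
  obtain ⟨g, hg, hfg⟩ := exists_eq_prod_sub_smul_of_forall_eq_zero hf
    (fun s hs => closedBall_mem_nhds_of_mem ((hSr s hs).trans_lt hrR)) hS
  have hRr : 0 < R - r := sub_pos.2 hrR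
  have hR : R ≠ 0 := (dist_nonneg.trans_lt (hx.trans_lt hρR)).ne'
  have hg_sphere : ∀ z ∈ sphere c R, ‖g z‖ ≤ B / (R - r) ^ #S := by
    intro z hz
    have hprod : (R - r) ^ #S ≤ ‖∏ s ∈ S, (z - s)‖ := by
      rw [norm_prod, ← prod_const]
      refine prod_le_prod (fun _ _ => hRr.le) fun s hs => ?_
      rw [← dist_eq_norm]
      linarith [hSr s hs, mem_sphere.1 hz, dist_triangle z s c]
    rw [le_div_iff₀ (by positivity), mul_comm]
    calc (R - r) ^ #S * ‖g z‖ ≤ ‖∏ s ∈ S, (z - s)‖ * ‖g z‖ := by gcongr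
      _ = ‖f z‖ := by rw [hfg, norm_smul]
      _ ≤ B := hB z hz
  have hgx : ‖g x‖ ≤ B / (R - r) ^ #S := by
    refine Complex.norm_le_of_forall_mem_frontier_norm_le isBounded_ball
      (hg.diffContOnCl_ball subset_rfl) (fun z hz => hg_sphere z ?_)
      (subset_closure (mem_ball.2 (hx.trans_lt hρR)))
    rwa [frontier_ball c hR] at hz
  have hprod : ‖∏ s ∈ S, (x - s)‖ ≤ (ρ + r) ^ #S := by
    rw [norm_prod, ← prod_const]
    refine prod_le_prod (fun _ _ => norm_nonneg _) fun s hs => ?_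
    rw [← dist_eq_norm]
    linarith [hSr s hs, dist_triangle_right x s c]
  calc ‖f x‖ = ‖∏ s ∈ S, (x - s)‖ * ‖g x‖ := by rw [hfg, norm_smul]
    _ ≤ (ρ + r) ^ #S * (B / (R - r) ^ #S) :=
      mul_le_mul hprod hgx (norm_nonneg _) ((norm_nonneg _).trans hprod)
    _ = B * ((ρ + r) / (R - r)) ^ #S := by rw [div_pow]; ring

end Schwarz

section NumberField

variable {K : Type*} [Field K] [NumberField K]

theorem one_le_norm_mul_house_pow (φ : K →+* ℂ) {x : K} (hx : IsIntegral ℤ x) (hx0 : x ≠ 0) :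
    1 ≤ ‖φ x‖ * house x ^ (Module.finrank ℚ K - 1) := by
  let y : 𝓞 K := ⟨x, hx⟩
  have hy : Algebra.norm ℤ y ≠ 0 :=
    Algebra.norm_ne_zero_iff.2 fun h => hx0 (congrArg (algebraMap (𝓞 K) K) h)
  have hnorm : ‖Algebra.norm ℚ x‖ = |(Algebra.norm ℤ y : ℝ)| := by
    rw [← Rat.norm_cast_real, Real.norm_eq_abs, show x = algebraMap (𝓞 K) K y from rfl,
      ← Algebra.coe_norm_int, Rat.cast_intCast]
  refine le_trans ?_ (norm_norm_le_norm_mul_house_pow x φ)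
  rw [hnorm]
  exact_mod_cast Int.one_le_abs hy

theorem house_zsmul_le (δ : ℤ) (x : K) : house (δ • x) ≤ |δ| * house x := by
  rw [zsmul_eq_mul]
  exact (house_mul_le _ _).trans_eq (by rw [house_intCast])

theorem one_le_abs_pow_mul_norm_mul_house_pow (φ : K →+* ℂ) {δ : ℤ} (hδ : δ ≠ 0) {x : K}
    (hx : IsIntegral ℤ (δ • x)) (hx0 : x ≠ 0) :
    1 ≤ |(δ : ℝ)| ^ Module.finrank ℚ K * (‖φ x‖ * house x ^ (Module.finrank ℚ K - 1)) := by
  have hφ : ‖φ (δ • x)‖ = |(δ : ℝ)| * ‖φ x‖ := by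
    rw [zsmul_eq_mul, map_mul, map_intCast, norm_mul, Complex.norm_intCast]
  have hhouse : house (δ • x) ≤ |(δ : ℝ)| * house x := by exact_mod_cast house_zsmul_le δ x
  calc 1 ≤ ‖φ (δ • x)‖ * house (δ • x) ^ (Module.finrank ℚ K - 1) :=
        one_le_norm_mul_house_pow φ hx (smul_ne_zero hδ hx0)
    _ ≤ |(δ : ℝ)| * ‖φ x‖ * (|(δ : ℝ)| * house x) ^ (Module.finrank ℚ K - 1) := by
        rw [hφ]
        gcongr
        exact house_nonneg _
    _ = |(δ : ℝ)| ^ (Module.finrank ℚ K - 1 + 1) *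
          (‖φ x‖ * house x ^ (Module.finrank ℚ K - 1)) := by ring
    _ = _ := by rw [Nat.sub_add_cancel Module.finrank_pos]

variable (K) in
theorem exists_forall_exists_mulVec_eq_zero_house_le : ∃ C : ℝ, ∀ {ι κ : Type*} [Fintype ι]
    [Fintype κ] (M : Matrix ι κ (𝓞 K)) (A : ℝ), M ≠ 0 →
    Fintype.card κ = 2 * Fintype.card ι → (∀ k l, house (M k l : K) ≤ A) →
    ∃ ξ : κ → 𝓞 K, ξ ≠ 0 ∧ M.mulVec ξ = 0 ∧
      ∀ l, house (ξ l : K) ≤ C ^ 2 * Fintype.card κ * A := by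
  classical
  -- The constant of Siegel's lemma is private in the library; it is found by unification.
  refine ⟨?C, fun {ι κ} _ _ M A hM hcard hA => ?solution⟩
  case solution =>
    have hι : 0 < Fintype.card ι := by
      obtain ⟨k, -⟩ := Function.ne_iff.1 hM
      exact Fintype.card_pos_iff.2 ⟨k⟩
    obtain ⟨ξ, hξ0, hMξ, hξ⟩ := house.exists_ne_zero_int_vec_house_le K M hM hι
      (by lia : Fintype.card ι < Fintype.card κ) rfl hA rfl
    have hexp : (Fintype.card ι : ℝ) / (Fintype.card κ - Fintype.card ι) = 1 := by
      rw [hcard]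
      push_cast
      rw [two_mul, add_sub_cancel_right, div_self (by exact_mod_cast hι.ne')]
    refine ⟨ξ, hξ0, hMξ, fun l => (hξ l).trans_eq ?_⟩
    rw [hexp, Real.rpow_one, sq, mul_assoc, mul_assoc, mul_assoc]

variable (K) in
theorem exists_forall_exists_mulVec_eq_zero_house_le_of_isIntegral_zsmul : ∃ C : ℝ,
    ∀ {ι κ : Type*} [Fintype ι] [Fintype κ] (M : Matrix ι κ K) (δ : ℤ) (A : ℝ), δ ≠ 0 →
    (∀ k l, IsIntegral ℤ (δ • M k l)) → M ≠ 0 → Fintype.card κ = 2 * Fintype.card ι →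
    (∀ k l, house (M k l) ≤ A) →
    ∃ ξ : κ → 𝓞 K, ξ ≠ 0 ∧ M.mulVec (fun l => (ξ l : K)) = 0 ∧
      ∀ l, house (ξ l : K) ≤ C ^ 2 * Fintype.card κ * (|δ| * A) := by
  obtain ⟨C, hC⟩ := exists_forall_exists_mulVec_eq_zero_house_le K
  refine ⟨C, fun {ι κ} _ _ M δ A hδ hint hM hcard hA => ?_⟩
  let M' : Matrix ι κ (𝓞 K) := fun k l => ⟨δ • M k l, hint k l⟩
  have hM' : M' ≠ 0 := by
    contrapose! hM
    ext k l
    exact (smul_eq_zero.1 (congrArg (algebraMap (𝓞 K) K) (congrFun₂ hM k l))).resolve_left hδ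
  obtain ⟨ξ, hξ0, hMξ, hξ⟩ := hC M' (|δ| * A) hM' hcard fun k l =>
    (house_zsmul_le δ (M k l)).trans (mul_le_mul_of_nonneg_left (hA k l) (by positivity))
  refine ⟨ξ, hξ0, funext fun k => (smul_eq_zero.1 ?_).resolve_left hδ, hξ⟩
  calc δ • M.mulVec (fun l => (ξ l : K)) k = ∑ l, δ • M k l * (ξ l : K) := by
        simp only [Matrix.mulVec, dotProduct, smul_sum, smul_mul_assoc]
    _ = algebraMap (𝓞 K) K (M'.mulVec ξ k) := by
        simp only [Matrix.mulVec, dotProduct, map_sum, map_mul]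
        rfl
    _ = 0 := by rw [hMξ, Pi.zero_apply, map_zero]

end NumberField

section Growth

/-- The unit in which the estimates are measured at stage `s`: a monomial of degree `O(s ^ 3)` in
quantities of size `s ^ O(1)` is bounded by a power of `growthScale s`, and such powers are
negligible against `2 ^ s ^ 4`, the gain of the Schwarz lemma for `s ^ 4` zeros. -/
def growthScale (s : ℕ) : ℝ := (s : ℝ) ^ s ^ 3

theorem growthScale_pow (s k : ℕ) : growthScale s ^ k = (s : ℝ) ^ (k * s ^ 3) := by
  rw [growthScale, ← pow_mul, mul_comm]

theorem one_le_growthScale (s : ℕ) : 1 ≤ growthScale s := by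
  rcases s.eq_zero_or_pos with rfl | hs
  · norm_num [growthScale]
  · exact one_le_pow₀ (by exact_mod_cast hs)

theorem growthScale_nonneg (s : ℕ) : 0 ≤ growthScale s :=
  zero_le_one.trans (one_le_growthScale s)

theorem growthScale_mono : Monotone growthScale := by
  intro t s hts
  rcases t.eq_zero_or_pos with rfl | ht
  · simpa [growthScale] using one_le_growthScale s
  · have hs : (1 : ℝ) ≤ s := by exact_mod_cast (show 1 ≤ s from ht.trans_le hts)
    calc growthScale t ≤ (s : ℝ) ^ t ^ 3 := by unfold growthScale; gcongr
      _ ≤ growthScale s := pow_le_pow_right₀ hs (by gcongr)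

theorem pow_le_growthScale_pow {s n i j : ℕ} {x : ℝ} (hs : 1 ≤ s) (hx0 : 0 ≤ x)
    (hx : x ≤ (s : ℝ) ^ i) (hn : n ≤ j * s ^ 3) : x ^ n ≤ growthScale s ^ (i * j) := by
  have hsi : (1 : ℝ) ≤ (s : ℝ) ^ i := one_le_pow₀ (by exact_mod_cast hs)
  calc x ^ n ≤ ((s : ℝ) ^ i) ^ n := by gcongr
    _ ≤ ((s : ℝ) ^ i) ^ (j * s ^ 3) := pow_le_pow_right₀ hsi hn
    _ = growthScale s ^ (i * j) := by rw [growthScale_pow, ← pow_mul, mul_assoc]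

theorem tendsto_growthScale_pow_div_two_pow (k : ℕ) :
    Tendsto (fun s : ℕ => growthScale s ^ k / 2 ^ s ^ 4) atTop (𝓝 0) := by
  have hlim : Tendsto (fun s : ℕ => (s : ℝ) ^ k / 2 ^ s) atTop (𝓝 0) :=
    tendsto_pow_const_div_const_pow_of_one_lt k one_lt_two
  refine squeeze_zero' (Eventually.of_forall fun s => ?_) ?_ hlim
  · exact div_nonneg (pow_nonneg (growthScale_nonneg s) k) (by positivity)
  · filter_upwards [hlim.eventually_le_const one_pos, eventually_ge_atTop 1] with s hs1 hs
    calc growthScale s ^ k / 2 ^ s ^ 4 = ((s : ℝ) ^ k / 2 ^ s) ^ s ^ 3 := by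
          rw [growthScale_pow, div_pow, ← pow_mul, ← pow_mul, ← pow_succ']
      _ ≤ (s : ℝ) ^ k / 2 ^ s :=
          pow_le_of_le_one (by positivity) hs1 (pow_ne_zero 3 (Nat.one_le_iff_ne_zero.1 hs))

end Growth

section BivariateEval

variable {R A : Type*} [CommRing R] [CommRing A] {D E : ℕ}

/-- The value at `(x, y)` of the bivariate polynomial `∑ c (i, j) X ^ i Y ^ j` of degree less than
`D` in `X` and less than `E` in `Y`. It is given by its array of coefficients, so that these can
be the unknowns of a linear system. -/
def bivariateEval (c : Fin D × Fin E → R) (x y : R) : R :=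
  ∑ l, c l * (x ^ (l.1 : ℕ) * y ^ (l.2 : ℕ))

theorem map_bivariateEval (σ : R →+* A) (c : Fin D × Fin E → R) (x y : R) :
    σ (bivariateEval c x y) = bivariateEval (σ ∘ c) (σ x) (σ y) := by
  simp only [bivariateEval, map_sum, map_mul, map_pow, Function.comp_apply]

theorem norm_bivariateEval_le {R : Type*} [SeminormedCommRing R] {c : Fin D × Fin E → R}
    {x y : R} {H B : ℝ} (hc : ∀ l, ‖c l‖ ≤ H) (hB : ∀ i < D, ∀ j < E, ‖x ^ i * y ^ j‖ ≤ B) :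
    ‖bivariateEval c x y‖ ≤ (D * E : ℕ) * (H * B) := by
  have hterm : ∀ l ∈ univ, ‖c l * (x ^ (l.1 : ℕ) * y ^ (l.2 : ℕ))‖ ≤ H * B := fun l _ =>
    (norm_mul_le _ _).trans <| mul_le_mul (hc l) (hB l.1 l.1.2 l.2 l.2.2) (norm_nonneg _)
      ((norm_nonneg _).trans (hc l))
  simpa [bivariateEval] using norm_sum_le_of_le univ hterm

theorem house_bivariateEval_le {K : Type*} [Field K] [NumberField K] {c : Fin D × Fin E → K}
    {x y : K} {H B : ℝ} (hc : ∀ l, house (c l) ≤ H)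
    (hB : ∀ i < D, ∀ j < E, house (x ^ i * y ^ j) ≤ B) :
    house (bivariateEval c x y) ≤ (D * E : ℕ) * (H * B) := by
  rw [house, map_bivariateEval]
  refine norm_bivariateEval_le hc fun i hi j hj => ?_
  rw [← map_pow, ← map_pow, ← map_mul]
  exact hB i hi j hj

theorem eq_zero_of_infinite_sum_mul_pow_eq_zero [IsDomain R] {n : ℕ} {c : Fin n → R}
    (h : {x | ∑ i : Fin n, c i * x ^ (i : ℕ) = 0}.Infinite) : c = 0 := by
  let p : Polynomial R := ∑ i : Fin n, Polynomial.monomial (i : ℕ) (c i)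
  have hp : p = 0 := Polynomial.eq_zero_of_infinite_isRoot p <| by
    simpa [p, Polynomial.IsRoot, Polynomial.eval_finsetSum] using h
  ext i
  simpa [p, Polynomial.finsetSum_coeff, Polynomial.coeff_monomial, Fin.val_inj] using
    congrArg (Polynomial.coeff · (i : ℕ)) hp

theorem eq_zero_of_infinite_bivariateEval_eq_zero [IsDomain R] {c : Fin D × Fin E → R}
    {T : Set R} (hT : T.Infinite) (h : ∀ y ∈ T, {x | bivariateEval c x y = 0}.Infinite) :
    c = 0 := by
  have hcoeff : ∀ y ∈ T, ∀ i, ∑ j, c (i, j) * y ^ (j : ℕ) = 0 := by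
    intro y hy
    refine congrFun (eq_zero_of_infinite_sum_mul_pow_eq_zero ?_)
    convert h y hy using 5 with x
    simp only [bivariateEval, Fintype.sum_prod_type, sum_mul]
    exact sum_congr rfl fun i _ => sum_congr rfl fun j _ => by ring
  ext ⟨i, j⟩
  exact congrFun (eq_zero_of_infinite_sum_mul_pow_eq_zero (c := fun j => c (i, j))
    (hT.mono fun y hy => hcoeff y hy i)) j

theorem eq_zero_of_forall_bivariateEval_exp_eq_zero {ℓ : ℂ} (hℓ : ℓ ≠ 0)
    {c : Fin D × Fin E → ℂ} (h : ∀ z, bivariateEval c z (Complex.exp (ℓ * z)) = 0) : c = 0 := by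
  refine eq_zero_of_infinite_bivariateEval_eq_zero (Set.finite_singleton 0).infinite_compl
    fun y hy => ?_
  let period : ℂ := 2 * Real.pi * Complex.I
  have hperiod : period ≠ 0 := Complex.two_pi_I_ne_zero
  have hinj : Function.Injective fun k : ℕ => (Complex.log y + k * period) / ℓ := by
    intro k k' hk
    simpa [div_left_inj' hℓ, hperiod] using hk
  refine (Set.infinite_range_of_injective hinj).mono ?_
  rintro _ ⟨k, rfl⟩
  have hexp : Complex.exp (ℓ * ((Complex.log y + k * period) / ℓ)) = y := by
    rw [mul_div_cancel₀ _ hℓ, Complex.exp_add, Complex.exp_log hy,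
      Complex.exp_nat_mul_two_pi_mul_I, mul_one]
  simpa only [hexp, Set.mem_ofPred_eq] using h ((Complex.log y + k * period) / ℓ)

end BivariateEval

section Grid

/-- The points `m + n β` with `0 ≤ m, n < N`, at which `z` and `α ^ z` both take values in the
field generated by `α`, `β` and `α ^ β`. -/
noncomputable def latticeGrid (β : ℂ) (N : ℕ) : Finset ℂ :=
  (range N ×ˢ range N).image fun k => k.1 + k.2 * β

theorem card_latticeGrid {β : ℂ} (hβ : β ∉ Set.range ((↑) : ℚ → ℂ)) (N : ℕ) :
    #(latticeGrid β N) = N ^ 2 := by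
  have hinj : Function.Injective fun k : ℕ × ℕ => (k.1 + k.2 * β : ℂ) := by
    rintro ⟨m, n⟩ ⟨m', n'⟩ h
    have h : (m + n * β : ℂ) = m' + n' * β := h
    have hn : n = n' := by
      by_contra hne
      have hsub : (n - n' : ℂ) ≠ 0 := sub_ne_zero.2 (by exact_mod_cast hne)
      refine hβ ⟨((m' : ℚ) - m) / ((n : ℚ) - n'), ?_⟩
      push_cast
      rw [div_eq_iff hsub]
      linear_combination -h
    subst hn
    simpa using h
  rw [latticeGrid, card_image_of_injective _ hinj, card_product, card_range, sq]

theorem norm_natCast_add_natCast_mul_le (β : ℂ) {m n N : ℕ} (hm : m ≤ N) (hn : n ≤ N) :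
    ‖(m + n * β : ℂ)‖ ≤ (1 + ‖β‖) * N := by
  have hm' : (m : ℝ) ≤ N := by exact_mod_cast hm
  have hn' : (n : ℝ) ≤ N := by exact_mod_cast hn
  calc ‖(m + n * β : ℂ)‖ ≤ m + n * ‖β‖ :=
        (norm_add_le _ _).trans_eq (by rw [norm_mul, Complex.norm_natCast, Complex.norm_natCast])
    _ ≤ N + N * ‖β‖ := by gcongr
    _ = (1 + ‖β‖) * N := by ring

theorem norm_le_of_mem_latticeGrid {β z : ℂ} {N : ℕ} (hz : z ∈ latticeGrid β N) :
    ‖z‖ ≤ (1 + ‖β‖) * N := by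
  obtain ⟨⟨m, n⟩, hmn, rfl⟩ := mem_image.1 hz
  rw [mem_product, mem_range, mem_range] at hmn
  exact norm_natCast_add_natCast_mul_le β hmn.1.le hmn.2.le

variable {R A : Type*} [CommRing R] [CommRing A] {D E : ℕ}

/-- With `a = α`, `b = β`, `g = α ^ β`, the function `bivariateEval c z (α ^ z)` vanishes at the
points `m + n β` with `0 ≤ m, n < N`. The condition only involves the ring containing `a`, `b`,
`g` and the coefficients, so that it can be read in a number field as well as in `ℂ`. -/
def VanishesOnGrid (a b g : R) (c : Fin D × Fin E → R) (N : ℕ) : Prop :=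
  ∀ m < N, ∀ n < N, bivariateEval c (m + n * b) (a ^ m * g ^ n) = 0

theorem VanishesOnGrid.map {a b g : R} {c : Fin D × Fin E → R} {N : ℕ}
    (h : VanishesOnGrid a b g c N) (σ : R →+* A) :
    VanishesOnGrid (σ a) (σ b) (σ g) (σ ∘ c) N := by
  intro m hm n hn
  simpa [h m hm n hn] using (map_bivariateEval σ c (m + n * b) (a ^ m * g ^ n)).symm

theorem VanishesOnGrid.mono {a b g : R} {c : Fin D × Fin E → R} {N N' : ℕ}
    (h : VanishesOnGrid a b g c N') (hN : N ≤ N') : VanishesOnGrid a b g c N :=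
  fun m hm n hn => h m (hm.trans_le hN) n (hn.trans_le hN)

/-- The matrix of the linear system expressing `VanishesOnGrid a b g c N` in the unknowns `c`. -/
def gridMatrix (a b g : R) (N D E : ℕ) : Matrix (Fin N × Fin N) (Fin D × Fin E) R :=
  fun k l => (k.1 + k.2 * b) ^ (l.1 : ℕ) * (a ^ (k.1 : ℕ) * g ^ (k.2 : ℕ)) ^ (l.2 : ℕ)

theorem vanishesOnGrid_iff_gridMatrix_mulVec_eq_zero {a b g : R} {c : Fin D × Fin E → R} {N : ℕ} :
    VanishesOnGrid a b g c N ↔ (gridMatrix a b g N D E).mulVec c = 0 := by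
  have hrow : ∀ k, (gridMatrix a b g N D E).mulVec c k =
      bivariateEval c (k.1 + k.2 * b) (a ^ (k.1 : ℕ) * g ^ (k.2 : ℕ)) :=
    fun k => sum_congr rfl fun l _ => mul_comm _ _
  simp only [VanishesOnGrid, funext_iff, hrow, Prod.forall, Fin.forall_iff, Pi.zero_apply]

theorem gridMatrix_ne_zero [Nontrivial R] (a b g : R) {N : ℕ} (hN : 0 < N) (hD : 0 < D)
    (hE : 0 < E) : gridMatrix a b g N D E ≠ 0 := fun h => by
  simpa [gridMatrix] using congrFun₂ h (⟨0, hN⟩, ⟨0, hN⟩) (⟨0, hD⟩, ⟨0, hE⟩)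

theorem exp_mul_natCast_add (ℓ β : ℂ) (m n : ℕ) :
    Complex.exp (ℓ * (m + n * β)) = Complex.exp ℓ ^ m * Complex.exp (β * ℓ) ^ n := by
  rw [← Complex.exp_nat_mul, ← Complex.exp_nat_mul, ← Complex.exp_add]
  ring_nf

theorem VanishesOnGrid.bivariateEval_exp_eq_zero {ℓ β : ℂ} {c : Fin D × Fin E → ℂ} {N : ℕ}
    (h : VanishesOnGrid (Complex.exp ℓ) β (Complex.exp (β * ℓ)) c N) :
    ∀ z ∈ latticeGrid β N, bivariateEval c z (Complex.exp (ℓ * z)) = 0 := by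
  intro z hz
  obtain ⟨⟨m, n⟩, hmn, rfl⟩ := mem_image.1 hz
  rw [mem_product, mem_range, mem_range] at hmn
  simpa only [exp_mul_natCast_add] using h m hmn.1 n hmn.2

end Grid

section AnalyticEstimate

theorem norm_pow_mul_exp_pow_le {C : ℝ} {ℓ z : ℂ} {s i j : ℕ} (hs : 1 ≤ s) (hCs : C ≤ s)
    (hexp : Real.exp (‖ℓ‖ * C) ≤ s) (hz : ‖z‖ ≤ C * s ^ 2) (hi : i ≤ 2 * s ^ 3) (hj : j ≤ s) :
    ‖z ^ i * Complex.exp (ℓ * z) ^ j‖ ≤ growthScale s ^ 7 := by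
  have hz_pow : ‖z‖ ^ i ≤ growthScale s ^ (3 * 2) := by
    refine pow_le_growthScale_pow hs (norm_nonneg z) ?_ hi
    calc ‖z‖ ≤ C * s ^ 2 := hz
      _ ≤ s * s ^ 2 := by gcongr
      _ = (s : ℝ) ^ 3 := by ring
  have hexp_pow : ‖Complex.exp (ℓ * z)‖ ^ j ≤ growthScale s ^ (1 * 1) := by
    have hC : 0 ≤ C * s ^ 2 := (norm_nonneg z).trans hz
    calc ‖Complex.exp (ℓ * z)‖ ^ j ≤ Real.exp (‖ℓ‖ * (C * s ^ 2)) ^ j := by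
          gcongr
          refine (Complex.norm_exp_le_exp_norm _).trans (Real.exp_le_exp.2 ?_)
          rw [norm_mul]
          gcongr
      _ ≤ Real.exp (‖ℓ‖ * (C * s ^ 2)) ^ s :=
          pow_le_pow_right₀ (Real.one_le_exp (mul_nonneg (norm_nonneg ℓ) hC)) hj
      _ = Real.exp (‖ℓ‖ * C) ^ s ^ 3 := by
          rw [← Real.exp_nat_mul, ← Real.exp_nat_mul]
          push_cast
          ring_nf
      _ ≤ growthScale s ^ (1 * 1) :=
          pow_le_growthScale_pow hs (Real.exp_nonneg _) (by simpa using hexp) (by simp)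
  rw [norm_mul, norm_pow, norm_pow]
  calc ‖z‖ ^ i * ‖Complex.exp (ℓ * z)‖ ^ j ≤ growthScale s ^ (3 * 2) * growthScale s ^ (1 * 1) :=
        mul_le_mul hz_pow hexp_pow (by positivity) ((by positivity : 0 ≤ ‖z‖ ^ i).trans hz_pow)
    _ = growthScale s ^ 7 := by ring

theorem natCast_mul_le_growthScale_pow {s D E : ℕ} (hs : 2 ≤ s) (hD : D ≤ 2 * s ^ 3)
    (hE : E ≤ s) : ((D * E : ℕ) : ℝ) ≤ growthScale s ^ 5 := by
  have hDE : D * E ≤ s ^ 5 := calc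
    D * E ≤ 2 * s ^ 3 * s := Nat.mul_le_mul hD hE
    _ ≤ s * s ^ 3 * s := by gcongr
    _ = s ^ 5 := by ring
  simpa using pow_le_growthScale_pow (n := 1) (i := 5) (j := 1) (one_le_two.trans hs)
    (Nat.cast_nonneg (D * E)) (by exact_mod_cast hDE)
    (by simpa using Nat.one_le_pow 3 s (one_le_two.trans hs))

theorem norm_bivariateEval_exp_le {C H : ℝ} {ℓ z : ℂ} {s D E : ℕ} {c : Fin D × Fin E → ℂ}
    (hs : 2 ≤ s) (hCs : C ≤ s) (hexp : Real.exp (‖ℓ‖ * C) ≤ s) (hD : D ≤ 2 * s ^ 3) (hE : E ≤ s)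
    (hH : 0 ≤ H) (hc : ∀ l, ‖c l‖ ≤ H) (hz : ‖z‖ ≤ C * s ^ 2) :
    ‖bivariateEval c z (Complex.exp (ℓ * z))‖ ≤ H * growthScale s ^ 12 := by
  have hmonomial : ∀ i < D, ∀ j < E, ‖z ^ i * Complex.exp (ℓ * z) ^ j‖ ≤ growthScale s ^ 7 :=
    fun i hi j hj => norm_pow_mul_exp_pow_le (one_le_two.trans hs) hCs hexp hz
      (hi.le.trans hD) (hj.le.trans hE)
  calc ‖bivariateEval c z (Complex.exp (ℓ * z))‖
      ≤ (D * E : ℕ) * (H * growthScale s ^ 7) := norm_bivariateEval_le hc hmonomial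
    _ ≤ growthScale s ^ 5 * (H * growthScale s ^ 7) :=
        mul_le_mul_of_nonneg_right (natCast_mul_le_growthScale_pow hs hD hE)
          (mul_nonneg hH (pow_nonneg (growthScale_nonneg s) 7))
    _ = H * growthScale s ^ 12 := by ring

theorem eventually_norm_bivariateEval_exp_le (ℓ : ℂ) {β : ℂ}
    (hβ : β ∉ Set.range ((↑) : ℚ → ℂ)) :
    ∀ᶠ s : ℕ in atTop, ∀ {D E : ℕ} {c : Fin D × Fin E → ℂ} {H : ℝ}, D ≤ 2 * s ^ 3 → E ≤ s →
      0 ≤ H → (∀ l, ‖c l‖ ≤ H) →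
      VanishesOnGrid (Complex.exp ℓ) β (Complex.exp (β * ℓ)) c (s ^ 2) →
      ∀ z, ‖z‖ ≤ (1 + ‖β‖) * (4 * s ^ 2) →
        ‖bivariateEval c z (Complex.exp (ℓ * z))‖ ≤ H * (growthScale s ^ 12 / 2 ^ s ^ 4) := by
  set C : ℝ := 1 + ‖β‖
  have hC0 : 0 < C := by positivity
  have hcast := tendsto_natCast_atTop_atTop (R := ℝ)
  filter_upwards [eventually_ge_atTop 2, hcast.eventually_ge_atTop (11 * C),
    hcast.eventually_ge_atTop (Real.exp (‖ℓ‖ * (11 * C)))] with s hs hCs hexp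
  intro D E c H hD hE hH0 hH hgrid z hz
  have hr : 0 < C * s ^ 2 := mul_pos hC0 (by exact_mod_cast (show 0 < s ^ 2 by positivity))
  have hdiff : Differentiable ℂ fun z => bivariateEval c z (Complex.exp (ℓ * z)) := by
    unfold bivariateEval
    fun_prop
  have hsphere : ∀ w ∈ sphere (0 : ℂ) (11 * C * s ^ 2),
      ‖bivariateEval c w (Complex.exp (ℓ * w))‖ ≤ H * growthScale s ^ 12 :=
    fun w hw => norm_bivariateEval_exp_le hs hCs hexp hD hE hH0 hH
      (mem_sphere_zero_iff_norm.1 hw).le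
  have hgrid_norm : ∀ w ∈ latticeGrid β (s ^ 2), dist w 0 ≤ C * s ^ 2 := fun w hw => by
    rw [dist_zero_right]
    exact_mod_cast norm_le_of_mem_latticeGrid hw
  have hschwarz := norm_le_mul_pow_card_of_forall_eq_zero hdiff.differentiableOn hgrid_norm
    hgrid.bivariateEval_exp_eq_zero (by nlinarith) (by nlinarith) hsphere
    ((dist_zero_right z).trans_le hz)
  have hratio : (C * (4 * s ^ 2) + C * s ^ 2) / (11 * C * s ^ 2 - C * s ^ 2) = 1 / 2 := by
    field_simp
    norm_num
  rw [hratio, card_latticeGrid hβ, one_div, inv_pow, ← pow_mul] at hschwarz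
  rwa [← mul_div_assoc, div_eq_mul_inv]

end AnalyticEstimate

section ArithmeticEstimate

theorem isIntegral_pow_smul_grid_monomial {R A : Type*} [CommRing R] [CommRing A] [Algebra R A]
    {δ : R} {a b g : A} (ha : IsIntegral R (δ • a)) (hb : IsIntegral R (δ • b))
    (hg : IsIntegral R (δ • g)) {m n i j k : ℕ} (hk : i + (m + n) * j ≤ k) :
    IsIntegral R (δ ^ k • ((m + n * b) ^ i * (a ^ m * g ^ n) ^ j)) := by
  obtain ⟨e, rfl⟩ := Nat.exists_eq_add_of_le' hk
  have hx : IsIntegral R (δ • (m + n * b)) := by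
    have hcast : ∀ k : ℕ, IsIntegral R (k : A) := fun k => by
      simpa using isIntegral_algebraMap (R := R) (A := A) (x := k)
    rw [smul_add, ← mul_smul_comm]
    exact ((hcast m).smul δ).add ((hcast n).mul hb)
  have hsplit : ∀ x : A, δ ^ (e + (i + (m + n) * j)) • (x ^ i * (a ^ m * g ^ n) ^ j) =
      δ ^ e • ((δ • x) ^ i * ((δ • a) ^ m * (δ • g) ^ n) ^ j) := by
    intro x
    simp only [Algebra.smul_def, map_pow]
    ring
  rw [hsplit]
  exact ((hx.pow i).mul (((ha.pow m).mul (hg.pow n)).pow j)).smul _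

theorem isIntegral_pow_smul_bivariateEval {R A : Type*} [CommRing R] [CommRing A] [Algebra R A]
    {δ : R} {a b g : A} (ha : IsIntegral R (δ • a)) (hb : IsIntegral R (δ • b))
    (hg : IsIntegral R (δ • g)) {D E m n k : ℕ} {c : Fin D × Fin E → A}
    (hc : ∀ l, IsIntegral R (c l)) (hk : ∀ i < D, ∀ j < E, i + (m + n) * j ≤ k) :
    IsIntegral R (δ ^ k • bivariateEval c (m + n * b) (a ^ m * g ^ n)) := by
  rw [bivariateEval, smul_sum]
  refine IsIntegral.sum _ fun l _ => ?_
  rw [← mul_smul_comm]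
  exact (hc l).mul (isIntegral_pow_smul_grid_monomial ha hb hg (hk l.1 l.1.2 l.2 l.2.2))

variable {K : Type*} [Field K] [NumberField K]

theorem house_natCast_add_natCast_mul_le (b : K) {m n N : ℕ} (hm : m ≤ N) (hn : n ≤ N) :
    house (m + n * b : K) ≤ (1 + house b) * N := by
  have hm' : (m : ℝ) ≤ N := by exact_mod_cast hm
  have hn' : (n : ℝ) ≤ N := by exact_mod_cast hn
  have hb := house_nonneg b
  have hm_house : house (m : K) = m := by simpa using house_intCast (K := K) (m : ℤ)
  calc house (m + n * b : K) ≤ m + n * house b :=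
        (house_add_le _ _).trans_eq (by rw [hm_house, house_nat_mul])
    _ ≤ N + N * house b := by gcongr
    _ = (1 + house b) * N := by ring

theorem house_mul_le_of_le {x y : K} {X Y : ℝ} (hx : house x ≤ X) (hy : house y ≤ Y) :
    house (x * y) ≤ X * Y :=
  (house_mul_le x y).trans (mul_le_mul hx hy (house_nonneg y) ((house_nonneg x).trans hx))

theorem eventually_house_grid_monomial_le (a b g : K) :
    ∀ᶠ s : ℕ in atTop, ∀ m ≤ 4 * s ^ 2, ∀ n ≤ 4 * s ^ 2, ∀ i ≤ 2 * s ^ 3, ∀ j ≤ s,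
      house ((m + n * b) ^ i * (a ^ m * g ^ n) ^ j) ≤ growthScale s ^ 14 := by
  have hcast := tendsto_natCast_atTop_atTop (R := ℝ)
  filter_upwards [eventually_ge_atTop 1, hcast.eventually_ge_atTop (4 * (1 + house b)),
    hcast.eventually_ge_atTop (house a), hcast.eventually_ge_atTop (house g)] with s hs hbs has hgs
  intro m hm n hn i hi j hj
  have hpoint : house ((m + n * b : K) ^ i) ≤ growthScale s ^ (3 * 2) := by
    refine (house_pow_le _ _).trans (pow_le_growthScale_pow hs (house_nonneg _) ?_ hi)
    calc house (m + n * b : K) ≤ (1 + house b) * (4 * s ^ 2 : ℕ) :=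
          house_natCast_add_natCast_mul_le b hm hn
      _ = 4 * (1 + house b) * s ^ 2 := by push_cast; ring
      _ ≤ s * s ^ 2 := by gcongr
      _ = (s : ℝ) ^ 3 := by ring
  have hpow : ∀ {x : K}, house x ≤ s → ∀ k ≤ 4 * s ^ 2,
      house (x ^ (k * j)) ≤ growthScale s ^ (1 * 4) := fun {x} hx k hk =>
    (house_pow_le _ _).trans <| pow_le_growthScale_pow hs (house_nonneg x) (by simpa using hx)
      ((Nat.mul_le_mul hk hj).trans_eq (by ring))
  rw [mul_pow, ← pow_mul, ← pow_mul]
  calc _ ≤ growthScale s ^ (3 * 2) * (growthScale s ^ (1 * 4) * growthScale s ^ (1 * 4)) :=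
        house_mul_le_of_le hpoint (house_mul_le_of_le (hpow has m hm) (hpow hgs n hn))
    _ = growthScale s ^ 14 := by ring

theorem grid_exponent_le {s m n i j : ℕ} (hm : m ≤ 4 * s ^ 2) (hn : n ≤ 4 * s ^ 2)
    (hi : i ≤ 2 * s ^ 3) (hj : j ≤ s) : i + (m + n) * j ≤ 10 * s ^ 3 :=
  calc i + (m + n) * j ≤ 2 * s ^ 3 + (4 * s ^ 2 + 4 * s ^ 2) * s := by gcongr
    _ = 10 * s ^ 3 := by ring

theorem eventually_abs_pow_le_growthScale_pow (δ : ℝ) :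
    ∀ᶠ s : ℕ in atTop, |δ| ^ (10 * s ^ 3) ≤ growthScale s ^ 10 := by
  filter_upwards [eventually_ge_atTop 1,
    (tendsto_natCast_atTop_atTop (R := ℝ)).eventually_ge_atTop |δ|] with s hs hδ
  simpa using pow_le_growthScale_pow hs (abs_nonneg δ) (i := 1) (by simpa using hδ) le_rfl

theorem exists_zsmul_isIntegral (a b g : K) : ∃ δ : ℤ, δ ≠ 0 ∧
    IsIntegral ℤ (δ • a) ∧ IsIntegral ℤ (δ • b) ∧ IsIntegral ℤ (δ • g) := by
  classical
  obtain ⟨δ, hδ, h⟩ := exists_integral_multiples ℤ ℚ ({a, b, g} : Finset K)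
  exact ⟨δ, hδ, h a (by simp), h b (by simp), h g (by simp)⟩

theorem eventually_exists_vanishesOnGrid (a b g : K) :
    ∀ᶠ t : ℕ in atTop, ∃ ξ : Fin (2 * t ^ 3) × Fin t → 𝓞 K, ξ ≠ 0 ∧
      VanishesOnGrid a b g (fun l => (ξ l : K)) (t ^ 2) ∧
      ∀ l, house (ξ l : K) ≤ growthScale t ^ 30 := by
  obtain ⟨δ, hδ, ha, hb, hg⟩ := exists_zsmul_isIntegral a b g
  obtain ⟨C, hC⟩ := exists_forall_exists_mulVec_eq_zero_house_le_of_isIntegral_zsmul K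
  filter_upwards [eventually_ge_atTop 2, eventually_house_grid_monomial_le a b g,
    eventually_abs_pow_le_growthScale_pow δ,
    (tendsto_natCast_atTop_atTop (R := ℝ)).eventually_ge_atTop (C ^ 2)] with t ht hmonomial hδt hCt
  have hle : ∀ m : Fin (t ^ 2), (m : ℕ) ≤ 4 * t ^ 2 := fun m => by have := m.2; lia
  obtain ⟨ξ, hξ0, hMξ, hξ⟩ := hC (gridMatrix a b g (t ^ 2) _ _) (δ ^ (10 * t ^ 3)) _
    (pow_ne_zero _ hδ)
    (fun k l => isIntegral_pow_smul_grid_monomial ha hb hg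
      (grid_exponent_le (hle k.1) (hle k.2) l.1.2.le l.2.2.le))
    (gridMatrix_ne_zero a b g (by positivity) (by positivity) (by lia))
    (by simp only [Fintype.card_prod, Fintype.card_fin]; ring)
    (fun k l => hmonomial k.1 (hle k.1) k.2 (hle k.2) l.1 l.1.2.le l.2 l.2.2.le)
  have hconst : C ^ 2 * (2 * t ^ 3 * t : ℕ) ≤ growthScale t ^ (6 * 1) := by
    rw [← pow_one (C ^ 2 * _)]
    refine pow_le_growthScale_pow (one_le_two.trans ht) (by positivity) ?_
      (by simpa using Nat.one_le_pow 3 t (by lia))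
    calc C ^ 2 * (2 * t ^ 3 * t : ℕ) ≤ t * (t * t ^ 3 * t : ℕ) := by gcongr
      _ = (t : ℝ) ^ 6 := by push_cast; ring
  refine ⟨ξ, hξ0, vanishesOnGrid_iff_gridMatrix_mulVec_eq_zero.2 hMξ, fun l => ?_⟩
  have hQ : 0 ≤ growthScale t := growthScale_nonneg t
  calc house (ξ l : K)
      ≤ C ^ 2 * (2 * t ^ 3 * t : ℕ) * (|(δ : ℝ)| ^ (10 * t ^ 3) * growthScale t ^ 14) := by
        simpa using hξ l
    _ ≤ growthScale t ^ (6 * 1) * (growthScale t ^ 10 * growthScale t ^ 14) := by gcongr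
    _ = growthScale t ^ 30 := by ring

end ArithmeticEstimate

section Extrapolation

variable {K : Type*} [Field K] [NumberField K]

theorem eventually_eq_zero_of_house_le_of_norm_le (φ : K →+* ℂ) {δ : ℤ} (hδ : δ ≠ 0) (i j : ℕ) :
    ∀ᶠ s : ℕ in atTop, ∀ v : K, IsIntegral ℤ (δ ^ (10 * s ^ 3) • v) →
      house v ≤ growthScale s ^ i → ‖φ v‖ ≤ growthScale s ^ j / 2 ^ s ^ 4 → v = 0 := by
  set d := Module.finrank ℚ K
  filter_upwards [eventually_abs_pow_le_growthScale_pow δ,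
    (tendsto_growthScale_pow_div_two_pow (10 * d + (j + i * (d - 1)))).eventually_lt_const
      one_pos] with s hδs hlt v hint hhouse hnorm
  have hv := house_nonneg v
  have hQ : 0 ≤ growthScale s := growthScale_nonneg s
  by_contra hv0
  refine hlt.not_ge ?_
  calc (1 : ℝ) ≤ |((δ ^ (10 * s ^ 3) : ℤ) : ℝ)| ^ d * (‖φ v‖ * house v ^ (d - 1)) :=
        one_le_abs_pow_mul_norm_mul_house_pow φ (pow_ne_zero _ hδ) hint hv0
    _ ≤ (growthScale s ^ 10) ^ d *
          (growthScale s ^ j / 2 ^ s ^ 4 * (growthScale s ^ i) ^ (d - 1)) := by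
        rw [Int.cast_pow, abs_pow]
        gcongr
    _ = growthScale s ^ (10 * d + (j + i * (d - 1))) / 2 ^ s ^ 4 := by ring

theorem eventually_vanishesOnGrid_two_mul {φ : K →+* ℂ} {a b g : K} {ℓ : ℂ}
    (ha : φ a = Complex.exp ℓ) (hb : φ b ∉ Set.range ((↑) : ℚ → ℂ))
    (hg : φ g = Complex.exp (φ b * ℓ)) (k : ℕ) :
    ∀ᶠ s : ℕ in atTop, ∀ {D E : ℕ} {ξ : Fin D × Fin E → 𝓞 K}, D ≤ 2 * s ^ 3 → E ≤ s →
      (∀ l, house (ξ l : K) ≤ growthScale s ^ k) →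
      VanishesOnGrid a b g (fun l => (ξ l : K)) (s ^ 2) →
      VanishesOnGrid a b g (fun l => (ξ l : K)) ((2 * s) ^ 2) := by
  obtain ⟨δ, hδ, hδa, hδb, hδg⟩ := exists_zsmul_isIntegral a b g
  filter_upwards [eventually_ge_atTop 2, eventually_house_grid_monomial_le a b g,
    eventually_norm_bivariateEval_exp_le ℓ hb,
    eventually_eq_zero_of_house_le_of_norm_le φ hδ (k + 19) (k + 12)]
    with s hs hmonomial hnorm hzero D E ξ hD hE hξ hgrid m hm n hn
  have hm' : m ≤ 4 * s ^ 2 := hm.le.trans_eq (by ring)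
  have hn' : n ≤ 4 * s ^ 2 := hn.le.trans_eq (by ring)
  have hQ : 0 ≤ growthScale s := growthScale_nonneg s
  set v := bivariateEval (fun l => (ξ l : K)) (m + n * b) (a ^ m * g ^ n) with hv
  have hδv : IsIntegral ℤ (δ ^ (10 * s ^ 3) • v) :=
    isIntegral_pow_smul_bivariateEval hδa hδb hδg (fun l => (ξ l).isIntegral_coe)
      fun i hi j hj => grid_exponent_le hm' hn' (hi.le.trans hD) (hj.le.trans hE)
  have hv_house : house v ≤ growthScale s ^ (k + 19) := calc
    house v ≤ (D * E : ℕ) * (growthScale s ^ k * growthScale s ^ 14) :=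
        house_bivariateEval_le hξ fun i hi j hj =>
          hmonomial m hm' n hn' i (hi.le.trans hD) j (hj.le.trans hE)
    _ ≤ growthScale s ^ 5 * (growthScale s ^ k * growthScale s ^ 14) := by
        gcongr
        exact natCast_mul_le_growthScale_pow hs hD hE
    _ = growthScale s ^ (k + 19) := by ring
  have hv_norm : ‖φ v‖ ≤ growthScale s ^ (k + 12) / 2 ^ s ^ 4 := by
    have hpoint : ‖(m + n * φ b : ℂ)‖ ≤ (1 + ‖φ b‖) * (4 * s ^ 2) := by
      exact_mod_cast norm_natCast_add_natCast_mul_le (φ b) hm' hn'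
    have hgrid' := hgrid.map φ
    rw [ha, hg] at hgrid'
    rw [pow_add, mul_div_assoc]
    simpa [hv, map_bivariateEval, ha, hg, exp_mul_natCast_add, Function.comp_def] using
      hnorm hD hE (pow_nonneg hQ k) (fun l => (norm_embedding_le_house _ φ).trans (hξ l)) hgrid'
        _ hpoint
  exact hzero v hδv hv_house hv_norm

theorem exists_forall_vanishesOnGrid {φ : K →+* ℂ} {a b g : K} {ℓ : ℂ}
    (ha : φ a = Complex.exp ℓ) (hb : φ b ∉ Set.range ((↑) : ℚ → ℂ))
    (hg : φ g = Complex.exp (φ b * ℓ)) :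
    ∃ (D E : ℕ) (ξ : Fin D × Fin E → 𝓞 K), ξ ≠ 0 ∧
      ∀ N, VanishesOnGrid a b g (fun l => (ξ l : K)) N := by
  obtain ⟨t, ⟨ξ, hξ0, hgrid, hξ⟩, hstep, ht⟩ := ((eventually_exists_vanishesOnGrid a b g).and
    ((eventually_forall_ge_atTop.2 (eventually_vanishesOnGrid_two_mul ha hb hg 30)).and
      (eventually_ge_atTop 1))).exists
  have hiter : ∀ r, VanishesOnGrid a b g (fun l => (ξ l : K)) ((2 ^ r * t) ^ 2) := by
    intro r
    induction r with
    | zero => simpa using hgrid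
    | succ r ih =>
      have hts : t ≤ 2 ^ r * t := Nat.le_mul_of_pos_left t (by positivity)
      rw [show 2 ^ (r + 1) * t = 2 * (2 ^ r * t) by ring]
      refine hstep _ hts (by gcongr) hts (fun l => (hξ l).trans ?_) ih
      exact pow_le_pow_left₀ (growthScale_nonneg t) (growthScale_mono hts) 30
  refine ⟨_, _, ξ, hξ0, fun N => (hiter N).mono ?_⟩
  calc N ≤ 2 ^ N * t := N.lt_two_pow_self.le.trans (Nat.le_mul_of_pos_right _ ht)
    _ ≤ (2 ^ N * t) ^ 2 := Nat.le_self_pow two_ne_zero _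

end Extrapolation

section GelfondSchneider

theorem eq_zero_of_forall_vanishesOnGrid {ℓ β : ℂ} (hℓ : ℓ ≠ 0)
    (hβ : β ∉ Set.range ((↑) : ℚ → ℂ)) {D E : ℕ} {c : Fin D × Fin E → ℂ}
    (h : ∀ N, VanishesOnGrid (Complex.exp ℓ) β (Complex.exp (β * ℓ)) c N) : c = 0 := by
  refine eq_zero_of_forall_bivariateEval_exp_eq_zero hℓ fun z => norm_le_zero_iff.1 ?_
  have hlim : Tendsto (fun s : ℕ => ‖c‖ * (growthScale s ^ 12 / 2 ^ s ^ 4)) atTop (𝓝 0) := by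
    simpa using (tendsto_growthScale_pow_div_two_pow 12).const_mul ‖c‖
  refine ge_of_tendsto hlim ?_
  filter_upwards [eventually_norm_bivariateEval_exp_le ℓ hβ, eventually_ge_atTop (D + E + 1),
    (tendsto_natCast_atTop_atTop (R := ℝ)).eventually_ge_atTop ‖z‖] with s hs hDE hz
  have hs1 : (1 : ℝ) ≤ s := by exact_mod_cast (show 1 ≤ s by lia)
  have hcube : s ≤ s ^ 3 := Nat.le_self_pow three_ne_zero s
  refine hs (by lia) (by lia) (norm_nonneg c) (norm_le_pi_norm c) (h _) z ?_
  nlinarith [norm_nonneg β]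

theorem mem_range_ratCast_of_map_eq_exp {K : Type*} [Field K] [NumberField K] {φ : K →+* ℂ}
    {a b g : K} {ℓ : ℂ} (hℓ : ℓ ≠ 0) (ha : φ a = Complex.exp ℓ)
    (hg : φ g = Complex.exp (φ b * ℓ)) : φ b ∈ Set.range ((↑) : ℚ → ℂ) := by
  by_contra hb
  obtain ⟨D, E, ξ, hξ0, hgrid⟩ := exists_forall_vanishesOnGrid ha hb hg
  have hφξ : φ ∘ (fun l => (ξ l : K)) = 0 := eq_zero_of_forall_vanishesOnGrid hℓ hb fun N => by
    simpa only [ha, hg] using (hgrid N).map φ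
  refine hξ0 (funext fun l => RingOfIntegers.ext ?_)
  simpa using congrFun hφξ l

theorem gelfond_schneider {ℓ β : ℂ} (hℓ : ℓ ≠ 0) (hα : IsAlgebraic ℚ (Complex.exp ℓ))
    (hβ : IsAlgebraic ℚ β) (hβ_irrational : β ∉ Set.range ((↑) : ℚ → ℂ)) :
    Transcendental ℚ (Complex.exp (β * ℓ)) := by
  intro hγ
  let S : Set ℂ := {Complex.exp ℓ, β, Complex.exp (β * ℓ)}
  have hS : ∀ x ∈ S, IsIntegral ℚ x := by
    rintro x (rfl | rfl | rfl)
    exacts [hα.isIntegral, hβ.isIntegral, hγ.isIntegral]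
  let K := IntermediateField.adjoin ℚ S
  have : FiniteDimensional ℚ K := IntermediateField.finiteDimensional_adjoin hS
  have : NumberField K := ⟨⟩
  have hmem : ∀ {x}, x ∈ S → x ∈ K := fun hx => IntermediateField.subset_adjoin ℚ S hx
  exact hβ_irrational <| mem_range_ratCast_of_map_eq_exp (φ := algebraMap K ℂ)
    (a := ⟨_, hmem (by simp [S])⟩) (b := ⟨β, hmem (by simp [S])⟩)
    (g := ⟨_, hmem (by simp [S])⟩) hℓ rfl rfl

theorem isAlgebraic_exp_mul_I_of_isAlgebraic_cos {z : ℂ} (hz : IsAlgebraic ℚ (Complex.cos z)) :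
    IsAlgebraic ℚ (Complex.exp (z * Complex.I)) := by
  have hsin : IsAlgebraic ℚ (Complex.sin z) := by
    refine IsAlgebraic.of_pow two_pos ?_
    rw [Complex.sin_sq]
    exact isAlgebraic_one.sub (hz.pow 2)
  rw [Complex.exp_mul_I]
  exact hz.add (hsin.mul Complex.isIntegral_rat_I.isAlgebraic)

end GelfondSchneider

theorem cos_pi_mul_transcendental_of_algebraic_irrational_general {α : ℂ}
    (halg : IsAlgebraic ℚ α) (hirr : α ∉ Set.range ((↑) : ℚ → ℂ)) :
    Transcendental ℚ (Complex.cos (α * Real.pi)) := by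
  intro hcos
  have hℓ : (Real.pi * Complex.I : ℂ) ≠ 0 :=
    mul_ne_zero (by exact_mod_cast Real.pi_ne_zero) Complex.I_ne_zero
  have hneg_one : IsAlgebraic ℚ (Complex.exp (Real.pi * Complex.I)) := by
    rw [Complex.exp_pi_mul_I]
    exact isAlgebraic_one.neg
  refine gelfond_schneider hℓ hneg_one halg hirr ?_
  rw [← mul_assoc]
  exact isAlgebraic_exp_mul_I_of_isAlgebraic_cos hcos

theorem cos_pi_mul_transcendental_of_algebraic_irrational (α : ℝ)
    (halg : IsAlgebraic ℚ α) (hirr : Irrational α) :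
    Transcendental ℚ (Real.cos (α * Real.pi)) := by
  have h := cos_pi_mul_transcendental_of_algebraic_irrational_general (α := α) halg.algebraMap
    fun ⟨q, hq⟩ => hirr ⟨q, by exact_mod_cast hq⟩
  exact (transcendental_algebraMap_iff (algebraMap ℝ ℂ).injective).1 (by simpa using h)
end

section
/- Let α and β be nonzero real algebraic numbers. Then cos(απ + β) is transcendental. -/
/-!
If `cos (α π + β)` is algebraic, then so is `exp (i (α π + β))`. Hence `i (α π + β)` and `i π` are
logarithms of algebraic numbers, and `i (α π + β) - α * i π = i β` is a nonzero algebraic value of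
a linear form in them with algebraic coefficients, which contradicts Baker's theorem.

Baker's theorem: suppose that `u φ = ∑ i, φ (α i) * l i` is nonzero and algebraic, where the numbers
`exp (l i)` are algebraic, `φ` is an embedding of a number field `F` containing the `α i`, and `g`
generates `F`. As `σ` runs over the embeddings of `F` for which `u σ ≠ 0`, the frequencies
`(σ g ^ k)_σ` and the linearly independent points `(u σ * σ g ^ l)_σ` have dot products
`∑ σ, σ (g ^ (k + l)) * u σ`, which are rational combinations of the `l i` because the coefficients
are traces. So all exponentials of these dot products are algebraic, as are the coordinates of the
points at the place `φ`. By Siegel's lemma there is a nonzero exponential polynomial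
`∑ i, q i (w φ) * exp (x i ⬝ᵥ w)`, with frequencies `x i` and small integral coefficients, which
vanishes to order `T` at the points of a box of side `N` in the lattice generated by these points.
Let `L ≥ T` be its exact order of vanishing there and `r = L ^ (1 / (m + 1))`, where `m` is the
dimension. By the Schwarz lemma on circles of radius `4 * N * r`, a nonzero derivative of order `L`
is at most `r ^ (-N' * L)` times a power of `r ^ L`, where `N = m * N'` and the exponent of the
power does not depend on `N'`. For large `N'` this contradicts Liouville's inequality.
-/

open Polynomial

section SchwarzLemma

theorem exists_differentiable_eq_sub_pow_mul {g : ℂ → ℂ} (hg : Differentiable ℂ g) {a : ℂ}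
    {M : ℕ} (hM : M ≤ analyticOrderAt g a) :
    ∃ h : ℂ → ℂ, Differentiable ℂ h ∧ ∀ z, g z = (z - a) ^ M * h z := by
  obtain ⟨f, hf, hgf⟩ := (natCast_le_analyticOrderAt (hg.analyticAt a)).1 hM
  simp only [smul_eq_mul] at hgf
  refine ⟨Function.update (fun z => g z / (z - a) ^ M) a (f a), fun z => ?_, fun z => ?_⟩
  · rcases eq_or_ne z a with rfl | hz
    · refine hf.differentiableAt.congr_of_eventuallyEq (hgf.mono fun w hw => ?_)
      rcases eq_or_ne w z with rfl | hwz
      · simp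
      · rw [Function.update_of_ne hwz, hw,
          mul_div_cancel_left₀ _ (pow_ne_zero _ (sub_ne_zero.2 hwz))]
    · have hquot : DifferentiableAt ℂ (fun z => g z / (z - a) ^ M) z :=
        (hg z).div (by fun_prop) (pow_ne_zero _ (sub_ne_zero.2 hz))
      exact hquot.congr_of_eventuallyEq
        ((eventually_ne_nhds hz).mono fun w hw => Function.update_of_ne hw _ _)
  · rcases eq_or_ne z a with rfl | hz
    · simpa using hgf.self_of_nhds
    · rw [Function.update_of_ne hz, mul_div_cancel₀ _ (pow_ne_zero _ (sub_ne_zero.2 hz))]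

theorem exists_differentiable_eq_prod_sub_pow_mul {g : ℂ → ℂ} (hg : Differentiable ℂ g)
    (S : Finset ℂ) {M : ℕ} (hM : ∀ a ∈ S, M ≤ analyticOrderAt g a) :
    ∃ h : ℂ → ℂ, Differentiable ℂ h ∧ ∀ z, g z = (∏ a ∈ S, (z - a)) ^ M * h z := by
  induction S using Finset.induction_on with
  | empty => exact ⟨g, hg, by simp⟩
  | insert b S hb ih =>
    obtain ⟨h, hh, hgh⟩ := ih fun a ha => hM a (Finset.mem_insert_of_mem ha)
    have hprod : Differentiable ℂ fun z => (∏ a ∈ S, (z - a)) ^ M := by fun_prop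
    have hprod_order : analyticOrderAt (fun z => (∏ a ∈ S, (z - a)) ^ M) b = 0 := by
      rw [(hprod.analyticAt b).analyticOrderAt_eq_zero]
      exact pow_ne_zero _ (Finset.prod_ne_zero_iff.2 fun a ha =>
        sub_ne_zero.2 fun hba => hb (hba ▸ ha))
    have hord : M ≤ analyticOrderAt h b := by
      have hgb := hM b (Finset.mem_insert_self b S)
      rwa [show g = (fun z => (∏ a ∈ S, (z - a)) ^ M) * h from funext hgh,
        analyticOrderAt_mul (hprod.analyticAt b) (hh.analyticAt b), hprod_order, zero_add] at hgb
    obtain ⟨f, hf, hhf⟩ := exists_differentiable_eq_sub_pow_mul hh hord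
    exact ⟨f, hf, fun z => by rw [hgh, hhf, Finset.prod_insert hb, mul_pow]; ring⟩

theorem norm_le_of_le_analyticOrderAt {g : ℂ → ℂ} (hg : Differentiable ℂ g) {S : Finset ℂ}
    {M : ℕ} (hM : ∀ a ∈ S, M ≤ analyticOrderAt g a) {R ρ B : ℝ} (hR : 0 < R)
    (hS : ∀ a ∈ S, ‖a‖ ≤ R) (hρ : 2 * R ≤ ρ) (hB : ∀ z, ‖z‖ = ρ → ‖g z‖ ≤ B) {z : ℂ}
    (hz : ‖z‖ ≤ R) : ‖g z‖ ≤ (4 * R / ρ) ^ (S.card * M) * B := by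
  obtain ⟨h, hh, hgh⟩ := exists_differentiable_eq_prod_sub_pow_mul hg S hM
  have hρ0 : 0 < ρ := by linarith
  have hcircle : ∀ w, ‖w‖ = ρ → ‖h w‖ ≤ (2 / ρ) ^ (S.card * M) * B := by
    intro w hw
    have hprod : (ρ / 2) ^ S.card ≤ ‖∏ a ∈ S, (w - a)‖ := by
      rw [norm_prod, ← Finset.prod_const]
      refine Finset.prod_le_prod (fun _ _ => by positivity) fun a ha => ?_
      linarith [norm_sub_norm_le w a, hS a ha]
    rw [← inv_div ρ 2, inv_pow, inv_mul_eq_div, le_div_iff₀' (by positivity)]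
    calc (ρ / 2) ^ (S.card * M) * ‖h w‖ ≤ ‖∏ a ∈ S, (w - a)‖ ^ M * ‖h w‖ := by
          rw [pow_mul]; gcongr
      _ = ‖g w‖ := by rw [hgh, norm_mul, norm_pow]
      _ ≤ B := hB w hw
  have hdisc : ‖h z‖ ≤ (2 / ρ) ^ (S.card * M) * B := by
    refine Complex.norm_le_of_forall_mem_frontier_norm_le (U := Metric.ball 0 ρ)
      Metric.isBounded_ball hh.diffContOnCl (fun w hw => hcircle w ?_) ?_
    · rwa [frontier_ball _ hρ0.ne', mem_sphere_zero_iff_norm] at hw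
    · rw [closure_ball _ hρ0.ne', mem_closedBall_zero_iff]
      linarith
  have hprod : ‖∏ a ∈ S, (z - a)‖ ≤ (2 * R) ^ S.card := by
    rw [norm_prod, ← Finset.prod_const]
    refine Finset.prod_le_prod (fun _ _ => norm_nonneg _) fun a ha => ?_
    linarith [norm_sub_le z a, hS a ha]
  calc ‖g z‖ = ‖∏ a ∈ S, (z - a)‖ ^ M * ‖h z‖ := by rw [hgh, norm_mul, norm_pow]
    _ ≤ ((2 * R) ^ S.card) ^ M * ((2 / ρ) ^ (S.card * M) * B) := by gcongr
    _ = (4 * R / ρ) ^ (S.card * M) * B := by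
      rw [← pow_mul, ← mul_assoc, ← mul_pow]
      ring

theorem norm_iteratedDeriv_natCast_le {g : ℂ → ℂ} (hg : Differentiable ℂ g) {N M : ℕ}
    (hM : ∀ i < N, ∀ k < M, iteratedDeriv k g (i : ℂ) = 0) {ρ B : ℝ} (hρ : 2 * N ≤ ρ)
    (hB : ∀ z, ‖z‖ = ρ → ‖g z‖ ≤ B) {n : ℕ} (hn : n < N) :
    ‖iteratedDeriv M g n‖ ≤ M.factorial * ((4 * N / ρ) ^ (N * M) * B) := by
  have hnN : (n : ℝ) + 1 ≤ N := by exact_mod_cast hn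
  have hN0 : (0 : ℝ) < N := by exact_mod_cast (Nat.zero_le n).trans_lt hn
  have hcard : ((Finset.range N).image ((↑) : ℕ → ℂ)).card = N := by
    rw [Finset.card_image_of_injective _ Nat.cast_injective, Finset.card_range]
  have horder : ∀ a ∈ (Finset.range N).image ((↑) : ℕ → ℂ), M ≤ analyticOrderAt g a := by
    simp only [Finset.forall_mem_image, Finset.mem_range]
    exact fun i hi =>
      (natCast_le_analyticOrderAt_iff_iteratedDeriv_eq_zero (hg.analyticAt _)).2 (hM i hi)
  have hzeros : ∀ a ∈ (Finset.range N).image ((↑) : ℕ → ℂ), ‖a‖ ≤ N := by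
    simp only [Finset.forall_mem_image, Finset.mem_range, Complex.norm_natCast, Nat.cast_le]
    exact fun i hi => hi.le
  have hsphere : ∀ z ∈ Metric.sphere (n : ℂ) 1, ‖g z‖ ≤ (4 * N / ρ) ^ (N * M) * B := by
    intro z hz
    have hzN : ‖z‖ ≤ N := by
      have := norm_le_norm_sub_add z (n : ℂ)
      rw [mem_sphere_iff_norm.1 hz, Complex.norm_natCast] at this
      linarith
    simpa only [hcard] using
      norm_le_of_le_analyticOrderAt hg horder hN0 hzeros hρ hB hzN
  simpa using Complex.norm_iteratedDeriv_le_of_forall_mem_sphere_norm_le M one_pos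
    hg.diffContOnCl hsphere

end SchwarzLemma

section DifferentialOperators

variable {R : Type*} [CommRing R]

theorem aeval_derivative_C (f : R[X]) (c : R) :
    aeval (derivative : Module.End R R[X]) f (C c) = C (f.eval 0 * c) := by
  induction f using Polynomial.induction_on' with
  | add f g hf hg => simp [hf, hg, add_mul]
  | monomial n b =>
    rw [← C_mul_X_pow_eq_monomial, map_mul, Module.End.mul_apply, map_pow, aeval_X, aeval_C,
      Module.algebraMap_end_apply, smul_eq_C_mul, Module.End.pow_apply]
    cases n <;> simp [iterate_derivative_C]

theorem iterate_derivative_natDegree (p : R[X]) :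
    derivative^[p.natDegree] p = C (p.natDegree.factorial * p.leadingCoeff) := by
  rw [eq_C_of_natDegree_le_zero ((natDegree_iterate_derivative p _).trans (by simp)),
    coeff_iterate_derivative]
  simp [Nat.descFactorial_self]

variable {ι : Type*} [DecidableEq ι]

/-- The action of differential operators with constant coefficients on the polynomial factor of an
exponential polynomial: if `P` is the symbol of such an operator, then applying it to the function
`w ↦ p (w o) * exp (∑ j, x j * w j)` replaces `p` by `expDeriv x o P p`. -/
noncomputable def expDeriv (x : ι → R) (o : ι) : MvPolynomial ι R →ₐ[R] Module.End R R[X] :=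
  (aeval (derivative : Module.End R R[X])).comp
    (MvPolynomial.aeval fun j => C (x j) + if j = o then X else 0)

theorem expDeriv_X (x : ι → R) (o j : ι) (p : R[X]) :
    expDeriv x o (MvPolynomial.X j) p = C (x j) * p + if j = o then derivative p else 0 := by
  split_ifs with h <;> simp [expDeriv, h, smul_eq_C_mul]

theorem expDeriv_map {R' : Type*} [CommRing R'] (f : R →+* R') (x : ι → R) (o : ι)
    (P : MvPolynomial ι R) (p : R[X]) :
    (expDeriv x o P p).map f = expDeriv (f ∘ x) o (MvPolynomial.map f P) (p.map f) := by
  induction P using MvPolynomial.induction_on generalizing p with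
  | C a => simp [← MvPolynomial.algebraMap_eq, smul_eq_C_mul]
  | add P Q hP hQ => simp [hP, hQ]
  | mul_X P j hP =>
    rw [map_mul, map_mul, map_mul, Module.End.mul_apply, Module.End.mul_apply, hP, expDeriv_X,
      MvPolynomial.map_X, expDeriv_X]
    split_ifs <;> simp [derivative_map]

theorem expDeriv_aeval_X (x : ι → R) (o : ι) (f : R[X]) :
    expDeriv x o (aeval (MvPolynomial.X o) f) =
      aeval (derivative : Module.End R R[X]) (f.comp (X + C (x o))) := by
  rw [expDeriv, AlgHom.comp_apply, ← aeval_algHom_apply, MvPolynomial.aeval_X, if_pos rfl,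
    add_comm, comp_eq_aeval]

theorem expDeriv_aeval_X_eq_zero {x : ι → R} {o : ι} {A : ℕ} {p f : R[X]} (hp : p.degree < A)
    (hf : (X - C (x o)) ^ A ∣ f) : expDeriv x o (aeval (MvPolynomial.X o) f) p = 0 := by
  obtain ⟨f', rfl⟩ := hf
  rw [expDeriv_aeval_X, mul_comm, mul_comp, map_mul, Module.End.mul_apply]
  simp [Module.End.pow_apply, iterate_derivative_eq_zero_of_degree_lt hp]

theorem expDeriv_aeval_X_mul_X_sub_C_pow_natDegree (x : ι → R) (o : ι) (g p : R[X]) :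
    expDeriv x o (aeval (MvPolynomial.X o) (g * (X - C (x o)) ^ p.natDegree)) p =
      C (g.eval (x o) * (p.natDegree.factorial * p.leadingCoeff)) := by
  have hcomp : ((X - C (x o)) ^ p.natDegree).comp (X + C (x o)) = X ^ p.natDegree := by simp
  rw [expDeriv_aeval_X, mul_comp, map_mul, Module.End.mul_apply, hcomp, map_pow, aeval_X,
    Module.End.pow_apply, iterate_derivative_natDegree, aeval_derivative_C, eval_comp]
  simp

/-- The symbol of the derivative along the vector `v`. -/
noncomputable def dirDeriv [Fintype ι] : (ι → R) →ₗ[R] MvPolynomial ι R :=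
  Fintype.linearCombination R MvPolynomial.X

theorem dirDeriv_single [Fintype ι] (j : ι) :
    dirDeriv (Pi.single j (1 : R)) = MvPolynomial.X j := by
  rw [dirDeriv, Fintype.linearCombination_apply_single, one_smul]

theorem expDeriv_dirDeriv [Fintype ι] (x v : ι → R) (o : ι) (p : R[X]) :
    expDeriv x o (dirDeriv v) p = C (x ⬝ᵥ v) * p + C (v o) * derivative p := by
  simp only [dirDeriv, Fintype.linearCombination_apply, map_sum, map_smul, LinearMap.sum_apply,
    LinearMap.smul_apply, expDeriv_X, smul_add, smul_ite, smul_zero, Finset.sum_add_distrib,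
    Finset.sum_ite_eq', Finset.mem_univ, if_true, dotProduct, Finset.sum_mul, smul_eq_C_mul,
    C_mul]
  congr 1
  exact Finset.sum_congr rfl fun j _ => by ring

variable {I : Type*} [Fintype I]

/-- The value at a point `w` of the function `∑ i, q i (w o) * exp (∑ j, x i j * w j)`, after
applying a differential operator with constant coefficients. The arguments are the `o`-th
coordinate of `w` and the values `θ i` of the exponentials, so that they can be taken in a number
field. -/
noncomputable def expPolyValue (x : I → ι → R) (o : ι) (q : I → R[X]) (w : R) (θ : I → R) :
    MvPolynomial ι R →ₗ[R] R :=
  ∑ i, θ i • leval w ∘ₗ LinearMap.applyₗ (q i) ∘ₗ (expDeriv (x i) o).toLinearMap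

theorem expPolyValue_apply (x : I → ι → R) (o : ι) (q : I → R[X]) (w : R) (θ : I → R)
    (P : MvPolynomial ι R) :
    expPolyValue x o q w θ P = ∑ i, θ i * (expDeriv (x i) o P (q i)).eval w := by
  simp [expPolyValue]

theorem expPolyValue_smul (x : I → ι → R) (o : ι) (q : I → R[X]) (w c : R) (θ : I → R)
    (P : MvPolynomial ι R) :
    expPolyValue x o q w (c • θ) P = c * expPolyValue x o q w θ P := by
  simp only [expPolyValue_apply, Pi.smul_apply, smul_eq_mul, Finset.mul_sum, mul_assoc]

theorem expPolyValue_map {R' : Type*} [CommRing R'] (f : R →+* R') (x : I → ι → R) (o : ι)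
    (q : I → R[X]) (w : R) (θ : I → R) (P : MvPolynomial ι R) :
    f (expPolyValue x o q w θ P) = expPolyValue (fun i => f ∘ x i) o (fun i => (q i).map f) (f w)
      (f ∘ θ) (MvPolynomial.map f P) := by
  simp only [expPolyValue_apply, map_sum, map_mul, ← expDeriv_map, eval_map_apply,
    Function.comp_apply]

theorem exists_expPolyValue_X_pow_ne_zero [IsDomain R] [CharZero R] (x : I → ι → R) (o : ι)
    (hx : Function.Injective fun i => x i o) {q : I → R[X]} (hq : q ≠ 0) (w : R) {θ : I → R}
    (hθ : ∀ i, θ i ≠ 0) : ∃ k, expPolyValue x o q w θ (MvPolynomial.X o ^ k) ≠ 0 := by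
  classical
  by_contra! hvanish
  have hvanish_aeval (f : R[X]) :
      expPolyValue x o q w θ (aeval (MvPolynomial.X o) f) = 0 := by
    simp only [aeval_eq_sum_range, map_sum, map_smul, hvanish, smul_zero, Finset.sum_const_zero]
  obtain ⟨i₀, hi₀ : q i₀ ≠ 0⟩ := Function.ne_iff.1 hq
  set A := Finset.univ.sup (fun i => (q i).natDegree + 1)
  -- Multiplied by `(X - C (x i₀ o)) ^ (q i₀).natDegree`, this gives an operator which annihilates
  -- every term except the `i₀`-th, which it turns into a constant.
  set g : R[X] := ∏ i ∈ Finset.univ.erase i₀, (X - C (x i o)) ^ A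
  have hother (i : I) (hi : i ≠ i₀) : expDeriv (x i) o
      (aeval (MvPolynomial.X o) (g * (X - C (x i₀ o)) ^ (q i₀).natDegree)) (q i) = 0 := by
    refine expDeriv_aeval_X_eq_zero ?_ <|
      (Finset.dvd_prod_of_mem _ (Finset.mem_erase.2 ⟨hi, Finset.mem_univ i⟩)).mul_right _
    exact degree_le_natDegree.trans_lt <| by
      exact_mod_cast (Finset.le_sup (f := fun i => (q i).natDegree + 1) (Finset.mem_univ i))
  have hvalue := hvanish_aeval (g * (X - C (x i₀ o)) ^ (q i₀).natDegree)
  rw [expPolyValue_apply, Finset.sum_eq_single_of_mem i₀ (Finset.mem_univ _)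
    fun i _ hi => by rw [hother i hi, eval_zero, mul_zero],
    expDeriv_aeval_X_mul_X_sub_C_pow_natDegree, eval_C] at hvalue
  have hg : g.eval (x i₀ o) ≠ 0 := by
    simp only [g, eval_prod, eval_pow, eval_sub, eval_X, eval_C]
    exact Finset.prod_ne_zero_iff.2 fun i hi => pow_ne_zero _ <| sub_ne_zero.2 <|
      hx.ne (Finset.ne_of_mem_erase hi).symm
  exact mul_ne_zero (hθ i₀) (mul_ne_zero hg <| mul_ne_zero
    (Nat.cast_ne_zero.2 (Nat.factorial_ne_zero _)) (leadingCoeff_ne_zero.2 hi₀)) hvalue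

end DifferentialOperators

section CoefficientBounds

variable {R : Type*} [NormedCommRing R]

/-- The polynomials of degree less than `A` whose coefficients have norm at most `B`. -/
structure CoeffBound (A : ℕ) (B : ℝ) (p : R[X]) : Prop where
  degree_lt : p.degree < A
  norm_coeff_le : ∀ k, ‖p.coeff k‖ ≤ B

namespace CoeffBound

variable {A : ℕ} {B : ℝ} {p : R[X]}

theorem nonneg (hp : CoeffBound A B p) : 0 ≤ B :=
  (norm_nonneg _).trans (hp.norm_coeff_le 0)

theorem add {B' : ℝ} {p' : R[X]} (hp : CoeffBound A B p) (hp' : CoeffBound A B' p') :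
    CoeffBound A (B + B') (p + p') where
  degree_lt := (degree_add_le _ _).trans_lt (max_lt hp.degree_lt hp'.degree_lt)
  norm_coeff_le k := by
    rw [coeff_add]
    exact norm_add_le_of_le (hp.norm_coeff_le k) (hp'.norm_coeff_le k)

theorem C_mul (hp : CoeffBound A B p) {c : R} {a : ℝ} (hc : ‖c‖ ≤ a) :
    CoeffBound A (a * B) (C c * p) where
  degree_lt := by
    rw [← smul_eq_C_mul]
    exact (degree_smul_le _ _).trans_lt hp.degree_lt
  norm_coeff_le k := by
    rw [coeff_C_mul]
    exact norm_mul_le_of_le hc (hp.norm_coeff_le k)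

theorem mono {B' : ℝ} (hp : CoeffBound A B p) (hB : B ≤ B') : CoeffBound A B' p :=
  ⟨hp.degree_lt, fun k => (hp.norm_coeff_le k).trans hB⟩

variable [NormOneClass R]

theorem X_pow {k : ℕ} (hk : k < A) : CoeffBound A 1 (X ^ k : R[X]) where
  degree_lt := (degree_X_pow_le k).trans_lt (by exact_mod_cast hk)
  norm_coeff_le j := by
    rw [coeff_X_pow]
    split_ifs <;> simp

theorem derivative (hp : CoeffBound A B p) : CoeffBound A (A * B) (Polynomial.derivative p) where
  degree_lt := degree_derivative_le.trans_lt hp.degree_lt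
  norm_coeff_le k := by
    have hB := hp.nonneg
    rw [coeff_derivative, ← Nat.cast_succ, mul_comm]
    rcases lt_or_ge k.succ A with hk | hk
    · refine norm_mul_le_of_le ((Nat.norm_cast_le _).trans ?_) (hp.norm_coeff_le _)
      rw [norm_one, mul_one]
      exact_mod_cast hk.le
    · rw [coeff_eq_zero_of_degree_lt (hp.degree_lt.trans_le (by exact_mod_cast hk)), mul_zero,
        norm_zero]
      positivity

theorem norm_eval_le (hp : CoeffBound A B p) {w : R} {W : ℝ} (hW : 1 ≤ W) (hw : ‖w‖ ≤ W) :
    ‖p.eval w‖ ≤ A * (B * W ^ A) := by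
  have heval : p.eval w = ∑ k ∈ Finset.range A, p.coeff k * w ^ k := by
    rcases eq_or_ne p 0 with rfl | hp0
    · simp
    · exact eval_eq_sum_range' ((natDegree_lt_iff_degree_lt hp0).2 hp.degree_lt) w
  rw [heval, ← nsmul_eq_mul]
  refine (norm_sum_le_of_le _ fun k hk => norm_mul_le_of_le (hp.norm_coeff_le k) ?_).trans_eq
    (by rw [Finset.sum_const, Finset.card_range])
  calc ‖w ^ k‖ ≤ W ^ k := (norm_pow_le w k).trans (by gcongr)
    _ ≤ W ^ A := pow_le_pow_right₀ hW (Finset.mem_range.1 hk).le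

variable {ι : Type*} [Fintype ι] [DecidableEq ι] {o : ι}

theorem expDeriv_dirDeriv (hp : CoeffBound A B p) {x v : ι → R} {G : ℝ}
    (hG : ‖x ⬝ᵥ v‖ + ‖v o‖ * A ≤ G) : CoeffBound A (G * B) (expDeriv x o (dirDeriv v) p) := by
  rw [_root_.expDeriv_dirDeriv]
  refine ((hp.C_mul le_rfl).add (hp.derivative.C_mul le_rfl)).mono ?_
  rw [← mul_assoc, ← add_mul]
  exact mul_le_mul_of_nonneg_right hG hp.nonneg

theorem expDeriv_prod (hp : CoeffBound A B p) {x : ι → R} {α : Type*} {s : Finset α}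
    {u : α → ι → R} {G : ℝ} (hG : ∀ k ∈ s, ‖x ⬝ᵥ u k‖ + ‖u k o‖ * A ≤ G) :
    CoeffBound A (G ^ s.card * B) (expDeriv x o (∏ k ∈ s, dirDeriv (u k)) p) := by
  classical
  induction s using Finset.induction_on with
  | empty => simpa using hp
  | insert a s ha ih =>
    rw [Finset.prod_insert ha, map_mul, Module.End.mul_apply, Finset.card_insert_of_notMem ha,
      pow_succ', mul_assoc]
    exact (ih fun k hk => hG k (Finset.mem_insert_of_mem hk)).expDeriv_dirDeriv
      (hG a (Finset.mem_insert_self a s))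

end CoeffBound

theorem norm_dotProduct_le_of_le {ι : Type*} [Fintype ι] {x v : ι → R} {a b : ℝ}
    (hx : ∀ j, ‖x j‖ ≤ a) (hv : ∀ j, ‖v j‖ ≤ b) : ‖x ⬝ᵥ v‖ ≤ Fintype.card ι * (a * b) := by
  rw [← nsmul_eq_mul, ← Finset.card_univ, ← Finset.sum_const]
  exact norm_sum_le_of_le _ fun j _ => norm_mul_le_of_le (hx j) (hv j)

theorem norm_expPolyValue_prod_le [NormOneClass R] {ι : Type*} [Fintype ι] [DecidableEq ι]
    {I : Type*} [Fintype I] {x : I → ι → R} {o : ι} {q : I → R[X]} {A : ℕ} {B : ℝ}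
    (hq : ∀ i, CoeffBound A B (q i)) {α : Type*} {s : Finset α} {u : α → ι → R} {G : ℝ}
    (hG : ∀ i, ∀ k ∈ s, ‖x i ⬝ᵥ u k‖ + ‖u k o‖ * A ≤ G) {w : R} {W : ℝ} (hW : 1 ≤ W)
    (hw : ‖w‖ ≤ W) {θ : I → R} {Z : ℝ} (hθ : ∀ i, ‖θ i‖ ≤ Z) :
    ‖expPolyValue x o q w θ (∏ k ∈ s, dirDeriv (u k))‖ ≤
      Fintype.card I * (Z * (A * (G ^ s.card * B * W ^ A))) := by
  rw [expPolyValue_apply, ← nsmul_eq_mul, ← Finset.card_univ, ← Finset.sum_const]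
  exact norm_sum_le_of_le _ fun i _ =>
    norm_mul_le_of_le (hθ i) (((hq i).expDeriv_prod (hG i)).norm_eval_le hW hw)

end CoefficientBounds

section LatticePoints

variable {κ E : Type*} [Fintype κ]

/-- The point with coordinates `n` in the lattice generated by the family `u`. -/
def latticePoint [AddCommMonoid E] (u : κ → E) (n : κ → ℕ) : E :=
  ∑ k, n k • u k

theorem latticePoint_apply {ι R : Type*} [AddCommMonoid R] (u : κ → ι → R) (n : κ → ℕ) (j : ι) :
    latticePoint u n j = latticePoint (fun k => u k j) n := by
  simp only [latticePoint, Finset.sum_apply, Pi.smul_apply]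

theorem map_latticePoint {F E' : Type*} [AddCommMonoid E] [AddCommMonoid E'] [FunLike F E E']
    [AddMonoidHomClass F E E'] (f : F) (u : κ → E) (n : κ → ℕ) :
    f (latticePoint u n) = latticePoint (f ∘ u) n := by
  simp only [latticePoint, map_sum, map_nsmul, Function.comp_apply]

theorem latticePoint_update [DecidableEq κ] [AddCommMonoid E] (u : κ → E) (n : κ → ℕ) (l : κ)
    (i : ℕ) : latticePoint u (Function.update n l i) =
      latticePoint u (Function.update n l 0) + i • u l := by
  simp only [latticePoint, ← Finset.add_sum_erase _ _ (Finset.mem_univ l), Function.update_self,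
    zero_smul, zero_add]
  rw [add_comm]
  congr 1
  refine Finset.sum_congr rfl fun k hk => ?_
  simp only [Function.update_of_ne (Finset.ne_of_mem_erase hk)]

theorem latticePoint_dotProduct_latticePoint {κ' ι R : Type*} [Fintype κ'] [Fintype ι]
    [CommSemiring R] (x : κ → ι → R) (v : κ' → ι → R) (i : κ → ℕ) (n : κ' → ℕ) :
    latticePoint x i ⬝ᵥ latticePoint v n = ∑ k, ∑ l, (i k * n l : ℕ) * (x k ⬝ᵥ v l) := by
  simp only [latticePoint, sum_dotProduct, dotProduct_sum, smul_dotProduct, dotProduct_smul]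
  rw [Finset.sum_comm]
  simp only [nsmul_eq_mul, Nat.cast_mul, Finset.mul_sum, mul_assoc, mul_left_comm]

theorem norm_latticePoint_le [SeminormedAddCommGroup E] {u : κ → E} {H : ℝ} (hu : ∀ k, ‖u k‖ ≤ H)
    {n : κ → ℕ} {N : ℕ} (hn : ∀ k, n k ≤ N) :
    ‖latticePoint u n‖ ≤ Fintype.card κ * (N * H) := by
  rw [← nsmul_eq_mul, ← Finset.card_univ, ← Finset.sum_const]
  refine norm_sum_le_of_le _ fun k _ => norm_nsmul_le.trans ?_
  gcongr
  exacts [hn k, hu k]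

end LatticePoints

section ExponentialPolynomials

variable {I ι : Type*} [Fintype I] [Fintype ι] [DecidableEq ι]

/-- The function `w ↦ ∑ i, q i (w o) * exp (x i ⬝ᵥ w)`, after applying the differential operator
with symbol `P`. -/
noncomputable def expPoly (x : I → ι → ℂ) (o : ι) (q : I → ℂ[X]) (P : MvPolynomial ι ℂ)
    (w : ι → ℂ) : ℂ :=
  expPolyValue x o q (w o) (fun i => Complex.exp (x i ⬝ᵥ w)) P

variable (x : I → ι → ℂ) (o : ι) (q : I → ℂ[X]) (P : MvPolynomial ι ℂ)

theorem hasDerivAt_expPoly (w v : ι → ℂ) (z : ℂ) :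
    HasDerivAt (fun z : ℂ => expPoly x o q P (w + z • v))
      (expPoly x o q (P * dirDeriv v) (w + z • v)) z := by
  simp only [expPoly, expPolyValue_apply, mul_comm P, map_mul, Module.End.mul_apply,
    expDeriv_dirDeriv]
  refine HasDerivAt.fun_sum fun i _ => ?_
  have hline : HasDerivAt (fun z : ℂ => w o + z * v o) (v o) z := by
    simpa using ((hasDerivAt_id z).mul_const (v o)).const_add (w o)
  have hexp : HasDerivAt (fun z : ℂ => x i ⬝ᵥ (w + z • v)) (x i ⬝ᵥ v) z := by
    simp only [dotProduct_add, dotProduct_smul, smul_eq_mul]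
    simpa using ((hasDerivAt_id z).mul_const (x i ⬝ᵥ v)).const_add (x i ⬝ᵥ w)
  have hpoly := ((expDeriv (x i) o P (q i)).hasDerivAt (w o + z * v o)).comp z hline
  refine (hexp.cexp.mul hpoly).congr_deriv ?_
  simp only [Pi.add_apply, Pi.smul_apply, smul_eq_mul, eval_add, eval_mul, eval_C,
    Function.comp_apply]
  ring

theorem iteratedDeriv_expPoly (w v : ι → ℂ) (k : ℕ) :
    iteratedDeriv k (fun z : ℂ => expPoly x o q P (w + z • v)) =
      fun z => expPoly x o q (P * dirDeriv v ^ k) (w + z • v) := by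
  induction k with
  | zero => simp
  | succ k ih =>
    funext z
    rw [iteratedDeriv_succ, ih, (hasDerivAt_expPoly x o q _ w v z).deriv, pow_succ, mul_assoc]

end ExponentialPolynomials

section Extrapolation

theorem totalDegree_dirDeriv_le {R ι : Type*} [CommRing R] [Fintype ι] (v : ι → R) :
    (dirDeriv v).totalDegree ≤ 1 := by
  rw [dirDeriv, Fintype.linearCombination_apply]
  refine MvPolynomial.totalDegree_finsetSum_le fun j _ => ?_
  refine (MvPolynomial.totalDegree_smul_le _ _).trans ?_
  exact (MvPolynomial.totalDegree_monomial_le _ _).trans (by simp)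

theorem totalDegree_prod_dirDeriv_le {R ι α : Type*} [CommRing R] [Fintype ι] (s : Finset α)
    (v : α → ι → R) : (∏ k ∈ s, dirDeriv (v k)).totalDegree ≤ s.card := by
  refine (MvPolynomial.totalDegree_finsetProd s _).trans ?_
  simpa using Finset.sum_le_card_nsmul s _ 1 fun k _ => totalDegree_dirDeriv_le (v k)

theorem map_prod_sum_smul {R A V α ι : Type*} [CommRing R] [CommRing A] [Algebra R A]
    [AddCommGroup V] [Module R V] [Fintype α] [DecidableEq α] [Fintype ι] (f : A →ₗ[R] V)
    (c : α → ι → R) (e : ι → A) :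
    f (∏ k, ∑ l, c k l • e l) = ∑ u : α → ι, (∏ k, c k (u k)) • f (∏ k, e (u k)) := by
  simp only [Finset.prod_univ_sum, Fintype.piFinset_univ, map_sum, Finset.prod_smul, map_smul]

variable {I ι : Type*} [Fintype I] [Fintype ι] [DecidableEq ι] {x : I → ι → ℂ} {o : ι}
  {q : I → ℂ[X]} {v : ι → ι → ℂ} {N N' : ℕ}

theorem norm_expPoly_mul_dirDeriv_pow_le {P : MvPolynomial ι ℂ} {M : ℕ} {l : ι}
    (hvan : ∀ k < M, ∀ n : ι → ℕ, (∀ l, n l < N) →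
      expPoly x o q (P * dirDeriv (v l) ^ k) (latticePoint v n) = 0)
    {ρ S : ℝ} (hρ : 2 * N ≤ ρ)
    (hS : ∀ n : ι → ℕ, (∀ l, n l < N) → ∀ z : ℂ, ‖z‖ = ρ →
      ‖expPoly x o q P (latticePoint v n + z • v l)‖ ≤ S)
    {n : ι → ℕ} (hn : ∀ l, n l < N) :
    ‖expPoly x o q (P * dirDeriv (v l) ^ M) (latticePoint v n)‖ ≤
      M.factorial * ((4 * N / ρ) ^ (N * M) * S) := by
  set g : ℂ → ℂ := fun z => expPoly x o q P (latticePoint v (Function.update n l 0) + z • v l)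
  have hgrid (i : ℕ) (hi : i < N) (l' : ι) : Function.update n l i l' < N := by
    rcases eq_or_ne l' l with rfl | h
    · simpa using hi
    · simpa only [Function.update_of_ne h] using hn l'
  have hderiv (k i : ℕ) : iteratedDeriv k g i =
      expPoly x o q (P * dirDeriv (v l) ^ k) (latticePoint v (Function.update n l i)) := by
    rw [iteratedDeriv_expPoly, latticePoint_update _ _ _ i]
    simp only [Nat.cast_smul_eq_nsmul]
  have hzero (i : ℕ) (hi : i < N) (k : ℕ) (hk : k < M) : iteratedDeriv k g i = 0 := by
    rw [hderiv, hvan k hk _ (hgrid i hi)]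
  have hschwarz := norm_iteratedDeriv_natCast_le
    (fun z => (hasDerivAt_expPoly x o q _ _ (v l) z).differentiableAt) hzero hρ
    (hS _ (hgrid 0 ((Nat.zero_le _).trans_lt (hn l)))) (hn l)
  rwa [hderiv, Function.update_eq_self] at hschwarz

variable {α : Type*} [Fintype α]

/-- One of the directions occurs in the operator at least `card α / card ι` times. The Schwarz
lemma is applied along the lines in this direction. -/
theorem norm_expPoly_prod_dirDeriv_basis_le [Nonempty ι] (hN : N = Fintype.card ι * N')
    (hvan : ∀ P : MvPolynomial ι ℂ, P.totalDegree < Fintype.card α →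
      ∀ n : ι → ℕ, (∀ l, n l < N) → expPoly x o q P (latticePoint v n) = 0)
    {u : α → ι} {ρ S : ℝ} (hρ : 4 * N ≤ ρ)
    (hS : ∀ s : Finset α, ∀ n : ι → ℕ, (∀ l, n l < N) → ∀ l, ∀ z : ℂ, ‖z‖ = ρ →
      ‖expPoly x o q (∏ k ∈ s, dirDeriv (v (u k))) (latticePoint v n + z • v l)‖ ≤ S)
    {n : ι → ℕ} (hn : ∀ l, n l < N) :
    ‖expPoly x o q (∏ k, dirDeriv (v (u k))) (latticePoint v n)‖ ≤
      (Fintype.card α).factorial * ((4 * N / ρ) ^ (N' * Fintype.card α) * S) := by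
  classical
  have hcard : (0 : ℝ) < Fintype.card ι := by exact_mod_cast Fintype.card_pos
  obtain ⟨l, hl⟩ := Fintype.exists_le_card_fiber_of_nsmul_le_card u
    (b := (Fintype.card α / Fintype.card ι : ℝ)) (by rw [nsmul_eq_mul]; field_simp; rfl)
  set M := (Finset.univ.filter fun k => u k = l).card
  set s := Finset.univ.filter fun k => ¬u k = l
  have hMs : M + s.card = Fintype.card α := Finset.card_filter_add_card_filter_not _
  have hM : Fintype.card α ≤ Fintype.card ι * M := by
    rw [div_le_iff₀' hcard] at hl
    exact_mod_cast hl
  have hN0 : (0 : ℝ) < N := by exact_mod_cast (Nat.zero_le _).trans_lt (hn l)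
  have hρ0 : 0 < ρ := by linarith
  have hword : (∏ k ∈ s, dirDeriv (v (u k))) * dirDeriv (v l) ^ M = ∏ k, dirDeriv (v (u k)) := by
    rw [← Finset.prod_filter_mul_prod_filter_not Finset.univ (fun k => u k = l), mul_comm,
      ← Finset.prod_const]
    exact congrArg (· * _) (Finset.prod_congr rfl fun k hk => by rw [(Finset.mem_filter.1 hk).2])
  have hdeg (k : ℕ) (hk : k < M) :
      ((∏ k ∈ s, dirDeriv (v (u k))) * dirDeriv (v l) ^ k).totalDegree < Fintype.card α := by
    have hmul := MvPolynomial.totalDegree_mul (∏ k ∈ s, dirDeriv (v (u k))) (dirDeriv (v l) ^ k)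
    have hpow := (MvPolynomial.totalDegree_pow (dirDeriv (v l)) k).trans
      (Nat.mul_le_mul_left k (totalDegree_dirDeriv_le (v l)))
    have hprod := totalDegree_prod_dirDeriv_le s fun k => v (u k)
    omega
  have hschwarz := norm_expPoly_mul_dirDeriv_pow_le (fun k hk => hvan _ (hdeg k hk))
    (by linarith) (fun n hn => hS s n hn l) hn
  rw [hword] at hschwarz
  have hS0 : 0 ≤ S := (norm_nonneg _).trans <| hS s n hn l ρ <| by
    rw [Complex.norm_real, Real.norm_of_nonneg hρ0.le]
  have hfac : M.factorial ≤ (Fintype.card α).factorial := Nat.factorial_le (by omega)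
  have hpow : (4 * N / ρ) ^ (N * M) ≤ (4 * N / ρ) ^ (N' * Fintype.card α) := by
    refine pow_le_pow_of_le_one (by positivity) (div_le_one_of_le₀ hρ hρ0.le) ?_
    rw [hN, mul_comm (Fintype.card ι), mul_assoc]
    exact Nat.mul_le_mul_left N' hM
  exact hschwarz.trans (by gcongr)

theorem norm_expPoly_prod_dirDeriv_le [Nonempty ι] (hN : N = Fintype.card ι * N')
    (hvan : ∀ P : MvPolynomial ι ℂ, P.totalDegree < Fintype.card α →
      ∀ n : ι → ℕ, (∀ l, n l < N) → expPoly x o q P (latticePoint v n) = 0)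
    {ρ S : ℝ} (hρ : 4 * N ≤ ρ)
    (hS : ∀ (u : α → ι) (s : Finset α) (n : ι → ℕ), (∀ l, n l < N) → ∀ l, ∀ z : ℂ, ‖z‖ = ρ →
      ‖expPoly x o q (∏ k ∈ s, dirDeriv (v (u k))) (latticePoint v n + z • v l)‖ ≤ S)
    {c : α → ι → ℂ} {C : ℝ} (hC : ∀ k, ∑ l, ‖c k l‖ ≤ C) {n : ι → ℕ} (hn : ∀ l, n l < N) :
    ‖expPoly x o q (∏ k, dirDeriv (∑ l, c k l • v l)) (latticePoint v n)‖ ≤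
      C ^ Fintype.card α *
        ((Fintype.card α).factorial * ((4 * N / ρ) ^ (N' * Fintype.card α) * S)) := by
  classical
  set ε := (Fintype.card α).factorial * ((4 * N / ρ) ^ (N' * Fintype.card α) * S)
  have hbasis (u : α → ι) :
      ‖expPoly x o q (∏ k, dirDeriv (v (u k))) (latticePoint v n)‖ ≤ ε :=
    norm_expPoly_prod_dirDeriv_basis_le hN hvan hρ (hS u) hn
  have hε : 0 ≤ ε := (norm_nonneg _).trans (hbasis fun _ => Classical.arbitrary ι)
  calc ‖expPoly x o q (∏ k, dirDeriv (∑ l, c k l • v l)) (latticePoint v n)‖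
      ≤ ∑ u : α → ι, (∏ k, ‖c k (u k)‖) * ε := by
        simp only [map_sum, map_smul, expPoly, map_prod_sum_smul]
        refine norm_sum_le_of_le _ fun u _ => ?_
        rw [norm_smul, norm_prod]
        exact mul_le_mul_of_nonneg_left (hbasis u) (by positivity)
    _ = (∏ k, ∑ l, ‖c k l‖) * ε := by
        rw [Finset.prod_univ_sum, Fintype.piFinset_univ, Finset.sum_mul]
    _ ≤ C ^ Fintype.card α * ε := by
        rw [← Finset.card_univ, ← Finset.prod_const]
        gcongr with k
        exact hC k

end Extrapolation

section ExpLattices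

/-- The data from which the values of an exponential polynomial with frequencies in a lattice can
be computed at the points of another lattice, in any ring containing them: generators `freq k` of
the lattice of frequencies, the `pivot`-th coordinates `coord l` of generators `v l` of the lattice
of points, and the numbers `expo k l = denom * exp (freq k ⬝ᵥ v l)` with their common
denominator. -/
structure ExpLattice (ι R : Type*) where
  pivot : ι
  freq : ι → ι → R
  coord : ι → R
  expo : ι → ι → R
  denom : R

namespace ExpLattice

variable {ι R : Type*} [Fintype ι]

section CommRing

variable [CommRing R] (D : ExpLattice ι R)

/-- The number `denom ^ ((card ι) ^ 2 * (M * N)) * exp (∑ k, ∑ l, i k * n l * (freq k ⬝ᵥ v l))`. -/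
def clearedExp (M N : ℕ) (i n : ι → ℕ) : R :=
  ∏ k, ∏ l, D.expo k l ^ (i k * n l) * D.denom ^ (M * N - i k * n l)

/-- The value at the lattice point with coordinates `n` of the exponential polynomial with
frequencies in a box of side `M` and coefficients `q`, after applying a differential operator and
multiplying by a power of the denominator which suffices for `n` in a box of side `N`. -/
noncomputable def value [DecidableEq ι] (M N : ℕ) (q : (ι → Fin M) → R[X]) (n : ι → ℕ) :
    MvPolynomial ι R →ₗ[R] R :=
  expPolyValue (fun i : ι → Fin M => latticePoint D.freq fun k => i k) D.pivot q
    (latticePoint D.coord n) fun i => D.clearedExp M N (fun k => i k) n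

/-- The image of the data under a ring homomorphism. -/
def map {R' : Type*} [CommRing R'] (f : R →+* R') : ExpLattice ι R' where
  pivot := D.pivot
  freq k := f ∘ D.freq k
  coord := f ∘ D.coord
  expo k := f ∘ D.expo k
  denom := f D.denom

theorem map_clearedExp {R' : Type*} [CommRing R'] (f : R →+* R') (M N : ℕ) (i n : ι → ℕ) :
    f (D.clearedExp M N i n) = (D.map f).clearedExp M N i n := by
  simp only [clearedExp, map, map_prod, map_mul, map_pow, Function.comp_apply]

theorem map_value [DecidableEq ι] {R' : Type*} [CommRing R'] (f : R →+* R') (M N : ℕ)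
    (q : (ι → Fin M) → R[X]) (n : ι → ℕ) (P : MvPolynomial ι R) :
    f (D.value M N q n P) =
      (D.map f).value M N (fun i => (q i).map f) n (MvPolynomial.map f P) := by
  have hfreq (i : ι → ℕ) : f ∘ latticePoint D.freq i = latticePoint (D.map f).freq i := by
    ext j
    simp [latticePoint, map]
  simp only [value, expPolyValue_map, map_latticePoint, hfreq, Function.comp_def, map_clearedExp]
  rfl

theorem clearedExp_ne_zero [IsDomain R] (hexpo : ∀ k l, D.expo k l ≠ 0) (hdenom : D.denom ≠ 0)
    (M N : ℕ) (i n : ι → ℕ) : D.clearedExp M N i n ≠ 0 :=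
  Finset.prod_ne_zero_iff.2 fun k _ => Finset.prod_ne_zero_iff.2 fun l _ =>
    mul_ne_zero (pow_ne_zero _ (hexpo k l)) (pow_ne_zero _ hdenom)

theorem injective_latticePoint_freq (hfreq : LinearIndependent ℤ fun k => D.freq k D.pivot)
    (M : ℕ) : Function.Injective fun i : ι → Fin M =>
      latticePoint D.freq (fun k => i k) D.pivot := by
  intro i i' h
  have hsub : ∑ k, ((i k : ℤ) - i' k) • D.freq k D.pivot = 0 := by
    simpa [latticePoint, sub_mul, sub_eq_zero] using h
  funext k
  have hk := Fintype.linearIndependent_iff.1 hfreq _ hsub k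
  exact Fin.ext (by omega)

theorem exists_value_ne_zero [DecidableEq ι] [IsDomain R] [CharZero R]
    (hfreq : LinearIndependent ℤ fun k => D.freq k D.pivot) (hexpo : ∀ k l, D.expo k l ≠ 0)
    (hdenom : D.denom ≠ 0) (M N : ℕ) {q : (ι → Fin M) → R[X]} (hq : q ≠ 0) (n : ι → ℕ) :
    ∃ P, D.value M N q n P ≠ 0 :=
  let ⟨_, hk⟩ := exists_expPolyValue_X_pow_ne_zero _ _ (D.injective_latticePoint_freq hfreq M) hq
    _ fun _ => D.clearedExp_ne_zero hexpo hdenom M N _ n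
  ⟨_, hk⟩

end CommRing

section Norm

variable [NormedCommRing R] {D : ExpLattice ι R} {H : ℝ}

/-- All the numbers of which the data consist have norm at most `H`. -/
structure Bounded (D : ExpLattice ι R) (H : ℝ) : Prop where
  freq : ∀ k j, ‖D.freq k j‖ ≤ H
  coord : ∀ l, ‖D.coord l‖ ≤ H
  expo : ∀ k l, ‖D.expo k l‖ ≤ H
  denom : ‖D.denom‖ ≤ H

theorem Bounded.norm_latticePoint_freq_le (hD : D.Bounded H) {M : ℕ} (i : ι → Fin M) (j : ι) :
    ‖latticePoint D.freq (fun k => i k) j‖ ≤ Fintype.card ι * (M * H) := by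
  rw [latticePoint_apply]
  exact norm_latticePoint_le (fun k => hD.freq k j) fun k => (i k).2.le

variable [NormOneClass R]

theorem Bounded.norm_clearedExp_le (hD : D.Bounded H) {M N : ℕ} {i n : ι → ℕ}
    (hi : ∀ k, i k ≤ M) (hn : ∀ l, n l ≤ N) :
    ‖D.clearedExp M N i n‖ ≤ H ^ (Fintype.card ι ^ 2 * (M * N)) := by
  have hfactor (k l : ι) :
      ‖D.expo k l ^ (i k * n l) * D.denom ^ (M * N - i k * n l)‖ ≤ H ^ (M * N) := by
    rw [← Nat.add_sub_cancel' (Nat.mul_le_mul (hi k) (hn l)), pow_add, Nat.add_sub_cancel_left]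
    exact norm_mul_le_of_le
      ((norm_pow_le _ _).trans (pow_le_pow_left₀ (norm_nonneg _) (hD.expo k l) _))
      ((norm_pow_le _ _).trans (pow_le_pow_left₀ (norm_nonneg _) hD.denom _))
  calc ‖D.clearedExp M N i n‖
      ≤ ∏ k, ∏ l, ‖D.expo k l ^ (i k * n l) * D.denom ^ (M * N - i k * n l)‖ :=
        (Finset.norm_prod_le _ _).trans
          (Finset.prod_le_prod (fun _ _ => norm_nonneg _) fun _ _ => Finset.norm_prod_le _ _)
    _ ≤ ∏ _k : ι, ∏ _l : ι, H ^ (M * N) := by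
        gcongr with k _ l
        exact hfactor k l
    _ = H ^ (Fintype.card ι ^ 2 * (M * N)) := by
        simp only [Finset.prod_const, Finset.card_univ, ← pow_mul]
        congr 1
        ring

theorem Bounded.norm_value_prod_X_le [DecidableEq ι] (hD : D.Bounded H) (hH : 1 ≤ H) {M N A : ℕ}
    (hN : 1 ≤ N) {B : ℝ} {q : (ι → Fin M) → R[X]} (hq : ∀ i, CoeffBound A B (q i)) {n : ι → ℕ}
    (hn : ∀ l, n l ≤ N) {α : Type*} [Fintype α] (u : α → ι) :
    ‖D.value M N q n (∏ k, MvPolynomial.X (u k))‖ ≤ M ^ Fintype.card ι *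
      (H ^ (Fintype.card ι ^ 2 * (M * N)) * (A * ((Fintype.card ι * (M * H) + A) ^ Fintype.card α *
        B * (Fintype.card ι * (N * H)) ^ A))) := by
  have hcard : 1 ≤ Fintype.card ι := Fintype.card_pos_iff.2 ⟨D.pivot⟩
  have hbound := norm_expPolyValue_prod_le hq (s := Finset.univ)
    (u := fun k => Pi.single (u k) (1 : R)) (G := Fintype.card ι * (M * H) + A)
    (x := fun i : ι → Fin M => latticePoint D.freq fun k => i k) (o := D.pivot)
    (fun i k _ => ?_) (W := Fintype.card ι * (N * H)) ?_
    (norm_latticePoint_le hD.coord hn)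
    (fun i => hD.norm_clearedExp_le (fun k => (i k).2.le) hn)
  · simpa [value, dirDeriv_single] using hbound
  · rw [dotProduct_single_one]
    refine add_le_add (hD.norm_latticePoint_freq_le i _)
      (mul_le_of_le_one_left (Nat.cast_nonneg _) ?_)
    rw [Pi.single_apply]
    split_ifs <;> simp
  · exact one_le_mul_of_one_le_of_one_le (by exact_mod_cast hcard)
      (one_le_mul_of_one_le_of_one_le (by exact_mod_cast hN) hH)

end Norm

section Complex

variable {D : ExpLattice ι ℂ} {v : ι → ι → ℂ}

/-- The points of the lattice, of which `D` only records the `pivot`-th coordinates, are generated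
by `v`. -/
structure HasPoints (D : ExpLattice ι ℂ) (v : ι → ι → ℂ) : Prop where
  coord : ∀ l, D.coord l = v l D.pivot
  expo : ∀ k l, D.expo k l = D.denom * Complex.exp (D.freq k ⬝ᵥ v l)

theorem HasPoints.clearedExp (hv : D.HasPoints v) {M N : ℕ} {i n : ι → ℕ} (hi : ∀ k, i k ≤ M)
    (hn : ∀ l, n l ≤ N) : D.clearedExp M N i n = D.denom ^ (Fintype.card ι ^ 2 * (M * N)) *
      Complex.exp (latticePoint D.freq i ⬝ᵥ latticePoint v n) := by
  have hfactor (k l : ι) : D.expo k l ^ (i k * n l) * D.denom ^ (M * N - i k * n l) =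
      D.denom ^ (M * N) * Complex.exp ((i k * n l : ℕ) * (D.freq k ⬝ᵥ v l)) := by
    rw [hv.expo, mul_pow, mul_right_comm, ← pow_add,
      Nat.add_sub_cancel' (Nat.mul_le_mul (hi k) (hn l)), Complex.exp_nat_mul]
  simp only [ExpLattice.clearedExp, hfactor, latticePoint_dotProduct_latticePoint, Complex.exp_sum,
    Finset.prod_mul_distrib, Finset.prod_const, Finset.card_univ, ← pow_mul]
  congr 2
  ring

theorem HasPoints.value [DecidableEq ι] (hv : D.HasPoints v) {M N : ℕ} (q : (ι → Fin M) → ℂ[X])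
    {n : ι → ℕ} (hn : ∀ l, n l ≤ N) (P : MvPolynomial ι ℂ) :
    D.value M N q n P = D.denom ^ (Fintype.card ι ^ 2 * (M * N)) *
      expPoly (fun i : ι → Fin M => latticePoint D.freq fun k => i k) D.pivot q P
        (latticePoint v n) := by
  rw [expPoly, ← expPolyValue_smul, ExpLattice.value, latticePoint_apply]
  congr 1
  rw [show D.coord = fun l => v l D.pivot from funext hv.coord]
  congr 1
  exact funext fun i => hv.clearedExp (fun k => (i k).2.le) hn

end Complex

end ExpLattice

end ExpLattices

section UpperBound

namespace ExpLattice

variable {ι : Type*} [Fintype ι] [DecidableEq ι] {D : ExpLattice ι ℂ} {v : ι → ι → ℂ}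
  {H ρ B : ℝ} {M N A : ℕ} {q : (ι → Fin M) → ℂ[X]}

theorem Bounded.norm_expPoly_le (hD : D.Bounded H) (hH : 1 ≤ H) (hv : ∀ l j, ‖v l j‖ ≤ H)
    (hM : 1 ≤ M) (hN : 1 ≤ N) (hA : 1 ≤ A) (hq : ∀ i, CoeffBound A B (q i)) {α : Type*} [Fintype α]
    (u : α → ι) (s : Finset α) {n : ι → ℕ} (hn : ∀ l, n l ≤ N) (l : ι) {z : ℂ} (hz : ‖z‖ = ρ) :
    ‖expPoly (fun i : ι → Fin M => latticePoint D.freq fun k => i k) D.pivot q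
        (∏ k ∈ s, dirDeriv (v (u k))) (latticePoint v n + z • v l)‖ ≤
      M ^ Fintype.card ι *
        (Real.exp (Fintype.card ι *
            (Fintype.card ι * (M * H) * (Fintype.card ι * (N * H) + ρ * H))) *
          (A * ((Fintype.card ι * (Fintype.card ι * (M * H) * H) + H * A) ^ Fintype.card α * B *
            (Fintype.card ι * (N * H) + ρ * H) ^ A))) := by
  have hcard : (1 : ℝ) ≤ Fintype.card ι := by exact_mod_cast Fintype.card_pos_iff.2 ⟨D.pivot⟩
  have hN' : (1 : ℝ) ≤ N := by exact_mod_cast hN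
  have hA' : (1 : ℝ) ≤ A := by exact_mod_cast hA
  have hρ : 0 ≤ ρ := hz ▸ norm_nonneg z
  have hB : 0 ≤ B := (hq fun _ => ⟨0, hM⟩).nonneg
  have hpoint (j : ι) :
      ‖(latticePoint v n + z • v l) j‖ ≤ Fintype.card ι * (N * H) + ρ * H := by
    rw [Pi.add_apply, latticePoint_apply, Pi.smul_apply, smul_eq_mul]
    exact norm_add_le_of_le (norm_latticePoint_le (fun k => hv k j) hn)
      (norm_mul_le_of_le hz.le (hv l j))
  have hW : 1 ≤ Fintype.card ι * (N * H) + ρ * H := by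
    have := one_le_mul_of_one_le_of_one_le hcard (one_le_mul_of_one_le_of_one_le hN' hH)
    have : 0 ≤ ρ * H := by positivity
    linarith
  have hG : 1 ≤ Fintype.card ι * (Fintype.card ι * (M * H) * H) + H * A := by
    have := one_le_mul_of_one_le_of_one_le hH hA'
    have : 0 ≤ Fintype.card ι * (Fintype.card ι * (M * H) * H) := by positivity
    linarith
  have hword (i : ι → Fin M) (k : α) :
      ‖latticePoint D.freq (fun k => i k) ⬝ᵥ v (u k)‖ + ‖v (u k) D.pivot‖ * A ≤
        Fintype.card ι * (Fintype.card ι * (M * H) * H) + H * A := by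
    gcongr
    exacts [norm_dotProduct_le_of_le (hD.norm_latticePoint_freq_le i) (hv _), hv _ _]
  have hexp (i : ι → Fin M) :
      ‖Complex.exp (latticePoint D.freq (fun k => i k) ⬝ᵥ (latticePoint v n + z • v l))‖ ≤
        Real.exp (Fintype.card ι *
          (Fintype.card ι * (M * H) * (Fintype.card ι * (N * H) + ρ * H))) := by
    rw [Complex.norm_exp]
    exact Real.exp_le_exp.2 <| (Complex.re_le_norm _).trans <|
      norm_dotProduct_le_of_le (hD.norm_latticePoint_freq_le i) hpoint
  refine (norm_expPolyValue_prod_le hq (fun i k _ => hword i k) hW (hpoint D.pivot)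
    hexp).trans ?_
  simp only [Fintype.card_fun, Fintype.card_fin, Nat.cast_pow]
  gcongr
  exact s.card_le_univ

theorem norm_value_prod_X_le_of_forall_value_eq_zero (hD : D.Bounded H) (hH : 1 ≤ H)
    (hDv : D.HasPoints v) (hD0 : D.denom ≠ 0) (hv : ∀ l j, ‖v l j‖ ≤ H) {b : ι → ι → ℂ}
    (hb : ∀ j, ∑ l, b j l • v l = Pi.single j 1) {C : ℝ} (hC : ∀ j, ∑ l, ‖b j l‖ ≤ C)
    (hM : 1 ≤ M) (hN : 1 ≤ N) (hA : 1 ≤ A) (hq : ∀ i, CoeffBound A B (q i)) {N' : ℕ}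
    (hN' : N = Fintype.card ι * N') {α : Type*} [Fintype α]
    (hvan : ∀ P : MvPolynomial ι ℂ, P.totalDegree < Fintype.card α →
      ∀ n : ι → ℕ, (∀ l, n l < N) → D.value M N q n P = 0) (hρ : 4 * N ≤ ρ) (u : α → ι)
    {n : ι → ℕ} (hn : ∀ l, n l < N) :
    ‖D.value M N q n (∏ k, MvPolynomial.X (u k))‖ ≤
      H ^ (Fintype.card ι ^ 2 * (M * N)) * (C ^ Fintype.card α * ((Fintype.card α).factorial *
        ((4 * N / ρ) ^ (N' * Fintype.card α) * (M ^ Fintype.card ι *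
          (Real.exp (Fintype.card ι *
              (Fintype.card ι * (M * H) * (Fintype.card ι * (N * H) + ρ * H))) *
            (A * ((Fintype.card ι * (Fintype.card ι * (M * H) * H) + H * A) ^ Fintype.card α * B *
              (Fintype.card ι * (N * H) + ρ * H) ^ A))))))) := by
  have : Nonempty ι := ⟨D.pivot⟩
  rw [hDv.value q (fun l => (hn l).le)]
  refine norm_mul_le_of_le ((norm_pow_le _ _).trans (pow_le_pow_left₀ (norm_nonneg _) hD.denom _))
    ?_
  simp only [← dirDeriv_single, ← hb]
  refine norm_expPoly_prod_dirDeriv_le hN' (fun P hP n hn => ?_) hρ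
    (fun u s n hn l z hz => hD.norm_expPoly_le hH hv hM hN hA hq u s (fun l => (hn l).le) l hz)
    (fun k => hC (u k)) hn
  have hvalue := hvan P hP n hn
  rw [hDv.value q (fun l => (hn l).le)] at hvalue
  exact (mul_eq_zero.1 hvalue).resolve_left (pow_ne_zero _ hD0)

end ExpLattice

end UpperBound

section Monomials

variable {R V ι : Type*} [CommRing R] [AddCommGroup V] [Module R V] [Fintype ι]

theorem exists_prod_X_pow_ne_zero {f : MvPolynomial ι R →ₗ[R] V} {P : MvPolynomial ι R}
    (hP : f P ≠ 0) :
    ∃ s : ι → ℕ, ∑ j, s j ≤ P.totalDegree ∧ f (∏ j, MvPolynomial.X j ^ s j) ≠ 0 := by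
  by_contra! hzero
  refine hP ?_
  rw [P.as_sum, map_sum]
  refine Finset.sum_eq_zero fun s hs => ?_
  have hdeg := MvPolynomial.le_totalDegree hs
  rw [Finsupp.sum_fintype _ _ fun _ => rfl] at hdeg
  rw [MvPolynomial.monomial_eq, Finsupp.prod_fintype _ _ fun _ => pow_zero _,
    ← MvPolynomial.smul_eq_C_mul, map_smul, hzero s hdeg, smul_zero]

theorem prod_pow_eq_prod_sigma (X : ι → R) (s : ι → ℕ) :
    ∏ j, X j ^ s j = ∏ k : Σ j, Fin (s j), X k.1 := by
  simp [Fintype.prod_sigma]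

end Monomials

section NumberFields

open NumberField

variable (K : Type*) [Field K] [NumberField K]

/-- Siegel's lemma, for twice as many unknowns as equations. -/
theorem exists_house_le_mulVec_eq_zero : ∃ c : ℝ, 1 ≤ c ∧
    ∀ {E J : Type*} [Fintype E] [Nonempty E] [Fintype J] (a : Matrix E J (𝓞 K)) {b : ℝ},
      Fintype.card J = 2 * Fintype.card E → 1 ≤ b → (∀ e j, house (a e j : K) ≤ b) →
      ∃ ξ : J → 𝓞 K, ξ ≠ 0 ∧ a.mulVec ξ = 0 ∧
        ∀ j, house (ξ j : K) ≤ c * (Fintype.card J * b) := by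
  classical
  have hsiegel : ∃ c₁ : ℝ, ∀ {E J : Type _} [Fintype E] [Nonempty E] [Fintype J]
      (a : Matrix E J (𝓞 K)) {b : ℝ}, Fintype.card J = 2 * Fintype.card E → a ≠ 0 →
      (∀ e j, house (a e j : K) ≤ b) → ∃ ξ : J → 𝓞 K, ξ ≠ 0 ∧ a.mulVec ξ = 0 ∧ ∀ j,
        house (ξ j : K) ≤ c₁ * (c₁ * Fintype.card J * b) ^
          ((Fintype.card E : ℝ) / (Fintype.card J - Fintype.card E)) :=
    ⟨_, fun {E} _ _ _ _ a _ hJ ha hb =>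
      have hE : 0 < Fintype.card E := Fintype.card_pos
      house.exists_ne_zero_int_vec_house_le K a ha hE (by omega) rfl hb rfl⟩
  obtain ⟨c₁, hc₁⟩ := hsiegel
  refine ⟨max 1 (c₁ * c₁), le_max_left _ _, fun {E J} _ _ _ a b hJ hb hab => ?_⟩
  have hE : 0 < Fintype.card E := Fintype.card_pos
  have hJ' : (Fintype.card J : ℝ) = 2 * Fintype.card E := by exact_mod_cast hJ
  rcases eq_or_ne a 0 with rfl | ha
  · have : Nonempty J := Fintype.card_pos_iff.1 (by omega)
    refine ⟨1, one_ne_zero, Matrix.zero_mulVec _, fun j => ?_⟩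
    have hcard : (1 : ℝ) ≤ Fintype.card J := by exact_mod_cast Fintype.card_pos
    simpa [house] using one_le_mul_of_one_le_of_one_le (le_max_left 1 (c₁ * c₁))
      (one_le_mul_of_one_le_of_one_le hcard hb)
  · obtain ⟨ξ, hξ0, hξ, hξb⟩ := hc₁ a hJ ha hab
    refine ⟨ξ, hξ0, hξ, fun j => (hξb j).trans ?_⟩
    have hexponent : (Fintype.card E : ℝ) / (Fintype.card J - Fintype.card E) = 1 := by
      rw [hJ', two_mul, add_sub_cancel_right,
        div_self (by positivity)]
    rw [hexponent, Real.rpow_one, mul_assoc, ← mul_assoc]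
    gcongr
    exact le_max_right _ _

variable {K}

/-- Liouville's inequality. -/
theorem one_le_norm_mul_pow_of_house_le {x : 𝓞 K} (hx : x ≠ 0) (φ : K →+* ℂ) {b : ℝ}
    (hb : 1 ≤ b) (hxb : house (x : K) ≤ b) : 1 ≤ ‖φ x‖ * b ^ Module.finrank ℚ K := by
  have hnorm : (1 : ℝ) ≤ ‖Algebra.norm ℚ (x : K)‖ := by
    rw [← Algebra.coe_norm_int, Int.norm_cast_rat, Int.norm_eq_abs]
    exact_mod_cast Int.one_le_abs (Algebra.norm_ne_zero_iff.2 hx)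
  calc 1 ≤ ‖φ x‖ * house (x : K) ^ (Module.finrank ℚ K - 1) :=
        hnorm.trans (norm_norm_le_norm_mul_house_pow _ φ)
    _ ≤ ‖φ x‖ * b ^ Module.finrank ℚ K := by
        gcongr
        exact (pow_le_pow_left₀ (house_nonneg _) hxb _).trans
          (pow_le_pow_right₀ hb (Nat.sub_le _ _))

end NumberFields

section AuxiliaryFunction

open NumberField

namespace ExpLattice

variable {ι : Type*} [Fintype ι] [DecidableEq ι]

theorem value_ofFn {R : Type*} [CommRing R] [DecidableEq R] (D : ExpLattice ι R) (M N A : ℕ)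
    (ξ : (ι → Fin M) × Fin A → R) (n : ι → ℕ) (P : MvPolynomial ι R) :
    D.value M N (fun i => ofFn A fun a => ξ (i, a)) n P =
      ∑ j : (ι → Fin M) × Fin A, D.value M N (Pi.single j.1 (X ^ (j.2 : ℕ))) n P * ξ j := by
  have hsingle (i : ι → Fin M) (p : R[X]) : D.value M N (Pi.single i p) n P =
      D.clearedExp M N (fun k => i k) n *
        (expDeriv (latticePoint D.freq fun k => i k) D.pivot P p).eval
          (latticePoint D.coord n) := by
    rw [value, expPolyValue_apply, Finset.sum_eq_single_of_mem i (Finset.mem_univ i)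
      fun i' _ hi' => by rw [Pi.single_eq_of_ne hi', map_zero, eval_zero, mul_zero],
      Pi.single_eq_same]
  have hofFn (ζ : Fin A → R) : ofFn A ζ = ∑ a, ζ a • (X : R[X]) ^ (a : ℕ) := by
    simp only [ofFn_eq_sum_monomial, ← C_mul_X_pow_eq_monomial, smul_eq_C_mul]
  simp only [hsingle]
  simp only [Fintype.sum_prod_type, value, expPolyValue_apply, hofFn, map_sum, map_smul,
    eval_finsetSum, eval_smul, smul_eq_mul, Finset.mul_sum]
  exact Finset.sum_congr rfl fun _ _ => Finset.sum_congr rfl fun _ _ => by ring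

variable {K : Type*} [Field K] [NumberField K]

variable (K) in
/-- The embedding of the ring of integers into the product of its complex completions, whose
supremum norm is the house. -/
noncomputable abbrev integersEmbedding : 𝓞 K →+* ((K →+* ℂ) → ℂ) :=
  (canonicalEmbedding K).comp (algebraMap (𝓞 K) K)

theorem coeffBound_map_ofFn [DecidableEq (𝓞 K)] {A : ℕ} {ζ : Fin A → 𝓞 K} {B : ℝ} (hB : 0 ≤ B)
    (hζ : ∀ a, house (ζ a : K) ≤ B) : CoeffBound A B ((ofFn A ζ).map (integersEmbedding K)) where
  degree_lt := degree_map_le.trans_lt (ofFn_degree_lt ζ)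
  norm_coeff_le k := by
    rw [coeff_map]
    rcases lt_or_ge k A with hk | hk
    · rw [ofFn_coeff_eq_val_of_lt ζ hk]
      exact hζ _
    · rw [ofFn_coeff_eq_zero_of_ge ζ hk, map_zero, norm_zero]
      exact hB

theorem coeffBound_single_X_pow {I R : Type*} [NormedCommRing R] [NormOneClass R] [DecidableEq I]
    {S : Type*} [CommRing S] (f : S →+* R) {A a : ℕ} (ha : a < A) (i i' : I) :
    CoeffBound A 1 (((Pi.single i (X ^ a) : I → S[X]) i').map f) := by
  rcases eq_or_ne i' i with rfl | h
  · simpa using CoeffBound.X_pow ha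
  · rw [Pi.single_eq_of_ne h, Polynomial.map_zero]
    exact ⟨by simp, by simp⟩

theorem house_value_prod_X_pow_le {D : ExpLattice ι (𝓞 K)} {H B : ℝ}
    (hD : (D.map (integersEmbedding K)).Bounded H) (hH : 1 ≤ H) {M N A : ℕ} (hN : 1 ≤ N)
    {q : (ι → Fin M) → (𝓞 K)[X]}
    (hq : ∀ i, CoeffBound A B ((q i).map (integersEmbedding K))) {n : ι → ℕ} (hn : ∀ l, n l ≤ N)
    (s : ι → ℕ) :
    house (D.value M N q n (∏ j, MvPolynomial.X j ^ s j) : K) ≤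
      M ^ Fintype.card ι * (H ^ (Fintype.card ι ^ 2 * (M * N)) *
        (A * ((Fintype.card ι * (M * H) + A) ^ (∑ j, s j) * B *
          (Fintype.card ι * (N * H)) ^ A))) := by
  rw [prod_pow_eq_prod_sigma]
  have hbound := hD.norm_value_prod_X_le hH hN hq hn fun k : Σ j, Fin (s j) => k.1
  have hmap := D.map_value (integersEmbedding K) M N q n (∏ k : Σ j, Fin (s j), MvPolynomial.X k.1)
  simp only [map_prod, MvPolynomial.map_X] at hmap
  rw [← hmap] at hbound
  simpa [house] using hbound

variable (K) in
theorem exists_value_eq_zero_of_totalDegree_lt : ∃ c : ℝ, 1 ≤ c ∧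
    ∀ {ι : Type*} [Fintype ι] [DecidableEq ι] {D : ExpLattice ι (𝓞 K)} {H : ℝ},
      (D.map (integersEmbedding K)).Bounded H → 1 ≤ H → ∀ {M N A T : ℕ}, 1 ≤ M → 1 ≤ N → 1 ≤ A →
      1 ≤ T → A * M ^ Fintype.card ι = 2 * (T ^ Fintype.card ι * N ^ Fintype.card ι) → ∀ {b : ℝ},
      M ^ Fintype.card ι * (H ^ (Fintype.card ι ^ 2 * (M * N)) *
        (A * ((Fintype.card ι * (M * H) + A) ^ (Fintype.card ι * T) *
          (Fintype.card ι * (N * H)) ^ A))) ≤ b → 1 ≤ b →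
      ∃ q : (ι → Fin M) → (𝓞 K)[X], q ≠ 0 ∧
        (∀ i, CoeffBound A (c * (A * M ^ Fintype.card ι * b))
          ((q i).map (integersEmbedding K))) ∧
        ∀ P : MvPolynomial ι (𝓞 K), P.totalDegree < T → ∀ n : ι → ℕ, (∀ l, n l < N) →
          D.value M N q n P = 0 := by
  classical
  obtain ⟨c, hc, hsiegel⟩ := exists_house_le_mulVec_eq_zero K
  refine ⟨c, hc, fun {ι} _ _ D H hD hH M N A T hM hN hA hT hcard b hb hb1 => ?_⟩
  have : NeZero T := ⟨by omega⟩
  have : NeZero N := ⟨by omega⟩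
  have hMH : (0 : ℝ) ≤ M * H := by positivity
  have hA1 : (1 : ℝ) ≤ A := by exact_mod_cast hA
  obtain ⟨ξ, hξ0, hξ, hξb⟩ := hsiegel (E := (ι → Fin T) × (ι → Fin N))
    (J := (ι → Fin M) × Fin A) (fun e j => D.value M N (Pi.single j.1 (X ^ (j.2 : ℕ)))
      (fun l => e.2 l) (∏ k, MvPolynomial.X k ^ (e.1 k : ℕ))) (b := b)
    (by simpa [mul_comm] using hcard) hb1 fun e j => by
      have hsum : ∑ k, (e.1 k : ℕ) ≤ Fintype.card ι * T := by
        simpa using Finset.sum_le_card_nsmul Finset.univ _ T fun k _ => (e.1 k).2.le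
      refine (house_value_prod_X_pow_le hD hH hN (A := A) (B := 1)
        (coeffBound_single_X_pow _ j.2.2 _) (fun l => (e.2 l).2.le) _).trans (le_trans ?_ hb)
      rw [mul_one]
      gcongr
      nlinarith [Nat.cast_nonneg (α := ℝ) (Fintype.card ι)]
  refine ⟨fun i => ofFn A fun a => ξ (i, a), fun hq => hξ0 ?_, fun i => ?_, fun P hP n hn => ?_⟩
  · funext j
    have hcoeff := congrArg (·.coeff j.2) (congrFun hq j.1)
    simpa [ofFn_coeff_eq_val_of_lt] using hcoeff
  · refine coeffBound_map_ofFn (by positivity) fun a => (hξb (i, a)).trans_eq ?_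
    simp [mul_comm]
  · by_contra hne
    obtain ⟨s, hs, hsne⟩ := exists_prod_X_pow_ne_zero hne
    refine hsne ?_
    have hsT (j : ι) : s j < T :=
      ((Finset.single_le_sum (fun _ _ => Nat.zero_le _) (Finset.mem_univ j)).trans hs).trans_lt hP
    rw [value_ofFn]
    exact congrFun hξ (fun j => ⟨s j, hsT j⟩, fun l => ⟨n l, hn l⟩)

end ExpLattice

end AuxiliaryFunction

section Parameters

/-- The choice of parameters for the auxiliary function: in dimension `m`, with all data bounded by
`H`, the points lie in a box of side `N`, the frequencies in a box of side `M`, the coefficients are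
polynomials of degree less than `A`, the function vanishes to order `T` by construction, and `L` is
its actual order of vanishing. The size `s` is large in terms of `m`, `N` and `H`, and all bounds
are powers of `r ^ L`, where `r = L ^ (1 / (m + 1))`. -/
structure Parameters (m N s M A T L : ℕ) (H r : ℝ) : Prop where
  one_le_m : 1 ≤ m
  one_le_N : 1 ≤ N
  one_le_H : 1 ≤ H
  pow_le_s : H ^ (m ^ 2 * N ^ 2) ≤ s
  exp_le_s : Real.exp (m ^ 2 * N * H ^ 2 * (m * N + 4 * N)) ≤ s
  M_eq : M = N * s ^ m
  A_eq : A = 2 * s ^ m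
  T_eq : T = s ^ (m + 1)
  s_le_r : s ≤ r
  T_le_L : T ≤ L
  r_pow : r ^ (m + 1) = L

namespace Parameters

variable {m N s M A T L : ℕ} {H r : ℝ}

theorem exists_of_one_le (hm : 1 ≤ m) (hN : 1 ≤ N) (hH : 1 ≤ H) :
    ∃ s M A T : ℕ, Parameters m N s M A T T H s := by
  have hlarge (C : ℝ) : ∀ᶠ s : ℕ in Filter.atTop, C ≤ s :=
    tendsto_natCast_atTop_atTop.eventually_ge_atTop C
  obtain ⟨s, hpow, hexp⟩ := ((hlarge (H ^ (m ^ 2 * N ^ 2))).and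
    (hlarge (Real.exp (m ^ 2 * N * H ^ 2 * (m * N + 4 * N))))).exists
  exact ⟨s, _, _, _, hm, hN, hH, hpow, hexp, rfl, rfl, rfl, le_rfl, le_rfl, by push_cast; rfl⟩

theorem exists_of_le (h : Parameters m N s M A T T H s) (hL : T ≤ L) :
    ∃ r, Parameters m N s M A T L H r := by
  have hr : ((L : ℝ) ^ ((m + 1 : ℕ) : ℝ)⁻¹) ^ (m + 1) = L :=
    Real.rpow_inv_natCast_pow (Nat.cast_nonneg L) m.succ_ne_zero
  refine ⟨(L : ℝ) ^ ((m + 1 : ℕ) : ℝ)⁻¹, { h with s_le_r := ?_, T_le_L := hL, r_pow := hr }⟩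
  refine le_of_pow_le_pow_left₀ m.succ_ne_zero (by positivity) ?_
  rw [hr, h.r_pow]
  exact_mod_cast hL

theorem card_eq (h : Parameters m N s M A T L H r) : A * M ^ m = 2 * (T ^ m * N ^ m) := by
  rw [h.A_eq, h.M_eq, h.T_eq]
  ring

theorem five_mul_le_s (h : Parameters m N s M A T L H r) : 5 * (m ^ 2 * N ^ 2 * H ^ 2) ≤ s := by
  have hm : (1 : ℝ) ≤ m := by exact_mod_cast h.one_le_m
  have hN : (1 : ℝ) ≤ N := by exact_mod_cast h.one_le_N
  calc 5 * (m ^ 2 * N ^ 2 * H ^ 2) = m ^ 2 * N * H ^ 2 * (1 * N + 4 * N) := by ring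
    _ ≤ m ^ 2 * N * H ^ 2 * (m * N + 4 * N) := by gcongr
    _ ≤ Real.exp (m ^ 2 * N * H ^ 2 * (m * N + 4 * N)) :=
      (le_add_of_nonneg_right zero_le_one).trans (Real.add_one_le_exp _)
    _ ≤ s := h.exp_le_s

theorem le_s (h : Parameters m N s M A T L H r) {a b c : ℕ} (ha : a ≤ 2) (hb : b ≤ 2)
    (hc : c ≤ 2) : 5 * (m ^ a * N ^ b * H ^ c) ≤ s := by
  have hm : (1 : ℝ) ≤ m := by exact_mod_cast h.one_le_m
  have hN : (1 : ℝ) ≤ N := by exact_mod_cast h.one_le_N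
  have hH := h.one_le_H
  exact (by gcongr : 5 * (m ^ a * N ^ b * H ^ c) ≤ 5 * (m ^ 2 * N ^ 2 * H ^ 2)).trans
    h.five_mul_le_s

theorem five_le_s (h : Parameters m N s M A T L H r) : (5 : ℝ) ≤ s := by
  simpa using h.le_s (Nat.zero_le 2) (Nat.zero_le 2) (Nat.zero_le 2)

theorem one_lt_r (h : Parameters m N s M A T L H r) : 1 < r := by
  linarith [h.five_le_s, h.s_le_r]

theorem one_le_L (h : Parameters m N s M A T L H r) : 1 ≤ L := by
  have hL : (1 : ℝ) ≤ L := h.r_pow ▸ one_le_pow₀ h.one_lt_r.le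
  exact_mod_cast hL

theorem one_le_pow (h : Parameters m N s M A T L H r) : 1 ≤ r ^ L :=
  one_le_pow₀ h.one_lt_r.le

theorem one_le_mul_s_pow (h : Parameters m N s M A T L H r) {k : ℕ} (hk : 1 ≤ k) :
    1 ≤ k * s ^ m := by
  have hs : (1 : ℝ) ≤ s := by linarith [h.five_le_s]
  exact Nat.mul_pos hk (Nat.one_le_pow _ _ (by exact_mod_cast hs))

theorem one_le_M (h : Parameters m N s M A T L H r) : 1 ≤ M :=
  h.M_eq ▸ h.one_le_mul_s_pow h.one_le_N

theorem one_le_A (h : Parameters m N s M A T L H r) : 1 ≤ A :=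
  h.A_eq ▸ h.one_le_mul_s_pow one_le_two

theorem pow_le_pow (h : Parameters m N s M A T L H r) :
    (s : ℝ) ^ T ≤ r ^ L :=
  (pow_le_pow_left₀ (Nat.cast_nonneg s) h.s_le_r T).trans
    (pow_le_pow_right₀ h.one_lt_r.le h.T_le_L)

theorem pow_le (h : Parameters m N s M A T L H r) {a : ℝ} {k K : ℕ} (ha : 0 ≤ a)
    (hak : a ≤ r ^ k) (hK : K ≤ L) : a ^ K ≤ (r ^ L) ^ k := by
  have hr := h.one_lt_r.le
  calc a ^ K ≤ (r ^ k) ^ K := by gcongr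
    _ = (r ^ K) ^ k := pow_right_comm r k K
    _ ≤ (r ^ L) ^ k := by gcongr

theorem H_le_r (h : Parameters m N s M A T L H r) : H ≤ r := by
  have := h.le_s (Nat.zero_le 2) (Nat.zero_le 2) one_le_two
  simp only [pow_zero, pow_one, one_mul] at this
  linarith [h.one_le_H, h.s_le_r]

theorem H_le (h : Parameters m N s M A T L H r) : H ≤ r ^ L :=
  h.H_le_r.trans (le_self_pow₀ h.one_lt_r.le (by have := h.one_le_L; omega))

theorem s_mul_pow_le (h : Parameters m N s M A T L H r) : (s : ℝ) * s ^ m ≤ r ^ (m + 1) := by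
  rw [← pow_succ']
  exact pow_le_pow_left₀ (Nat.cast_nonneg s) h.s_le_r _

theorem mul_s_pow_le_L (h : Parameters m N s M A T L H r) {k : ℕ} (hk : (k : ℝ) ≤ s) :
    k * s ^ m ≤ L := by
  have hL : (k : ℝ) * s ^ m ≤ L := by
    refine le_trans ?_ (h.s_mul_pow_le.trans_eq h.r_pow)
    gcongr
  exact_mod_cast hL

theorem A_le_L (h : Parameters m N s M A T L H r) : A ≤ L :=
  h.A_eq ▸ h.mul_s_pow_le_L (by push_cast; linarith [h.five_le_s])

theorem M_le_L (h : Parameters m N s M A T L H r) : M ≤ L := by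
  have hN := h.le_s (Nat.zero_le 2) one_le_two (Nat.zero_le 2)
  simp only [pow_zero, pow_one, one_mul, mul_one] at hN
  exact h.M_eq ▸ h.mul_s_pow_le_L (by linarith [Nat.cast_nonneg (α := ℝ) N])

theorem cast_le (h : Parameters m N s M A T L H r) {k : ℕ} (hk : k ≤ L) :
    (k : ℝ) ≤ (r ^ L) ^ (m + 1) := by
  refine le_trans (Nat.cast_le.2 hk) ?_
  simpa using h.pow_le (Nat.cast_nonneg L) h.r_pow.ge h.one_le_L

theorem M_pow_le (h : Parameters m N s M A T L H r) : (M : ℝ) ^ m ≤ (r ^ L) ^ (m ^ 2 + m) := by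
  calc (M : ℝ) ^ m ≤ ((r ^ L) ^ (m + 1)) ^ m := by
        gcongr
        exact h.cast_le h.M_le_L
    _ = (r ^ L) ^ (m ^ 2 + m) := by ring

theorem factorial_le (h : Parameters m N s M A T L H r) :
    (L.factorial : ℝ) ≤ (r ^ L) ^ (m + 1) := by
  have hfactorial : (L.factorial : ℝ) ≤ (L : ℝ) ^ L := by exact_mod_cast L.factorial_le_pow
  exact hfactorial.trans (h.pow_le (Nat.cast_nonneg L) h.r_pow.ge le_rfl)

theorem H_pow_le (h : Parameters m N s M A T L H r) : H ^ (m ^ 2 * (M * N)) ≤ r ^ L := by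
  have hH := h.one_le_H
  calc H ^ (m ^ 2 * (M * N)) = (H ^ (m ^ 2 * N ^ 2)) ^ s ^ m := by
        rw [h.M_eq, ← pow_mul]
        ring_nf
    _ ≤ (r ^ L) ^ 1 := h.pow_le (by positivity)
        ((h.pow_le_s.trans h.s_le_r).trans_eq (pow_one r).symm)
        (by simpa using h.mul_s_pow_le_L (k := 1) (by push_cast; linarith [h.five_le_s]))
    _ = r ^ L := pow_one _

theorem norm_point_pow_le (h : Parameters m N s M A T L H r) : (m * (N * H)) ^ A ≤ r ^ L := by
  have hH := h.one_le_H
  have hbase : m * (N * H) ≤ r ^ 1 := by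
    have hs := h.le_s one_le_two one_le_two one_le_two
    simp only [pow_one] at hs ⊢
    have : 0 ≤ m * (N * H) := by positivity
    linarith [h.s_le_r, mul_assoc (m : ℝ) N H]
  exact (h.pow_le (by positivity) hbase h.A_le_L).trans_eq (pow_one _)

theorem norm_circle_point_pow_le (h : Parameters m N s M A T L H r) :
    (m * (N * H) + 4 * N * r * H) ^ A ≤ (r ^ L) ^ 2 := by
  have hH := h.one_le_H
  have hr := h.one_lt_r
  have hm : (1 : ℝ) ≤ m := by exact_mod_cast h.one_le_m
  refine h.pow_le (by positivity) ?_ h.A_le_L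
  have hpoint : m * (N * H) ≤ m * (N * H) * r := le_mul_of_one_le_right (by positivity) hr.le
  have hcircle : 4 * N * r * H ≤ m * (4 * N * r * H) := le_mul_of_one_le_left (by positivity) hm
  have hs := h.le_s one_le_two one_le_two one_le_two
  simp only [pow_one] at hs
  calc m * (N * H) + 4 * N * r * H ≤ m * (N * H) * r + m * (4 * N * r * H) :=
        add_le_add hpoint hcircle
    _ = 5 * (m * N * H) * r := by ring
    _ ≤ r * r := by
        gcongr
        exact hs.trans h.s_le_r
    _ = r ^ 2 := (sq r).symm

theorem exp_le (h : Parameters m N s M A T L H r) :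
    Real.exp (m * (m * (M * H) * (m * (N * H) + 4 * N * r * H))) ≤ r ^ L := by
  have hH := h.one_le_H
  have hr := h.one_lt_r
  have hpoint : m * (N * H) ≤ m * (N * H) * r := le_mul_of_one_le_right (by positivity) hr.le
  have hexponent : m * (m * (M * H) * (m * (N * H) + 4 * N * r * H)) ≤
      L * (m ^ 2 * N * H ^ 2 * (m * N + 4 * N)) := by
    rw [h.M_eq]
    push_cast
    calc m * (m * (N * s ^ m * H) * (m * (N * H) + 4 * N * r * H))
        ≤ m * (m * (N * r ^ m * H) * (m * (N * H) * r + 4 * N * r * H)) :=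
          mul_le_mul_of_nonneg_left (mul_le_mul (by gcongr; exact h.s_le_r)
            (add_le_add_left hpoint _) (by positivity) (by positivity)) (Nat.cast_nonneg m)
      _ = r ^ (m + 1) * (m ^ 2 * N * H ^ 2 * (m * N + 4 * N)) := by ring
      _ = _ := by rw [h.r_pow]
  calc Real.exp (m * (m * (M * H) * (m * (N * H) + 4 * N * r * H)))
      ≤ Real.exp (m ^ 2 * N * H ^ 2 * (m * N + 4 * N)) ^ L := by
        rw [← Real.exp_nat_mul]
        exact Real.exp_le_exp.2 hexponent
    _ ≤ r ^ L := by
        gcongr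
        exact h.exp_le_s.trans h.s_le_r

theorem norm_word_le (h : Parameters m N s M A T L H r) :
    m * (m * (M * H) * H) + H * A ≤ r ^ (m + 1) := by
  have hs := h.le_s le_rfl one_le_two le_rfl
  have hs' := h.le_s (Nat.zero_le 2) (Nat.zero_le 2) one_le_two
  have hH := h.one_le_H
  rw [h.M_eq, h.A_eq]
  push_cast
  calc m * (m * (N * s ^ m * H) * H) + H * (2 * s ^ m)
      = (m ^ 2 * N * H ^ 2 + 2 * H) * s ^ m := by ring
    _ ≤ s * s ^ m := by
        gcongr
        simp only [pow_zero, pow_one, one_mul] at hs hs'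
        have : 0 ≤ (m : ℝ) ^ 2 * N * H ^ 2 := by positivity
        linarith
    _ ≤ r ^ (m + 1) := h.s_mul_pow_le

theorem norm_deriv_le (h : Parameters m N s M A T L H r) : m * (M * H) + A ≤ r ^ (m + 1) := by
  have hm : (1 : ℝ) ≤ m := by exact_mod_cast h.one_le_m
  have hH := h.one_le_H
  have hMH : M * H ≤ m * (M * H) * H :=
    (le_mul_of_one_le_left (by positivity) hm).trans (le_mul_of_one_le_right (by positivity) hH)
  exact (add_le_add (mul_le_mul_of_nonneg_left hMH (Nat.cast_nonneg m))
    (le_mul_of_one_le_left (Nat.cast_nonneg A) hH)).trans h.norm_word_le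

theorem siegel_matrix_le (h : Parameters m N s M A T L H r) :
    M ^ m * (H ^ (m ^ 2 * (M * N)) * (A * ((m * (M * H) + A) ^ (m * T) * (m * (N * H)) ^ A))) ≤
      (r ^ L) ^ (2 * m ^ 2 + 3 * m + 3) := by
  have hr := h.one_lt_r.le
  have hH := h.one_le_H
  have hderiv : (m * (M * H) + A) ^ (m * T) ≤ ((r ^ L) ^ (m + 1)) ^ m := by
    rw [mul_comm m T, pow_mul]
    gcongr
    exact h.pow_le (by positivity) h.norm_deriv_le h.T_le_L
  calc _ ≤ (r ^ L) ^ (m ^ 2 + m) *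
        (r ^ L * ((r ^ L) ^ (m + 1) * (((r ^ L) ^ (m + 1)) ^ m * r ^ L))) := by
        gcongr
        exacts [h.M_pow_le, h.H_pow_le, h.cast_le h.A_le_L, h.norm_point_pow_le]
    _ = (r ^ L) ^ (2 * m ^ 2 + 3 * m + 3) := by ring

theorem siegel_solution_le (h : Parameters m N s M A T L H r) {c : ℝ} (hc : c ≤ H) :
    c * (A * M ^ m * (r ^ L) ^ (2 * m ^ 2 + 3 * m + 3)) ≤
      (r ^ L) ^ (3 * m ^ 2 + 5 * m + 5) := by
  have hr := h.one_lt_r.le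
  calc _ ≤ r ^ L * ((r ^ L) ^ (m + 1) * (r ^ L) ^ (m ^ 2 + m) *
        (r ^ L) ^ (2 * m ^ 2 + 3 * m + 3)) := by
        gcongr
        exacts [hc.trans h.H_le, h.cast_le h.A_le_L, h.M_pow_le]
    _ = (r ^ L) ^ (3 * m ^ 2 + 5 * m + 5) := by ring

theorem house_value_le (h : Parameters m N s M A T L H r) :
    M ^ m * (H ^ (m ^ 2 * (M * N)) * (A * ((m * (M * H) + A) ^ L *
        (r ^ L) ^ (3 * m ^ 2 + 5 * m + 5) * (m * (N * H)) ^ A))) ≤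
      (r ^ L) ^ (4 * m ^ 2 + 9 * m + 13) := by
  have hr := h.one_lt_r.le
  have hH := h.one_le_H
  calc _ ≤ (r ^ L) ^ (m ^ 2 + m) * (r ^ L * ((r ^ L) ^ (m + 1) *
        ((r ^ L) ^ (m + 1) * (r ^ L) ^ (3 * m ^ 2 + 5 * m + 5) * r ^ L))) := by
        gcongr
        exacts [h.M_pow_le, h.H_pow_le, h.cast_le h.A_le_L,
          h.pow_le (by positivity) h.norm_deriv_le le_rfl, h.norm_point_pow_le]
    _ = (r ^ L) ^ (4 * m ^ 2 + 8 * m + 9) := by ring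
    _ ≤ (r ^ L) ^ (4 * m ^ 2 + 9 * m + 13) := pow_le_pow_right₀ h.one_le_pow (by omega)

theorem norm_value_le (h : Parameters m N s M A T L H r) (N' : ℕ) :
    H ^ (m ^ 2 * (M * N)) * (H ^ L * (L.factorial * ((4 * N / (4 * N * r)) ^ (N' * L) * (M ^ m *
        (Real.exp (m * (m * (M * H) * (m * (N * H) + 4 * N * r * H))) *
          (A * ((m * (m * (M * H) * H) + H * A) ^ L * (r ^ L) ^ (3 * m ^ 2 + 5 * m + 5) *
            (m * (N * H) + 4 * N * r * H) ^ A))))))) ≤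
      (r ^ L) ^ (4 * m ^ 2 + 9 * m + 13) * ((r ^ L) ^ N')⁻¹ := by
  have hr := h.one_lt_r
  have hH := h.one_le_H
  have hN : (4 * N : ℝ) ≠ 0 := by
    have := h.one_le_N
    positivity
  have hgain : (4 * N / (4 * N * r)) ^ (N' * L) = ((r ^ L) ^ N')⁻¹ := by
    rw [div_mul_cancel_left₀ hN, inv_pow, ← pow_mul, mul_comm N']
  have hHL : H ^ L ≤ r ^ L := pow_le_pow_left₀ (by positivity) h.H_le_r _
  rw [hgain]
  calc _ ≤ r ^ L * (r ^ L * ((r ^ L) ^ (m + 1) * (((r ^ L) ^ N')⁻¹ * ((r ^ L) ^ (m ^ 2 + m) *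
        (r ^ L * ((r ^ L) ^ (m + 1) * ((r ^ L) ^ (m + 1) *
          (r ^ L) ^ (3 * m ^ 2 + 5 * m + 5) * (r ^ L) ^ 2))))))) := by
        gcongr
        exacts [h.H_pow_le, h.factorial_le, h.M_pow_le, h.exp_le, h.cast_le h.A_le_L,
          h.pow_le (by positivity) h.norm_word_le le_rfl, h.norm_circle_point_pow_le]
    _ = (r ^ L) ^ (4 * m ^ 2 + 9 * m + 13) * ((r ^ L) ^ N')⁻¹ := by ring

end Parameters

end Parameters

section IntegralCriterion

open Filter NumberField

theorem exists_sum_smul_eq_single {k ι : Type*} [Field k] [Fintype ι] [DecidableEq ι]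
    {v : ι → ι → k} (hv : LinearIndependent k v) :
    ∃ b : ι → ι → k, ∀ j, ∑ l, b j l • v l = Pi.single j 1 := by
  have hspan := hv.span_eq_top_of_card_eq_finrank' (Module.finrank_fintype_fun_eq_card k).symm
  choose b hb using fun j : ι =>
    (Submodule.mem_span_range_iff_exists_fun k).1 (hspan ▸ Submodule.mem_top (x := Pi.single j 1))
  exact ⟨b, hb⟩

theorem CoeffBound.map_of_norm_le {R R₁ R₂ : Type*} [CommRing R] [NormedCommRing R₁]
    [NormedCommRing R₂] {f : R →+* R₁} {g : R →+* R₂} (hfg : ∀ x, ‖g x‖ ≤ ‖f x‖) {A : ℕ}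
    {B : ℝ} {p : R[X]} (hp : CoeffBound A B (p.map f)) : CoeffBound A B (p.map g) where
  degree_lt := by
    refine (degree_lt_iff_coeff_zero _ _).2 fun k hk => norm_le_zero_iff.1 ?_
    have hcoeff := (degree_lt_iff_coeff_zero _ _).1 hp.degree_lt k hk
    rw [coeff_map] at hcoeff ⊢
    exact (hfg _).trans_eq (norm_eq_zero.2 hcoeff)
  norm_coeff_le k := by
    have hcoeff := hp.norm_coeff_le k
    rw [coeff_map] at hcoeff ⊢
    exact (hfg _).trans hcoeff

namespace ExpLattice

variable {ι : Type*}

theorem Bounded.map_of_norm_le {R R₁ R₂ : Type*} [CommRing R] [NormedCommRing R₁]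
    [NormedCommRing R₂] {f : R →+* R₁} {g : R →+* R₂} (hfg : ∀ x, ‖g x‖ ≤ ‖f x‖)
    {D : ExpLattice ι R} {H : ℝ} (hD : (D.map f).Bounded H) : (D.map g).Bounded H where
  freq k j := (hfg _).trans (hD.freq k j)
  coord l := (hfg _).trans (hD.coord l)
  expo k l := (hfg _).trans (hD.expo k l)
  denom := (hfg _).trans hD.denom

theorem eventually_bounded [Finite ι] {R : Type*} [NormedCommRing R] (D : ExpLattice ι R) :
    ∀ᶠ H in atTop, D.Bounded H := by
  filter_upwards [
    eventually_all.2 fun k => eventually_all.2 fun j => eventually_ge_atTop ‖D.freq k j‖,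
    eventually_all.2 fun l => eventually_ge_atTop ‖D.coord l‖,
    eventually_all.2 fun k => eventually_all.2 fun l => eventually_ge_atTop ‖D.expo k l‖,
    eventually_ge_atTop ‖D.denom‖] with H hfreq hcoord hexpo hdenom
  exact ⟨hfreq, hcoord, hexpo, hdenom⟩

variable [Fintype ι]

theorem exists_value_prod_X_pow_ne_zero_minimal [DecidableEq ι] {R R' : Type*} [CommRing R]
    [Nontrivial R] [CommRing R']
    {D : ExpLattice ι R} {M N T : ℕ} {q : (ι → Fin M) → R[X]}
    (hne : ∃ P n, (∀ l, n l < N) ∧ D.value M N q n P ≠ 0)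
    (hvan : ∀ P : MvPolynomial ι R, P.totalDegree < T → ∀ n : ι → ℕ, (∀ l, n l < N) →
      D.value M N q n P = 0) (f : R →+* R') :
    ∃ (w n : ι → ℕ), (∀ l, n l < N) ∧ D.value M N q n (∏ j, MvPolynomial.X j ^ w j) ≠ 0 ∧
      T ≤ ∑ j, w j ∧ ∀ P : MvPolynomial ι R', P.totalDegree < ∑ j, w j →
        ∀ n : ι → ℕ, (∀ l, n l < N) →
          (D.map f).value M N (fun i => (q i).map f) n P = 0 := by
  classical
  have hex : ∃ L, ∃ w n : ι → ℕ, ∑ j, w j = L ∧ (∀ l, n l < N) ∧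
      D.value M N q n (∏ j, MvPolynomial.X j ^ w j) ≠ 0 := by
    obtain ⟨P, n, hn, hP⟩ := hne
    obtain ⟨w, -, hw⟩ := exists_prod_X_pow_ne_zero hP
    exact ⟨_, w, n, rfl, hn, hw⟩
  obtain ⟨w, n, hwL, hn, hw⟩ := Nat.find_spec hex
  refine ⟨w, n, hn, hw, not_lt.1 fun hT => hw (hvan _ ?_ n hn), fun P hP n' hn' => ?_⟩
  · refine lt_of_le_of_lt ((MvPolynomial.totalDegree_finsetProd _ _).trans
      (Finset.sum_le_sum fun j _ => ?_)) hT
    rw [MvPolynomial.totalDegree_X_pow]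
  · by_contra hP'
    obtain ⟨w', hw'P, hw'⟩ := exists_prod_X_pow_ne_zero hP'
    refine Nat.find_min hex (hw'P.trans_lt (hwL ▸ hP)) ⟨w', n', rfl, hn', fun hzero => hw' ?_⟩
    have hmap := D.map_value f M N q n' (∏ j, MvPolynomial.X j ^ w' j)
    simp only [hzero, map_zero, map_prod, map_pow, MvPolynomial.map_X] at hmap
    exact hmap.symm

theorem Bounded.norm_value_prod_X_pow_le [DecidableEq ι] {D : ExpLattice ι ℂ} {H : ℝ}
    (hD : D.Bounded H) {v : ι → ι → ℂ} (hDv : D.HasPoints v) (hD0 : D.denom ≠ 0)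
    (hv : ∀ l j, ‖v l j‖ ≤ H) {b : ι → ι → ℂ} (hb : ∀ j, ∑ l, b j l • v l = Pi.single j 1)
    (hbH : ∀ j, ∑ l, ‖b j l‖ ≤ H) {N N' : ℕ} (hN' : N = Fintype.card ι * N') {s M A T : ℕ} {r : ℝ}
    {w : ι → ℕ} (h : Parameters (Fintype.card ι) N s M A T (∑ j, w j) H r)
    {q : (ι → Fin M) → ℂ[X]} (hq : ∀ i, CoeffBound A
      ((r ^ ∑ j, w j) ^ (3 * Fintype.card ι ^ 2 + 5 * Fintype.card ι + 5)) (q i))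
    (hvan : ∀ P : MvPolynomial ι ℂ, P.totalDegree < ∑ j, w j → ∀ n : ι → ℕ, (∀ l, n l < N) →
      D.value M N q n P = 0) {n : ι → ℕ} (hn : ∀ l, n l < N) :
    ‖D.value M N q n (∏ j, MvPolynomial.X j ^ w j)‖ ≤
      (r ^ ∑ j, w j) ^ (4 * Fintype.card ι ^ 2 + 9 * Fintype.card ι + 13) *
        ((r ^ ∑ j, w j) ^ N')⁻¹ := by
  have hcard : Fintype.card (Σ j, Fin (w j)) = ∑ j, w j := by simp
  have hradius : (4 * N : ℝ) ≤ 4 * N * r :=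
    le_mul_of_one_le_right (by positivity) h.one_lt_r.le
  rw [prod_pow_eq_prod_sigma]
  refine (norm_value_prod_X_le_of_forall_value_eq_zero hD h.one_le_H hDv hD0 hv hb hbH h.one_le_M
    h.one_le_N h.one_le_A hq hN' (hcard ▸ hvan) hradius (fun k : Σ j, Fin (w j) => k.1)
    hn).trans ?_
  rw [hcard]
  exact h.norm_value_le N'

variable {K : Type*} [Field K] [NumberField K]

theorem norm_embedding_le_norm_integersEmbedding (φ : K →+* ℂ) (x : 𝓞 K) :
    ‖φ.comp (algebraMap (𝓞 K) K) x‖ ≤ ‖integersEmbedding K x‖ :=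
  norm_embedding_le_house (x : K) φ

theorem HasPoints.expo_ne_zero {R : Type*} [CommRing R] {f : R →+* ℂ} (hf : Function.Injective f)
    {D : ExpLattice ι R} {v : ι → ι → ℂ} (hv : (D.map f).HasPoints v) (hD0 : D.denom ≠ 0)
    (k l : ι) : D.expo k l ≠ 0 := fun hzero => by
  have hexpo := hv.expo k l
  simp only [map, Function.comp_apply, hzero, map_zero] at hexpo
  exact mul_ne_zero ((map_ne_zero_iff f hf).2 hD0) (Complex.exp_ne_zero _) hexpo.symm

theorem exists_house_le_and_norm_le (φ : K →+* ℂ) {D : ExpLattice ι (𝓞 K)} (hD0 : D.denom ≠ 0)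
    {v : ι → ι → ℂ} (hDv : (D.map (φ.comp (algebraMap (𝓞 K) K))).HasPoints v)
    (hv : LinearIndependent ℂ v) (hfreq : LinearIndependent ℤ fun k => D.freq k D.pivot) :
    ∃ e : ℕ, ∀ N' ≥ 1, ∃ x : 𝓞 K, x ≠ 0 ∧ ∃ y : ℝ, 1 < y ∧ house (x : K) ≤ y ^ e ∧
      ‖φ x‖ ≤ y ^ e * (y ^ N')⁻¹ := by
  classical
  refine ⟨4 * Fintype.card ι ^ 2 + 9 * Fintype.card ι + 13, fun N' hN' => ?_⟩
  set ψ := φ.comp (algebraMap (𝓞 K) K)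
  have hψ : Function.Injective ψ := φ.injective.comp RingOfIntegers.coe_injective
  have hψD := norm_embedding_le_norm_integersEmbedding φ
  obtain ⟨b, hb⟩ := exists_sum_smul_eq_single hv
  obtain ⟨c, -, hsiegel⟩ := exists_value_eq_zero_of_totalDegree_lt K
  obtain ⟨H, hH, hD, hvH, hbH, hcH⟩ := ((eventually_ge_atTop 1).and <|
    (D.map (integersEmbedding K)).eventually_bounded.and <|
    (eventually_all.2 fun l => eventually_all.2 fun j => eventually_ge_atTop ‖v l j‖).and <|
    (eventually_all.2 fun j => eventually_ge_atTop (∑ l, ‖b j l‖)).and <|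
    eventually_ge_atTop c).exists
  have hm : 1 ≤ Fintype.card ι := Fintype.card_pos_iff.2 ⟨D.pivot⟩
  have hN : 1 ≤ Fintype.card ι * N' := Nat.mul_pos hm hN'
  obtain ⟨s, M, A, T, hT⟩ := Parameters.exists_of_one_le hm hN hH
  obtain ⟨q, hq0, hq, hvan⟩ := hsiegel hD hH hT.one_le_M hN hT.one_le_A hT.one_le_L hT.card_eq
    hT.siegel_matrix_le (one_le_pow₀ hT.one_le_pow)
  obtain ⟨P, hP⟩ := D.exists_value_ne_zero hfreq (hDv.expo_ne_zero hψ hD0) hD0 M _ hq0 0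
  obtain ⟨w, n, hn, hne, hTw, hmin⟩ :=
    exists_value_prod_X_pow_ne_zero_minimal ⟨P, 0, fun _ => hN, hP⟩ hvan ψ
  obtain ⟨r, hr⟩ := hT.exists_of_le hTw
  have hqr (i : ι → Fin M) := (hq i).mono <| (hT.siegel_solution_le hcH).trans <|
    pow_le_pow_left₀ (by positivity) hr.pow_le_pow _
  refine ⟨_, hne, r ^ ∑ j, w j, one_lt_pow₀ hr.one_lt_r (Nat.one_le_iff_ne_zero.1 hr.one_le_L),
    ?_, ?_⟩
  · exact (house_value_prod_X_pow_le hD hH hN hqr (fun l => (hn l).le) w).trans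
      hr.house_value_le
  · have hmap := D.map_value ψ M (Fintype.card ι * N') q n (∏ j, MvPolynomial.X j ^ w j)
    simp only [map_prod, map_pow, MvPolynomial.map_X] at hmap
    change ‖ψ _‖ ≤ _
    rw [hmap]
    exact (hD.map_of_norm_le hψD).norm_value_prod_X_pow_le hDv ((map_ne_zero_iff ψ hψ).2 hD0) hvH
      hb hbH rfl hr (fun i => (hqr i).map_of_norm_le hψD) hmin hn

theorem not_linearIndependent_freq (φ : K →+* ℂ) {D : ExpLattice ι (𝓞 K)} (hD0 : D.denom ≠ 0)
    {v : ι → ι → ℂ} (hDv : (D.map (φ.comp (algebraMap (𝓞 K) K))).HasPoints v)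
    (hv : LinearIndependent ℂ v) : ¬ LinearIndependent ℤ fun k => D.freq k D.pivot := by
  intro hfreq
  obtain ⟨e, he⟩ := exists_house_le_and_norm_le φ hD0 hDv hv hfreq
  obtain ⟨x, hx, y, hy, hhouse, hnorm⟩ :=
    he (e * (Module.finrank ℚ K + 1) + 1) (Nat.le_add_left 1 _)
  refine lt_irrefl (1 : ℝ) ?_
  calc 1 ≤ ‖φ x‖ * (y ^ e) ^ Module.finrank ℚ K :=
        one_le_norm_mul_pow_of_house_le hx φ (one_le_pow₀ hy.le) hhouse
    _ ≤ y ^ e * (y ^ (e * (Module.finrank ℚ K + 1) + 1))⁻¹ * (y ^ e) ^ Module.finrank ℚ K := by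
        gcongr
    _ = y⁻¹ := by
        field_simp
        ring
    _ < 1 := inv_lt_one_of_one_lt₀ hy

end ExpLattice

end IntegralCriterion

section AlgebraicCriterion

open NumberField

theorem isAlgebraic_exp_ratCast_mul {z : ℂ} (hz : IsAlgebraic ℚ (Complex.exp z)) (t : ℚ) :
    IsAlgebraic ℚ (Complex.exp (t * z)) := by
  refine IsAlgebraic.of_pow t.pos ?_
  have hnum : (t.den : ℂ) * (t * z) = t.num * z := by
    rw [← mul_assoc]
    congr 1
    exact_mod_cast Rat.den_mul_eq_num t
  rw [← Complex.exp_nat_mul, hnum, Complex.exp_int_mul]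
  cases t.num with
  | ofNat n => simpa using hz.pow n
  | negSucc n => simpa using (hz.pow (n + 1)).inv

theorem exists_isIntegral_smul {J R A : Type*} [Finite J] [CommRing R] [IsDomain R] [CommRing A]
    [Algebra R A] {z : J → A} (hz : ∀ j, IsAlgebraic R (z j)) :
    ∃ d : R, d ≠ 0 ∧ ∀ j, IsIntegral R (d • z j) := by
  classical
  have := Fintype.ofFinite J
  choose y hy0 hy using fun j => (hz j).exists_integral_multiple
  refine ⟨∏ j, y j, Finset.prod_ne_zero_iff.2 fun j _ => hy0 j, fun j => ?_⟩
  rw [← Finset.prod_erase_mul _ _ (Finset.mem_univ j), mul_smul]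
  exact (hy j).smul _

theorem exists_subset_range_ringOfIntegers {S : Set ℂ} (hfin : S.Finite)
    (hS : ∀ z ∈ S, IsIntegral ℤ z) :
    ∃ (K : Type) (_ : Field K) (_ : NumberField K) (φ : K →+* ℂ),
      S ⊆ Set.range (φ.comp (algebraMap (𝓞 K) K)) := by
  have := hfin.to_subtype
  have : FiniteDimensional ℚ (IntermediateField.adjoin ℚ S) :=
    IntermediateField.finiteDimensional_adjoin fun z hz => (hS z hz).tower_top
  have : NumberField (IntermediateField.adjoin ℚ S) := {}
  refine ⟨IntermediateField.adjoin ℚ S, inferInstance, inferInstance,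
    algebraMap (IntermediateField.adjoin ℚ S) ℂ, fun z hz => ?_⟩
  let y : IntermediateField.adjoin ℚ S := ⟨z, IntermediateField.subset_adjoin ℚ S hz⟩
  have hy : IsIntegral ℤ y :=
    (isIntegral_algebraMap_iff (algebraMap (IntermediateField.adjoin ℚ S) ℂ).injective).1 (hS z hz)
  exact ⟨⟨y, hy⟩, rfl⟩

namespace ExpLattice

theorem exists_map_eq {ι : Type*} [Finite ι] (D : ExpLattice ι ℂ)
    (hfreq : ∀ k j, IsIntegral ℤ (D.freq k j)) (hcoord : ∀ l, IsIntegral ℤ (D.coord l))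
    (hexpo : ∀ k l, IsIntegral ℤ (D.expo k l)) (hdenom : IsIntegral ℤ D.denom) :
    ∃ (K : Type) (_ : Field K) (_ : NumberField K) (φ : K →+* ℂ) (D' : ExpLattice ι (𝓞 K)),
      D'.map (φ.comp (algebraMap (𝓞 K) K)) = D := by
  obtain ⟨K, _, _, φ, hφ⟩ := exists_subset_range_ringOfIntegers
    (S := insert D.denom (Set.range D.coord ∪
      (Set.range (Function.uncurry D.freq) ∪ Set.range (Function.uncurry D.expo))))
    (((Set.finite_range _).union ((Set.finite_range _).union (Set.finite_range _))).insert _) (by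
      rintro _ (rfl | ⟨l, rfl⟩ | ⟨k, rfl⟩ | ⟨k, rfl⟩)
      exacts [hdenom, hcoord l, hfreq _ _, hexpo _ _])
  obtain ⟨denom, hdenom'⟩ := hφ (Set.mem_insert _ _)
  choose coord hcoord' using fun l => hφ (.inr (.inl ⟨l, rfl⟩))
  choose freq hfreq' using fun k j => hφ (.inr (.inr (.inl ⟨(k, j), rfl⟩)))
  choose expo hexpo' using fun k l => hφ (.inr (.inr (.inr ⟨(k, l), rfl⟩)))
  refine ⟨K, inferInstance, inferInstance, φ, ⟨D.pivot, freq, coord, expo, denom⟩, ?_⟩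
  cases D
  simp only [map, mk.injEq, true_and]
  exact ⟨funext₂ hfreq', funext hcoord', funext₂ hexpo', hdenom'⟩

theorem HasPoints.not_linearIndependent_freq {ι : Type*} [Fintype ι] {D : ExpLattice ι ℂ}
    {v : ι → ι → ℂ} (hDv : D.HasPoints v) (hv : LinearIndependent ℂ v) (hD0 : D.denom ≠ 0)
    (hfreq : ∀ k j, IsIntegral ℤ (D.freq k j)) (hcoord : ∀ l, IsIntegral ℤ (D.coord l))
    (hexpo : ∀ k l, IsIntegral ℤ (D.expo k l)) (hdenom : IsIntegral ℤ D.denom) :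
    ¬ LinearIndependent ℤ fun k => D.freq k D.pivot := by
  obtain ⟨K, _, _, φ, D, rfl⟩ := D.exists_map_eq hfreq hcoord hexpo hdenom
  exact fun h => ExpLattice.not_linearIndependent_freq φ (ne_zero_of_map hD0) hDv hv
    (.of_comp (φ.comp (algebraMap (𝓞 K) K)).toAddMonoidHom.toIntLinearMap h)

end ExpLattice

theorem not_linearIndependent_of_isAlgebraic_exp {ι : Type*} [Fintype ι] {x v : ι → ι → ℂ} (o : ι)
    (hx : ∀ k j, IsAlgebraic ℚ (x k j)) (hv : LinearIndependent ℂ v)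
    (hvo : ∀ l, IsAlgebraic ℚ (v l o))
    (hexp : ∀ k l, IsAlgebraic ℚ (Complex.exp (x k ⬝ᵥ v l))) :
    ¬ LinearIndependent ℤ fun k => x k o := by
  intro hfreq
  have isAlgebraic_int {z : ℂ} (hz : IsAlgebraic ℚ z) : IsAlgebraic ℤ z :=
    (IsFractionRing.isAlgebraic_iff ℤ ℚ ℂ).2 hz
  obtain ⟨a, ha0, ha⟩ := exists_isIntegral_smul (z := fun i : ι × ι => x i.1 i.2)
    fun i => isAlgebraic_int (hx i.1 i.2)
  obtain ⟨b, hb0, hb⟩ := exists_isIntegral_smul fun l => isAlgebraic_int (hvo l)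
  have hexp' (i : ι × ι) : IsAlgebraic ℚ (Complex.exp ((a • x i.1) ⬝ᵥ (b • v i.2))) := by
    rw [smul_dotProduct, dotProduct_smul, smul_smul, zsmul_eq_mul]
    exact_mod_cast isAlgebraic_exp_ratCast_mul (hexp i.1 i.2) (a * b : ℤ)
  obtain ⟨c, hc0, hc⟩ := exists_isIntegral_smul fun i => isAlgebraic_int (hexp' i)
  let D : ExpLattice ι ℂ :=
    { pivot := o
      freq := fun k => a • x k
      coord := fun l => b • v l o
      expo := fun k l => c • Complex.exp ((a • x k) ⬝ᵥ (b • v l))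
      denom := c }
  have hDv : D.HasPoints fun l => (b : ℂ) • v l := by
    refine ⟨fun _ => zsmul_eq_mul _ _, fun k l => ?_⟩
    simp only [D, zsmul_eq_mul, Pi.smul_def, smul_eq_mul]
  have hDfreq : LinearIndependent ℤ fun k => D.freq k D.pivot :=
    hfreq.map' (LinearMap.lsmul ℤ ℂ a) (LinearMap.ker_lsmul ha0)
  exact hDv.not_linearIndependent_freq
    (hv.map' (LinearMap.lsmul ℂ _ (b : ℂ)) (LinearMap.ker_lsmul (Int.cast_ne_zero.2 hb0)))
    (Int.cast_ne_zero.2 hc0) (fun k j => ha (k, j)) hb (fun k l => hc (k, l))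
    (isIntegral_algebraMap (R := ℤ)) hDfreq

end AlgebraicCriterion

section Baker

variable {F : Type*} [Field F] [NumberField F] {κ : Type*} [Fintype κ]

/-- The conjugates `∑ i, σ (α i) * l i` of a linear form `∑ i, α i * l i` in complex numbers `l i`
with coefficients in a number field, for `σ` a complex embedding. -/
noncomputable def conjForm (α : κ → F) (l : κ → ℂ) (σ : F →ₐ[ℚ] ℂ) : ℂ :=
  ∑ i, σ (α i) * l i

theorem sum_mul_conjForm (α : κ → F) (l : κ → ℂ) (y : F) :
    ∑ σ : F →ₐ[ℚ] ℂ, σ y * conjForm α l σ = ∑ i, (Algebra.trace ℚ F (y * α i) : ℚ) * l i := by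
  have htrace (z : F) : ((Algebra.trace ℚ F z : ℚ) : ℂ) = ∑ σ : F →ₐ[ℚ] ℂ, σ z := by
    simpa using trace_eq_sum_embeddings ℂ (K := ℚ) (L := F) (x := z)
  simp only [conjForm, htrace, map_mul, Finset.mul_sum, Finset.sum_mul, mul_assoc]
  exact Finset.sum_comm

theorem isAlgebraic_exp_sum_mul_conjForm (α : κ → F) {l : κ → ℂ}
    (hl : ∀ i, IsAlgebraic ℚ (Complex.exp (l i))) (y : F) :
    IsAlgebraic ℚ (Complex.exp (∑ σ : F →ₐ[ℚ] ℂ, σ y * conjForm α l σ)) := by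
  rw [sum_mul_conjForm, Complex.exp_sum]
  exact Finset.prod_induction _ (IsAlgebraic ℚ) (fun _ _ => IsAlgebraic.mul) isAlgebraic_one
    fun i _ => isAlgebraic_exp_ratCast_mul (hl i) _

theorem linearIndependent_mul_pow {k : Type*} [Field k] {m : ℕ} {a u : Fin m → k}
    (ha : Function.Injective a) (hu : ∀ j, u j ≠ 0) :
    LinearIndependent k fun (l : Fin m) j => u j * a j ^ (l : ℕ) := by
  refine Matrix.linearIndependent_rows_of_det_ne_zero
    (A := Matrix.of fun (l : Fin m) j => u j * (Matrix.vandermonde a).transpose l j) ?_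
  rw [Matrix.det_mul_row, Matrix.det_transpose]
  exact mul_ne_zero (Finset.prod_ne_zero_iff.2 fun j _ => hu j)
    (Matrix.det_vandermonde_ne_zero_iff.2 ha)

theorem linearIndependent_int_pow {g : F} (hg : IntermediateField.adjoin ℚ {g} = ⊤) {m : ℕ}
    (hm : m ≤ Fintype.card (F →ₐ[ℚ] ℂ)) (φ : F →ₐ[ℚ] ℂ) :
    LinearIndependent ℤ fun k : Fin m => φ g ^ (k : ℕ) := by
  rw [AlgHom.card, Field.primitive_element_iff_minpoly_natDegree_eq ℚ g |>.1 hg |>.symm] at hm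
  have hpow := ((linearIndependent_pow (K := ℚ) g).comp _ (Fin.castLE_injective hm)).map'
    φ.toLinearMap (LinearMap.ker_eq_bot.2 φ.injective)
  simpa [Function.comp_def] using hpow.restrict_scalars' ℤ

theorem transcendental_conjForm (φ : F →ₐ[ℚ] ℂ) (α : κ → F) {l : κ → ℂ}
    (hl : ∀ i, IsAlgebraic ℚ (Complex.exp (l i))) (h0 : conjForm α l φ ≠ 0) :
    Transcendental ℚ (conjForm α l φ) := by
  classical
  intro hu
  obtain ⟨g, hg⟩ := Field.exists_primitive_element ℚ F
  let e := (Fintype.equivFin {σ : F →ₐ[ℚ] ℂ // conjForm α l σ ≠ 0}).symm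
  have halg (σ : F →ₐ[ℚ] ℂ) (y : F) : IsAlgebraic ℚ (σ y) :=
    (Algebra.IsAlgebraic.isAlgebraic y).algHom σ
  have hinj : Function.Injective fun j => (e j).1 g :=
    ((Field.primitive_element_iff_algHom_eq_of_eval' ℚ ℂ
      (fun _ => IsAlgClosed.splits _) g).1 hg).comp (Subtype.val_injective.comp e.injective)
  have hφ : (e (e.symm ⟨φ, h0⟩)).1 = φ := by rw [e.apply_symm_apply]
  refine not_linearIndependent_of_isAlgebraic_exp
    (x := fun k j => (e j).1 g ^ (k : ℕ))
    (v := fun l' j => conjForm α l (e j).1 * (e j).1 g ^ (l' : ℕ))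
    (e.symm ⟨φ, h0⟩) (fun k j => (halg _ g).pow _) (linearIndependent_mul_pow hinj fun j => (e j).2)
    (fun l' => ?_) (fun k l' => ?_) ?_
  · rw [hφ]
    exact hu.mul ((halg φ g).pow _)
  · have hsum : (fun j => (e j).1 g ^ (k : ℕ)) ⬝ᵥ
        (fun j => conjForm α l (e j).1 * (e j).1 g ^ (l' : ℕ)) =
        ∑ σ : F →ₐ[ℚ] ℂ, σ (g ^ ((k : ℕ) + l')) * conjForm α l σ := by
      refine Fintype.sum_of_injective (fun j => (e j).1)
        (Subtype.val_injective.comp e.injective) _ _ (fun σ hσ => ?_) fun j => ?_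
      · have hzero : conjForm α l σ = 0 := by
          by_contra h
          exact hσ ⟨e.symm ⟨σ, h⟩, by simp⟩
        rw [hzero, mul_zero]
      · rw [map_pow]
        ring
    rw [hsum]
    exact isAlgebraic_exp_sum_mul_conjForm α hl _
  · rw [hφ]
    exact linearIndependent_int_pow hg (Fintype.card_subtype_le _) φ

/-- Baker's theorem on the values of linear forms in logarithms of algebraic numbers. -/
theorem transcendental_sum_mul {α l : κ → ℂ} (hα : ∀ i, IsAlgebraic ℚ (α i))
    (hl : ∀ i, IsAlgebraic ℚ (Complex.exp (l i))) (h0 : ∑ i, α i * l i ≠ 0) :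
    Transcendental ℚ (∑ i, α i * l i) := by
  have : FiniteDimensional ℚ (IntermediateField.adjoin ℚ (Set.range α)) :=
    IntermediateField.finiteDimensional_adjoin (Set.forall_mem_range.2 fun i => (hα i).isIntegral)
  have : NumberField (IntermediateField.adjoin ℚ (Set.range α)) := {}
  exact transcendental_conjForm (IntermediateField.adjoin ℚ (Set.range α)).val
    (fun i => ⟨α i, IntermediateField.subset_adjoin ℚ _ ⟨i, rfl⟩⟩) hl h0

end Baker

theorem cos_pi_add_transcendental_general {α β : ℂ} (hβ : β ≠ 0) (hα : IsAlgebraic ℚ α)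
    (hβalg : IsAlgebraic ℚ β) : Transcendental ℚ (Complex.cos (α * Real.pi + β)) := by
  intro hcos
  have hI : IsAlgebraic ℚ Complex.I := Complex.isIntegral_rat_I.isAlgebraic
  have hsin : IsAlgebraic ℚ (Complex.sin (α * Real.pi + β)) := by
    refine IsAlgebraic.of_pow two_pos ?_
    rw [Complex.sin_sq]
    exact isAlgebraic_one.sub (hcos.pow 2)
  have hexp : IsAlgebraic ℚ (Complex.exp ((α * Real.pi + β) * Complex.I)) := by
    rw [Complex.exp_mul_I]
    exact hcos.add (hsin.mul hI)
  have hexp' : IsAlgebraic ℚ (Complex.exp (Real.pi * Complex.I)) := by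
    rw [Complex.exp_pi_mul_I]
    exact isAlgebraic_one.neg
  have hform : ∑ i, ![1, -α] i * ![(α * Real.pi + β) * Complex.I, Real.pi * Complex.I] i =
      β * Complex.I := by
    simp only [Fin.sum_univ_two, Matrix.cons_val_zero, Matrix.cons_val_one]
    ring
  refine hform ▸ transcendental_sum_mul ?_ ?_ (hform ▸ mul_ne_zero hβ Complex.I_ne_zero) <|
    hβalg.mul hI
  · exact Fin.forall_fin_two.2 ⟨isAlgebraic_one, hα.neg⟩
  · exact Fin.forall_fin_two.2 ⟨hexp, hexp'⟩

theorem cos_pi_add_transcendental (α β : ℝ) (hα : α ≠ 0) (hβ : β ≠ 0)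
    (haalg : IsAlgebraic ℚ α) (hbalg : IsAlgebraic ℚ β) :
    Transcendental ℚ (Real.cos (α * Real.pi + β)) := by
  refine (transcendental_algebraMap_iff (algebraMap ℝ ℂ).injective).1 ?_
  simpa using cos_pi_add_transcendental_general (Complex.ofReal_ne_zero.2 hβ)
    (haalg.algebraMap (A := ℂ)) (hbalg.algebraMap (A := ℂ))
end

section
/- Let θ ∈ (0, π] with θ ∈ ℚπ, say θ = (l/m)π with 0 < l/m ≤ 1. Then there exists a non-bipartite mixed graph G whose H_θ-spectrum is symmetric with respect to the origin; i.e., θ does not have the bipartite detection property. -/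
open Polynomial Matrix Real

/-- The θ-Hermitian adjacency matrix of a mixed graph on `Fin n` with arc
relation `A` (no loops). -/
noncomputable def MGHerm {n : ℕ} (A : Fin n → Fin n → Bool) (θ : ℝ) : Matrix (Fin n) (Fin n) ℂ :=
  fun x y =>
    if A x y ∧ A y x then 1
    else if A x y then Complex.exp (θ * Complex.I)
    else if A y x then Complex.exp (-θ * Complex.I)
    else 0

/-- A mixed graph is bipartite if its underlying graph is bipartite. -/
def MGBipartite {n : ℕ} (A : Fin n → Fin n → Bool) : Prop :=
  ∃ S : Set (Fin n), ∀ x y : Fin n, (A x y ∨ A y x) → (x ∈ S ↔ y ∉ S)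

/-- The spectrum of `M` (as a root multiset of its characteristic polynomial)
is symmetric with respect to the origin, with multiplicities. -/
def SymSpec {n : ℕ} (M : Matrix (Fin n) (Fin n) ℂ) : Prop :=
  ∀ μ : ℂ, M.charpoly.rootMultiplicity μ = M.charpoly.rootMultiplicity (-μ)

/-!
Glue a finite family of pages, each of which closes up to an odd cycle, along a common edge `xy`
(the spine), and let the page `a` have flux `k a * θ`. A diagonal switching moves the flux of every
page to its last edge: the pages become copies of one path, joined to `x` with the weights
`(1, …, 1)` and to `y` with the weights `z ^ k a`, where `z = exp (θ * I)`. If `∑ a, z ^ k a = 0`,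
these two vectors are orthogonal, so the reflection in the hyperplane orthogonal to `(1, …, 1)`
negates the first one and fixes the second. Combined with alternating signs along the pages, this
reflection gives an involution which anticommutes with the adjacency matrix `H`; hence `H` is
similar to `-H`. For `θ = l * π / m` the powers of `z` with exponents `0, …, 2 * m - 1` sum to zero.
-/

open scoped Kronecker

section SymmetricSpectrum

variable {V : Type*} [Fintype V] [DecidableEq V]

theorem charpoly_neg {R : Type*} [CommRing R] (M : Matrix V V R) :
    (-M).charpoly = (-1) ^ Fintype.card V * M.charpoly.comp (-X) := by
  have hmatrix : (-M).charmatrix = -(compRingHom (-X)).mapMatrix M.charmatrix := by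
    ext i j : 2
    by_cases hij : i = j
    · subst hij
      simp [charmatrix_apply_eq, add_comm]
    · simp [charmatrix_apply_ne _ _ _ hij]
  rw [charpoly, hmatrix, det_neg, ← RingHom.map_det, charpoly, coe_compRingHom_apply]

theorem symSpec_of_charpoly_neg_eq {n : ℕ} {M : Matrix (Fin n) (Fin n) ℂ}
    (h : (-M).charpoly = M.charpoly) : SymSpec M := by
  intro μ
  have hroots : M.charpoly.roots = M.charpoly.roots.map Neg.neg := by
    conv_lhs => rw [← h, charpoly_neg, ← C_1, ← C_neg, ← C_pow,
      roots_C_mul _ (pow_ne_zero _ (neg_ne_zero.mpr one_ne_zero)), roots_comp_neg_X]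
  rw [← count_roots, ← count_roots, ← Multiset.count_map_eq_count' _ _ neg_injective (-μ),
    neg_neg, ← hroots]

theorem charpoly_neg_eq_of_anticommute {R : Type*} [CommRing R] {M T : Matrix V V R}
    (hT : T * T = 1) (h : T * M = -(M * T)) : (-M).charpoly = M.charpoly :=
  calc (-M).charpoly = (T * M * T).charpoly := by rw [h, neg_mul, mul_assoc, hT, mul_one]
    _ = M.charpoly := by rw [charpoly_mul_comm, ← mul_assoc, hT, one_mul]

theorem charpoly_diagonal_conj {K : Type*} [Field K] {d : V → K} (hd : ∀ v, d v ≠ 0)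
    (M : Matrix V V K) : (diagonal d * M * diagonal d⁻¹).charpoly = M.charpoly := by
  have hinv : diagonal d⁻¹ * diagonal d = 1 := by
    rw [diagonal_mul_diagonal, ← diagonal_one]
    exact congrArg diagonal (funext fun v => inv_mul_cancel₀ (hd v))
  rw [charpoly_mul_comm, ← mul_assoc, hinv, one_mul]

theorem diagonal_mul_adjMatrix_eq_neg {R : Type*} [Ring R] (G : SimpleGraph V)
    [DecidableRel G.Adj] {s : V → R} (hs : ∀ i j, G.Adj i j → s i = -s j) :
    diagonal s * G.adjMatrix R = -(G.adjMatrix R * diagonal s) := by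
  ext i j
  rw [neg_apply, diagonal_mul, mul_diagonal, SimpleGraph.adjMatrix_apply]
  split_ifs with hij
  · simp [hs i j hij]
  · simp

theorem fromBlocks_mul_fromBlocks_conjTranspose_eq_neg {m n R : Type*} [Fintype m] [Fintype n]
    [Ring R] [StarRing R] {S P : Matrix m m R} {T E : Matrix n n R} {Q : Matrix m n R}
    (hS : S.IsHermitian) (hT : T.IsHermitian) (hP : S * P = -(P * S)) (hQ : S * Q = -(Q * T))
    (hE : T * E = -(E * T)) :
    fromBlocks S 0 0 T * fromBlocks P Q Qᴴ E = -(fromBlocks P Q Qᴴ E * fromBlocks S 0 0 T) := by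
  have hQ' : T * Qᴴ = -(Qᴴ * S) := by
    have h := congrArg conjTranspose hQ
    rw [conjTranspose_neg, conjTranspose_mul, conjTranspose_mul, hS.eq, hT.eq] at h
    rw [h, neg_neg]
  simp only [fromBlocks_multiply, fromBlocks_neg, Matrix.zero_mul, Matrix.mul_zero, add_zero,
    zero_add, hP, hQ, hQ', hE]

end SymmetricSpectrum

section Reflection

variable (ι K : Type*) [Fintype ι] [DecidableEq ι] [Field K]

/-- The reflection of `K^ι` in the hyperplane of vectors with coordinate sum zero. -/
def onesReflection : Matrix ι ι K := 1 - of fun _ _ => (2 / Fintype.card ι : K)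

variable {ι K}

theorem onesReflection_mulVec (v : ι → K) :
    onesReflection ι K *ᵥ v = v - fun _ => 2 / Fintype.card ι * ∑ a, v a := by
  rw [onesReflection, sub_mulVec, one_mulVec]
  ext a
  simp [mulVec, dotProduct, Finset.mul_sum]

theorem onesReflection_mulVec_of_sum_eq_zero {v : ι → K} (hv : ∑ a, v a = 0) :
    onesReflection ι K *ᵥ v = v := by
  rw [onesReflection_mulVec, hv, mul_zero]
  exact sub_zero v

theorem isHermitian_onesReflection [StarRing K] : (onesReflection ι K).IsHermitian := by
  apply isHermitian_one.sub
  ext a b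
  simp

variable [NeZero (Fintype.card ι : K)]

theorem onesReflection_mulVec_one : onesReflection ι K *ᵥ 1 = -1 := by
  have hsum : 2 / (Fintype.card ι : K) * ∑ a : ι, (1 : ι → K) a = 2 := by
    simp [NeZero.ne]
  rw [onesReflection_mulVec, hsum]
  ext a
  rw [Pi.sub_apply, Pi.neg_apply, Pi.one_apply]
  norm_num

theorem onesReflection_mul_self : onesReflection ι K * onesReflection ι K = 1 := by
  have hcard : (Fintype.card ι : K) ≠ 0 := NeZero.ne _
  rw [onesReflection, sub_mul, one_mul, mul_sub, mul_one]
  ext a b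
  simp only [Matrix.sub_apply, of_apply, mul_apply, Finset.sum_const, Finset.card_univ,
    nsmul_eq_mul]
  field_simp
  norm_num

end Reflection

section Phases

theorem inv_pow_min_mul_pow_min_succ {K : Type*} [CommGroupWithZero K] {z : K} (hz : z ≠ 0)
    (i k : ℕ) :
    z⁻¹ ^ min i k * z ^ min (i + 1) k = if i < k then z else 1 := by
  split_ifs with h
  · rw [min_eq_left h.le, min_eq_left h, pow_succ, ← mul_assoc, ← mul_pow, inv_mul_cancel₀ hz,
      one_pow, one_mul]
  · rw [min_eq_right (by omega), min_eq_right (by omega), ← mul_pow, inv_mul_cancel₀ hz, one_pow]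

theorem sum_pow_eq_zero_of_pow_eq_one {K : Type*} [DivisionRing K] {z : K} {n : ℕ} (hz : z ≠ 1)
    (hn : z ^ n = 1) : ∑ a : Fin n, z ^ (a : ℕ) = 0 := by
  rw [Fin.sum_univ_eq_sum_range (z ^ ·), geom_sum_eq hz, hn, sub_self, zero_div]

theorem exp_mul_I_ne_one {θ : ℝ} (h₀ : 0 < θ) (h₁ : θ < 2 * π) :
    Complex.exp (θ * Complex.I) ≠ 1 := by
  rw [← Circle.coe_exp, Ne, Circle.coe_eq_one, Circle.exp_eq_one]
  rintro ⟨n, rfl⟩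
  have hn₀ : (0 : ℝ) < n := pos_of_mul_pos_left h₀ two_pi_pos.le
  have hn₁ : (n : ℝ) < 1 := lt_of_mul_lt_mul_right (by rwa [one_mul]) two_pi_pos.le
  norm_cast at hn₀ hn₁
  omega

theorem exp_div_mul_pi_mul_I_pow (l : ℕ) {m : ℕ} (hm : m ≠ 0) :
    Complex.exp (((l : ℝ) / m * π : ℝ) * Complex.I) ^ (2 * m) = 1 := by
  rw [← Complex.exp_nat_mul, Complex.exp_eq_one_iff]
  refine ⟨l, ?_⟩
  push_cast
  field_simp

theorem sum_exp_div_mul_pi_mul_I_pow_eq_zero {l m : ℕ} (hl : 0 < l) (hlm : l < 2 * m) :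
    ∑ a : Fin (2 * m), Complex.exp (((l : ℝ) / m * π : ℝ) * Complex.I) ^ (a : ℕ) = 0 := by
  have hm : (0 : ℝ) < m := by exact_mod_cast (by omega : 0 < m)
  have hlm' : (l : ℝ) / m < 2 := (div_lt_iff₀ hm).mpr (by exact_mod_cast hlm)
  refine sum_pow_eq_zero_of_pow_eq_one (exp_mul_I_ne_one (by positivity) ?_)
    (exp_div_mul_pi_mul_I_pow l (by omega))
  exact mul_lt_mul_of_pos_right hlm' pi_pos

end Phases

section MixedGraph

variable {V : Type*}

/-- `MGHerm` on an arbitrary vertex type, with a complex number `z` in place of `exp (θ * I)`. -/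
noncomputable def mixedHerm (z : ℂ) (A : V → V → Bool) : Matrix V V ℂ :=
  of fun x y => if A x y ∧ A y x then 1 else if A x y then z else if A y x then z⁻¹ else 0

/-- `MGBipartite` on an arbitrary vertex type. -/
def MixedBipartite (A : V → V → Bool) : Prop :=
  ∃ S : Set V, ∀ x y, A x y ∨ A y x → (x ∈ S ↔ y ∉ S)

theorem exists_fin_not_mgBipartite_symSpec [Fintype V] [DecidableEq V] (θ : ℝ)
    {A : V → V → Bool} (hloop : ∀ v, A v v = false) (hbip : ¬ MixedBipartite A)
    (hsymm : (-mixedHerm (Complex.exp (θ * Complex.I)) A).charpoly =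
      (mixedHerm (Complex.exp (θ * Complex.I)) A).charpoly) :
    ∃ (n : ℕ) (B : Fin n → Fin n → Bool),
      (∀ v, B v v = false) ∧ ¬ MGBipartite B ∧ SymSpec (MGHerm B θ) := by
  let e := Fintype.equivFin V
  let B : Fin (Fintype.card V) → Fin (Fintype.card V) → Bool := fun x y => A (e.symm x) (e.symm y)
  refine ⟨_, B, fun v => hloop _, ?_, ?_⟩
  · rintro ⟨S, hS⟩
    exact hbip ⟨e ⁻¹' S, fun x y hxy => hS (e x) (e y) (by simpa [B] using hxy)⟩
  · have hherm : MGHerm B θ = reindex e e (mixedHerm (Complex.exp (θ * Complex.I)) A) := by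
      ext x y
      simp [MGHerm, mixedHerm, B, ← Complex.exp_neg]
    have hneg : -MGHerm B θ = reindex e e (-mixedHerm (Complex.exp (θ * Complex.I)) A) := by
      rw [hherm]
      rfl
    apply symSpec_of_charpoly_neg_eq
    rw [hneg, hherm, charpoly_reindex, charpoly_reindex, hsymm]

theorem mem_iff_even_of_alternating {n : ℕ} {S : Set V} {c : Fin (n + 1) → V}
    (hc : ∀ i : Fin n, c i.castSucc ∈ S ↔ c i.succ ∉ S) (i : Fin (n + 1)) :
    c i ∈ S ↔ (Even (i : ℕ) ↔ c 0 ∈ S) := by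
  induction i using Fin.induction with
  | zero => simp
  | succ i ih =>
    have hstep := hc i
    rw [Fin.val_castSucc] at ih
    rw [Fin.val_succ, Nat.even_add_one]
    tauto

end MixedGraph

section Book

variable {ι : Type*} [DecidableEq ι]

/-- Vertices of a book graph: page `a : ι` is a path with vertices `inl (a, 0), …, inl (a, L)`,
and `inr false`, `inr true` are the ends of the common edge of the pages (the spine). -/
abbrev BookVertex (ι : Type*) (L : ℕ) := ι × Fin (L + 1) ⊕ Bool

/-- The position, in every page, of the vertex adjacent to the end `s` of the spine. -/
def bookEnd (L : ℕ) (s : Bool) : Fin (L + 1) := if s then Fin.last L else 0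

/-- The arcs of the book graph in which the first `k a` edges of the page `a` are directed
towards `inr true` and all other edges are undirected, so that the page has flux `k a * θ`. -/
def bookArc (k : ι → ℕ) (L : ℕ) : BookVertex ι L → BookVertex ι L → Bool
  | .inl (a, i), .inl (b, j) => a = b ∧ ((i : ℕ) + 1 = j ∨ (j : ℕ) + 1 = i ∧ k a ≤ j)
  | .inl (_, i), .inr s => i = bookEnd L s
  | .inr s, .inl (_, i) => i = bookEnd L s
  | .inr s, .inr t => s ≠ t

theorem bookArc_self (k : ι → ℕ) (L : ℕ) (v : BookVertex ι L) : bookArc k L v v = false := by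
  rcases v with ⟨_, _⟩ | _ <;> simp [bookArc]

theorem not_mixedBipartite_bookArc [Nonempty ι] (k : ι → ℕ) {L : ℕ} (hL : Even L) :
    ¬ MixedBipartite (bookArc k L) := by
  rintro ⟨S, hS⟩
  obtain ⟨a⟩ := ‹Nonempty ι›
  have hpage := mem_iff_even_of_alternating (c := fun i => (.inl (a, i) : BookVertex ι L))
    (fun i => hS _ _ (.inl (by simp [bookArc]))) (Fin.last L)
  have hfirst := hS (.inr false) (.inl (a, 0)) (.inl (by simp [bookArc, bookEnd]))
  have hlast := hS (.inr true) (.inl (a, Fin.last L)) (.inl (by simp [bookArc, bookEnd]))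
  have hspine := hS (.inr false) (.inr true) (.inl (by simp [bookArc]))
  rw [Fin.val_last] at hpage
  tauto

/-- The adjacencies between the pages and the ends of the spine, with weight `u a` at the end
`inr true` of the page `a`. -/
def spineWeights (u : ι → ℂ) (L : ℕ) : Matrix (ι × Fin (L + 1)) Bool ℂ :=
  of fun p s => if p.2 = bookEnd L s then (if s then u p.1 else 1) else 0

instance decidableRelPathGraphAdj (n : ℕ) : DecidableRel (SimpleGraph.pathGraph n).Adj :=
  fun _ _ => decidable_of_iff _ SimpleGraph.pathGraph_adj.symm

/-- The Hermitian adjacency matrix of the book graph whose page `a` carries its whole flux, of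
phase `u a`, on its last edge. -/
noncomputable def bookMatrix (u : ι → ℂ) (L : ℕ) : Matrix (BookVertex ι L) (BookVertex ι L) ℂ :=
  fromBlocks (1 ⊗ₖ (SimpleGraph.pathGraph (L + 1)).adjMatrix ℂ) (spineWeights u L)
    (spineWeights u L)ᴴ ((⊤ : SimpleGraph Bool).adjMatrix ℂ)

/-- The gauge (switching function) that moves the flux of every page to its last edge. -/
noncomputable def bookGauge (z : ℂ) (k : ι → ℕ) (L : ℕ) : BookVertex ι L → ℂ
  | .inl (a, i) => z⁻¹ ^ min (i : ℕ) (k a)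
  | .inr _ => 1

theorem mixedHerm_bookArc_page (z : ℂ) (k : ι → ℕ) {L : ℕ} (a b : ι) (i j : Fin (L + 1)) :
    mixedHerm z (bookArc k L) (.inl (a, i)) (.inl (b, j)) =
      if a = b then
        if (i : ℕ) + 1 = j then if (i : ℕ) < k a then z else 1
        else if (j : ℕ) + 1 = i then if (j : ℕ) < k a then z⁻¹ else 1
        else 0
      else 0 := by
  by_cases hab : a = b
  · subst hab
    simp only [mixedHerm, of_apply, bookArc, true_and, decide_eq_true_eq, if_true]
    split_ifs <;> first | rfl | omega
  · simp [mixedHerm, bookArc, hab, Ne.symm hab]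

theorem mixedHerm_bookArc_eq_gauge_conj [Fintype ι] {z : ℂ} (hz : ‖z‖ = 1) {k : ι → ℕ} {L : ℕ}
    (hk : ∀ a, k a ≤ L) :
    mixedHerm z (bookArc k L) = diagonal (bookGauge z k L) * bookMatrix (fun a => z ^ k a) L *
      diagonal (bookGauge z k L)⁻¹ := by
  have hz₀ : z ≠ 0 := norm_ne_zero_iff.mp (hz ▸ one_ne_zero)
  ext v w
  rw [mul_diagonal, diagonal_mul]
  rcases v with ⟨a, i⟩ | s <;> rcases w with ⟨b, j⟩ | t
  · rw [mixedHerm_bookArc_page]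
    by_cases hab : a = b
    · subst hab
      by_cases hij : (i : ℕ) + 1 = j
      · simp [bookMatrix, bookGauge, SimpleGraph.pathGraph_adj, ← hij,
          ← inv_pow_min_mul_pow_min_succ hz₀]
      · by_cases hji : (j : ℕ) + 1 = i
        · have hphase := inv_pow_min_mul_pow_min_succ (inv_ne_zero hz₀) j (k a)
          rw [inv_inv] at hphase
          simp [bookMatrix, bookGauge, SimpleGraph.pathGraph_adj, ← hji, add_assoc, ← hphase,
            mul_comm]
        · simp [bookMatrix, SimpleGraph.pathGraph_adj, hij, hji]
    · simp [bookMatrix, hab]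
  · by_cases hi : i = bookEnd L t
    · subst hi
      cases t <;>
        simp [mixedHerm, bookArc, bookMatrix, bookGauge, spineWeights, bookEnd, hk, hz₀]
    · simp [mixedHerm, bookArc, bookMatrix, spineWeights, hi]
  · by_cases hj : j = bookEnd L s
    · subst hj
      cases s <;>
        simp [mixedHerm, bookArc, bookMatrix, bookGauge, spineWeights, bookEnd, hk, hz₀,
          ← Complex.inv_eq_conj hz]
    · simp [mixedHerm, bookArc, bookMatrix, spineWeights, hj]
  · cases s <;> cases t <;> simp [mixedHerm, bookArc, bookMatrix, bookGauge]

/-- The involution of the space of pages that reflects it in the hyperplane of vectors with sum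
zero over the pages and alternates signs along each page. -/
noncomputable def pageInvolution (ι : Type*) [Fintype ι] [DecidableEq ι] (L : ℕ) :
    Matrix (ι × Fin (L + 1)) (ι × Fin (L + 1)) ℂ :=
  onesReflection ι ℂ ⊗ₖ diagonal fun i => (-1) ^ (i : ℕ)

/-- The involution of the two ends of the spine compatible with `pageInvolution`. -/
def spineInvolution : Matrix Bool Bool ℂ := diagonal fun s => if s then -1 else 1

theorem isHermitian_spineInvolution : spineInvolution.IsHermitian := by
  rw [IsHermitian, spineInvolution, diagonal_conjTranspose]
  congr 1 with s
  cases s <;> simp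

theorem spineInvolution_mul_self : spineInvolution * spineInvolution = 1 := by
  rw [spineInvolution, diagonal_mul_diagonal, ← diagonal_one]
  congr 1 with s
  cases s <;> simp

theorem spineInvolution_mul_adjMatrix_top :
    spineInvolution * (⊤ : SimpleGraph Bool).adjMatrix ℂ =
      -((⊤ : SimpleGraph Bool).adjMatrix ℂ * spineInvolution) :=
  diagonal_mul_adjMatrix_eq_neg _ fun s t hst => by cases s <;> cases t <;> simp_all

variable [Fintype ι]

theorem isHermitian_pageInvolution (L : ℕ) : (pageInvolution ι L).IsHermitian := by
  have hsign : (diagonal fun i : Fin (L + 1) => (-1 : ℂ) ^ (i : ℕ)).IsHermitian := by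
    simp [IsHermitian, diagonal_conjTranspose]
  rw [IsHermitian, pageInvolution, conjTranspose_kronecker, isHermitian_onesReflection.eq, hsign.eq]

theorem pageInvolution_mul_pages (L : ℕ) :
    pageInvolution ι L * (1 ⊗ₖ (SimpleGraph.pathGraph (L + 1)).adjMatrix ℂ) =
      -((1 ⊗ₖ (SimpleGraph.pathGraph (L + 1)).adjMatrix ℂ) * pageInvolution ι L) := by
  have hsign : ∀ i j : Fin (L + 1), (SimpleGraph.pathGraph (L + 1)).Adj i j →
      (-1 : ℂ) ^ (i : ℕ) = -(-1) ^ (j : ℕ) := by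
    intro i j hij
    rcases SimpleGraph.pathGraph_adj.mp hij with h | h <;> simp [← h, pow_succ]
  rw [pageInvolution, ← mul_kronecker_mul, ← mul_kronecker_mul, mul_one, one_mul,
    diagonal_mul_adjMatrix_eq_neg _ hsign, ← neg_one_smul ℂ, kronecker_smul, neg_one_smul]

theorem pageInvolution_mul_apply {κ : Type*} {L : ℕ} (M : Matrix (ι × Fin (L + 1)) κ ℂ)
    (a : ι) (i : Fin (L + 1)) (s : κ) :
    (pageInvolution ι L * M) (a, i) s =
      (-1) ^ (i : ℕ) * (onesReflection ι ℂ *ᵥ fun b => M (b, i) s) a := by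
  simp only [pageInvolution, mul_apply, kroneckerMap_apply, diagonal_apply, mul_ite, mul_zero,
    ite_mul, zero_mul, Fintype.sum_prod_type, Finset.sum_ite_eq, Finset.mem_univ, if_true, mulVec,
    dotProduct, Finset.mul_sum]
  refine Finset.sum_congr rfl fun b _ => ?_
  ring

variable [Nonempty ι]

theorem pageInvolution_mul_self (L : ℕ) : pageInvolution ι L * pageInvolution ι L = 1 := by
  rw [pageInvolution, ← mul_kronecker_mul, onesReflection_mul_self, diagonal_mul_diagonal]
  simp [← mul_pow]

theorem pageInvolution_mul_spineWeights {u : ι → ℂ} (hu : ∑ a, u a = 0) {L : ℕ} (hL : Even L) :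
    pageInvolution ι L * spineWeights u L = -(spineWeights u L * spineInvolution) := by
  ext ⟨a, i⟩ s
  rw [pageInvolution_mul_apply, neg_apply, spineInvolution, mul_diagonal]
  by_cases hi : i = bookEnd L s
  · subst hi
    cases s
    · have hone := congrFun (onesReflection_mulVec_one (ι := ι) (K := ℂ)) a
      simpa [spineWeights, bookEnd, ← Pi.one_def] using hone
    · have hfix := congrFun (onesReflection_mulVec_of_sum_eq_zero hu) a
      simpa [spineWeights, bookEnd, hL.neg_one_pow] using hfix
  · simp [spineWeights, hi, onesReflection_mulVec]

theorem charpoly_neg_bookMatrix {u : ι → ℂ} (hu : ∑ a, u a = 0) {L : ℕ} (hL : Even L) :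
    (-bookMatrix u L).charpoly = (bookMatrix u L).charpoly := by
  apply charpoly_neg_eq_of_anticommute (T := fromBlocks (pageInvolution ι L) 0 0 spineInvolution)
  · simp [fromBlocks_multiply, pageInvolution_mul_self, spineInvolution_mul_self]
  · exact fromBlocks_mul_fromBlocks_conjTranspose_eq_neg (isHermitian_pageInvolution L)
      isHermitian_spineInvolution (pageInvolution_mul_pages L)
      (pageInvolution_mul_spineWeights hu hL) spineInvolution_mul_adjMatrix_top

theorem charpoly_neg_mixedHerm_bookArc {z : ℂ} (hz : ‖z‖ = 1) {k : ι → ℕ} {L : ℕ}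
    (hk : ∀ a, k a ≤ L) (hL : Even L) (hsum : ∑ a, z ^ k a = 0) :
    (-mixedHerm z (bookArc k L)).charpoly = (mixedHerm z (bookArc k L)).charpoly := by
  have hgauge : ∀ v, bookGauge z k L v ≠ 0 := by
    rintro (⟨_, _⟩ | _) <;> simp [bookGauge, norm_ne_zero_iff.mp (hz ▸ one_ne_zero)]
  rw [mixedHerm_bookArc_eq_gauge_conj hz hk, ← neg_mul, ← mul_neg, charpoly_diagonal_conj hgauge,
    charpoly_diagonal_conj hgauge, charpoly_neg_bookMatrix hsum hL]

end Book

theorem rational_angle_not_bipartite_detection_general (θ : ℝ) {ι : Type*} [Fintype ι]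
    [Nonempty ι] (k : ι → ℕ) (hk : ∑ a, Complex.exp (θ * Complex.I) ^ k a = 0) :
    ∃ (n : ℕ) (A : Fin n → Fin n → Bool),
      (∀ v, A v v = false) ∧ ¬ MGBipartite A ∧ SymSpec (MGHerm A θ) := by
  classical
  let L := 2 * ∑ a, k a
  have hL : Even L := even_two_mul _
  have hkL : ∀ a, k a ≤ L := fun a => by
    have := Finset.single_le_sum (fun b _ => Nat.zero_le (k b)) (Finset.mem_univ a)
    omega
  exact exists_fin_not_mgBipartite_symSpec θ (bookArc_self k L) (not_mixedBipartite_bookArc k hL)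
    (charpoly_neg_mixedHerm_bookArc (Complex.norm_exp_ofReal_mul_I θ) hkL hL hk)

theorem rational_angle_not_bipartite_detection (l m : ℕ) (hm : 0 < m) (hl : 0 < l)
    (hlm : l ≤ m) (θ : ℝ) (hθ : θ = (l : ℝ) / m * Real.pi) :
    ∃ (n : ℕ) (A : Fin n → Fin n → Bool),
      (∀ v, A v v = false) ∧ ¬ MGBipartite A ∧ SymSpec (MGHerm A θ) := by
  have : NeZero (2 * m) := ⟨by omega⟩
  exact rational_angle_not_bipartite_detection_general θ Fin.val
    (hθ ▸ sum_exp_div_mul_pi_mul_I_pow_eq_zero hl (by omega))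
end
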